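/- Let γ ∈ [0, 1/2], u ∈ (0,1), β > 1 − 2γ, and θ ∈ (−∞, 2]. Consider the discursive voter model with temperature θ on the Simplified Norros–Reittu graph G_N, started from the initial law μ_u in which each vertex independently has opinion 1 with probability u. Then the conditional expected consensus time satisfies E^θ_{μ_u}(τ_cons | G_N) = Θ_P^{log N}(N); that is, there exists C > 0 such that with probability tending to 1 as N → ∞ (over the random graph G_N), N·log^{−C} N ≤ E^θ_{μ_u}(τ_cons | G_N) ≤ N·log^C N. -/

import Mathlib

open scoped Classical
open Filter

noncomputable section

/-- Edge probability of the Simplified Norros–Reittu graph between (1-based) vertices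
`i` and `j` of `[N]`: `1 - exp(-β N^(2γ-1) i^(-γ) j^(-γ))`. -/
def snrEdgeProb (β γ : ℝ) (N i j : ℕ) : ℝ :=
  1 - Real.exp (-(β * (N : ℝ) ^ (2 * γ - 1) * (i : ℝ) ^ (-γ) * (j : ℝ) ^ (-γ)))

/-- Probability weight of a given simple graph on `[N]` when each edge `{i,j}` (`i ≠ j`)
is present independently with probability `p i j` (indices 1-based). -/
def graphWeight (p : ℕ → ℕ → ℝ) (N : ℕ) (G : SimpleGraph (Fin N)) : ℝ :=
  ∏ i : Fin N, ∏ j : Fin N,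
    if i < j then
      (if G.Adj i j then p ((i : ℕ) + 1) ((j : ℕ) + 1)
       else 1 - p ((i : ℕ) + 1) ((j : ℕ) + 1))
    else 1

/-- Probability that the random graph with independent edge probabilities `p` satisfies the
property `A`. -/
def graphProb (p : ℕ → ℕ → ℝ) (N : ℕ) (A : SimpleGraph (Fin N) → Prop) : ℝ :=
  ∑ G : SimpleGraph (Fin N), if A G then graphWeight p N G else 0

/-- Probability that the Simplified Norros–Reittu graph `G_N` satisfies the property `A`. -/
def snrProb (β γ : ℝ) (N : ℕ) (A : SimpleGraph (Fin N) → Prop) : ℝ :=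
  graphProb (snrEdgeProb β γ N) N A

/-- Generator matrix `Q` of the discursive voter model with temperature `θ` on a graph `G`,
acting on the state space `{0,1}^N`:
`(ℒ f)(η) = Σ_η' Q η η' f(η')` where
`ℒ f(η) = Σ_i d(i)^θ Σ_{j∼i} (1/d(i)) (½ f(η^{j←i}) + ½ f(η^{i←j}) − f(η))`. -/
def voterQ {N : ℕ} (G : SimpleGraph (Fin N)) (θ : ℝ) :
    Matrix (Fin N → Bool) (Fin N → Bool) ℝ :=
  Matrix.of fun η η' =>
    ∑ i : Fin N, (G.degree i : ℝ) ^ θ *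
      ∑ j ∈ G.neighborFinset i, ((G.degree i : ℝ))⁻¹ *
        ((1 / 2) * (if Function.update η j (η i) = η' then 1 else 0)
          + (1 / 2) * (if Function.update η i (η j) = η' then 1 else 0)
          - (if η = η' then 1 else 0))

/-- The set of absorbing configurations: those constant on each connected component of `G`. -/
def consensusStates {N : ℕ} (G : SimpleGraph (Fin N)) : Set (Fin N → Bool) :=
  {η | ∀ i j : Fin N, G.Reachable i j → η i = η j}

/-- The initial law `μ_u` in which each vertex independently has opinion 1 with
probability `u`. -/
def muU {N : ℕ} (u : ℝ) (η : Fin N → Bool) : ℝ :=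
  ∏ i : Fin N, if η i then u else 1 - u

/-- `P_{μ_u}(η_t ∈ A)`: the probability that the discursive voter model with temperature `θ`
on `G`, started from `μ_u`, is in an absorbing (componentwise constant) state at time `t`;
the law at time `t` is obtained from `μ_u` via the semigroup `exp(tℒ)`. -/
def probConsensusAt {N : ℕ} (G : SimpleGraph (Fin N)) (θ u t : ℝ) : ℝ :=
  ∑ η : Fin N → Bool, ∑ η' : Fin N → Bool,
    muU u η * (NormedSpace.exp (t • voterQ G θ)) η η' *
      (if η' ∈ consensusStates G then 1 else 0)

/-- The expected consensus time `E^θ_{μ_u}(τ_cons | G)` of the discursive voter model with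
temperature `θ` on the realized graph `G`, from initial law `μ_u`:
`E_{μ_u}(τ_cons) = ∫_0^∞ (1 − P_{μ_u}(η_t ∈ A)) dt`. -/
def expectedConsensusTime {N : ℕ} (G : SimpleGraph (Fin N)) (θ u : ℝ) : ℝ :=
  ∫ t in Set.Ioi (0 : ℝ), (1 - probConsensusAt G θ u t)

namespace DV

/-! ### Part 1: finite product probability on graphs -/

def gW {N : ℕ} (p : Fin N → Fin N → ℝ) (G : SimpleGraph (Fin N)) : ℝ :=
  ∏ i : Fin N, ∏ j : Fin N,
    if i < j then (if G.Adj i j then p i j else 1 - p i j) else 1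

def gEx {N : ℕ} (p : Fin N → Fin N → ℝ) (f : SimpleGraph (Fin N) → ℝ) : ℝ :=
  ∑ G : SimpleGraph (Fin N), gW p G * f G

/-- the graph from a function on ordered pairs -/
def toG {N : ℕ} (x : {e : Fin N × Fin N // e.1 < e.2} → Bool) : SimpleGraph (Fin N) where
  Adj i j := (∃ h : i < j, x ⟨(i, j), h⟩ = true) ∨ (∃ h : j < i, x ⟨(j, i), h⟩ = true)
  symm := ⟨fun i j h => h.symm⟩
  loopless := ⟨fun i h => by
    rcases h with ⟨h, _⟩ | ⟨h, _⟩ <;> exact lt_irrefl _ h⟩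

def gEquiv (N : ℕ) : ({e : Fin N × Fin N // e.1 < e.2} → Bool) ≃ SimpleGraph (Fin N) where
  toFun := toG
  invFun G e := decide (G.Adj e.1.1 e.1.2)
  left_inv x := by
    funext ⟨⟨i, j⟩, h⟩
    have h' : i < j := h
    have : (toG x).Adj i j ↔ x ⟨(i, j), h⟩ = true := by
      simp [toG, h', h'.not_gt]
    simp [this]
  right_inv G := by
    ext i j
    rcases lt_trichotomy i j with h | h | h
    · simp [toG, h, h.not_gt]
    · subst h; simp
    · simp [toG, h, h.not_gt, G.adj_comm]

lemma gW_toG {N : ℕ} (p : Fin N → Fin N → ℝ) (x : {e : Fin N × Fin N // e.1 < e.2} → Bool) :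
    gW p (gEquiv N x) = ∏ e, (if x e then p e.1.1 e.1.2 else 1 - p e.1.1 e.1.2) := by
  unfold gW
  rw [← Finset.prod_product', ← Finset.prod_filter, Finset.univ_product_univ]
  rw [Finset.prod_subtype (p := fun e : Fin N × Fin N => e.1 < e.2)]
  · apply Finset.prod_congr rfl
    rintro ⟨⟨i, j⟩, h⟩ _
    have h' : i < j := h
    have : (gEquiv N x).Adj i j ↔ x ⟨(i, j), h⟩ = true := by
      simp [gEquiv, toG, h', h'.not_gt]
    simp [this]
  · intro x; simp

lemma gEx_pi {N : ℕ} (p : Fin N → Fin N → ℝ) (g : {e : Fin N × Fin N // e.1 < e.2} → Bool → ℝ)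
    (f : SimpleGraph (Fin N) → ℝ) (hf : ∀ x, f (gEquiv N x) = ∏ e, g e (x e)) :
    gEx p f = ∏ e, (p e.1.1 e.1.2 * g e true + (1 - p e.1.1 e.1.2) * g e false) := by
  unfold gEx
  rw [← (gEquiv N).sum_comp]
  simp_rw [gW_toG, hf, ← Finset.prod_mul_distrib]
  have := Finset.prod_univ_sum (fun _ : {e : Fin N × Fin N // e.1 < e.2} => (Finset.univ : Finset Bool))
    (fun e b => (if b then p e.1.1 e.1.2 else 1 - p e.1.1 e.1.2) * g e b)
  rw [Fintype.piFinset_univ] at this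
  rw [← this]
  apply Finset.prod_congr rfl
  intro e _
  simp

lemma gEx_one {N : ℕ} (p : Fin N → Fin N → ℝ) : gEx p (fun _ => 1) = 1 := by
  rw [gEx_pi p (fun _ _ => 1) _ (by simp)]
  simp

lemma gEx_edge {N : ℕ} (p : Fin N → Fin N → ℝ) (hp : ∀ i j, p i j = p j i) {i j : Fin N}
    (hij : i ≠ j) (a c : ℝ) :
    gEx p (fun G => if G.Adj i j then a else c) = p i j * a + (1 - p i j) * c := by
  wlog h : i < j generalizing i j
  · have := this hij.symm (lt_of_le_of_ne (not_lt.1 h) hij.symm)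
    rw [hp i j, ← this]
    simp_rw [SimpleGraph.adj_comm]
  rw [gEx_pi p (fun e b => if e = ⟨(i, j), h⟩ then (if b then a else c) else 1)]
  · rw [Finset.prod_eq_single ⟨(i, j), h⟩]
    · simp
    · intro e _ he; simp [he]
    · simp
  · intro x
    have : (gEquiv N x).Adj i j ↔ x ⟨(i, j), h⟩ = true := by
      simp [gEquiv, toG, h, h.not_gt]
    rw [Finset.prod_ite_eq' Finset.univ]
    simp [this]

/-- `f` depends only on the edges in `S`. -/
def DepOn {N : ℕ} {α : Type*} (S : Fin N → Fin N → Prop) (f : SimpleGraph (Fin N) → α) : Prop :=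
  ∀ G G' : SimpleGraph (Fin N), (∀ i j, S i j → (G.Adj i j ↔ G'.Adj i j)) → f G = f G'

lemma DepOn.mono {N : ℕ} {α : Type*} {S S' : Fin N → Fin N → Prop}
    {f : SimpleGraph (Fin N) → α} (h : DepOn S f) (hS : ∀ i j, S i j → S' i j) : DepOn S' f :=
  fun G G' hG => h G G' fun i j hij => hG i j (hS i j hij)

lemma DepOn.comp {N : ℕ} {α γ : Type*} {S : Fin N → Fin N → Prop}
    {f : SimpleGraph (Fin N) → α} (h : DepOn S f) (g : α → γ) : DepOn S (fun G => g (f G)) :=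
  fun G G' hG => congrArg g (h G G' hG)

def mix {N : ℕ} (S : Fin N → Fin N → Prop) (hS : ∀ i j, S i j → S j i)
    (G G' : SimpleGraph (Fin N)) : SimpleGraph (Fin N) where
  Adj i j := (S i j ∧ G.Adj i j) ∨ (¬ S i j ∧ G'.Adj i j)
  symm := ⟨fun i j h => by
    rcases h with ⟨h, h'⟩ | ⟨h, h'⟩
    · exact Or.inl ⟨hS _ _ h, h'.symm⟩
    · exact Or.inr ⟨fun h2 => h (hS _ _ h2), h'.symm⟩⟩
  loopless := ⟨fun i h => by rcases h with ⟨_, h⟩ | ⟨_, h⟩ <;> exact G.loopless.irrefl i (by simp at h)⟩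

lemma gEx_indep {N : ℕ} (p : Fin N → Fin N → ℝ) (S : Fin N → Fin N → Prop)
    (hS : ∀ i j, S i j → S j i) (f g : SimpleGraph (Fin N) → ℝ)
    (hf : DepOn S f) (hg : DepOn (fun i j => ¬ S i j) g) :
    gEx p (fun G => f G * g G) = gEx p f * gEx p g := by
  have h1 : gEx p f * gEx p g = ∑ x : SimpleGraph (Fin N) × SimpleGraph (Fin N),
      (gW p x.1 * gW p x.2) * (f x.1 * g x.2) := by
    unfold gEx
    rw [Finset.sum_mul_sum, ← Finset.univ_product_univ, Finset.sum_product]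
    refine Finset.sum_congr rfl fun a _ => Finset.sum_congr rfl fun b _ => ?_
    ring
  have h2 : gEx p (fun G => f G * g G) = ∑ x : SimpleGraph (Fin N) × SimpleGraph (Fin N),
      (gW p x.1 * gW p x.2) * (f x.1 * g x.1) := by
    rw [← mul_one (gEx p _), ← gEx_one p]
    unfold gEx
    rw [Finset.sum_mul_sum, ← Finset.univ_product_univ, Finset.sum_product]
    refine Finset.sum_congr rfl fun a _ => Finset.sum_congr rfl fun b _ => ?_
    ring
  have hinv : Function.Involutive (fun x : SimpleGraph (Fin N) × SimpleGraph (Fin N) =>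
      (mix S hS x.1 x.2, mix S hS x.2 x.1)) := by
    rintro ⟨G, G'⟩
    ext i j
    · by_cases h : S i j <;> simp [mix, h]
    · by_cases h : S i j <;> simp [mix, h]
  rw [h1, h2, ← Equiv.sum_comp (hinv.toPerm _)]
  refine Finset.sum_congr rfl ?_
  rintro ⟨G, G'⟩ _
  have e1 : f (mix S hS G G') = f G := hf _ _ fun i j h => by simp [mix, h]
  have e2 : g (mix S hS G G') = g G' := hg _ _ fun i j h => by simp [mix, h]
  have e3 : gW p (mix S hS G G') * gW p (mix S hS G' G) = gW p G * gW p G' := by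
    unfold gW
    simp_rw [← Finset.prod_mul_distrib]
    refine Finset.prod_congr rfl fun i _ => Finset.prod_congr rfl fun j _ => ?_
    by_cases h : S i j
    · simp [mix, h]
    · simp only [mix, h, false_and, not_false_eq_true, true_and, false_or]
      exact mul_comm _ _
  simp only [Function.Involutive.coe_toPerm, e1, e2, e3]

lemma gEx_prod {N : ℕ} {ι : Type*} (p : Fin N → Fin N → ℝ) (U : Finset ι)
    (S : ι → Fin N → Fin N → Prop) (hS : ∀ a i j, S a i j → S a j i)
    (hd : ∀ a ∈ U, ∀ b ∈ U, a ≠ b → ∀ i j, S a i j → ¬ S b i j)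
    (f : ι → SimpleGraph (Fin N) → ℝ) (hf : ∀ a ∈ U, DepOn (S a) (f a)) :
    gEx p (fun G => ∏ a ∈ U, f a G) = ∏ a ∈ U, gEx p (f a) := by
  induction U using Finset.induction_on with
  | empty => simp [gEx_one]
  | insert a U ha ih =>
    simp_rw [Finset.prod_insert ha]
    rw [← ih (fun a h b h' => hd a (Finset.mem_insert_of_mem h) b (Finset.mem_insert_of_mem h'))
      (fun a h => hf a (Finset.mem_insert_of_mem h))]
    apply gEx_indep p (S a) (hS a) _ _ (hf a (Finset.mem_insert_self _ _))
    intro G G' hG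
    refine Finset.prod_congr rfl fun b hb => ?_
    refine hf b (Finset.mem_insert_of_mem hb) G G' fun i j hij => hG i j fun h => ?_
    exact hd a (Finset.mem_insert_self _ _) b (Finset.mem_insert_of_mem hb)
      (fun h => ha (h ▸ hb)) i j h hij

lemma gW_nonneg {N : ℕ} {p : Fin N → Fin N → ℝ} (hp : ∀ i j, i ≠ j → 0 ≤ p i j ∧ p i j ≤ 1)
    (G : SimpleGraph (Fin N)) : 0 ≤ gW p G := by
  unfold gW
  refine Finset.prod_nonneg fun i _ => Finset.prod_nonneg fun j _ => ?_
  split_ifs with h1 h2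
  · exact (hp i j h1.ne).1
  · linarith [(hp i j h1.ne).2]
  · norm_num

lemma gEx_mono {N : ℕ} {p : Fin N → Fin N → ℝ} (hp : ∀ i j, i ≠ j → 0 ≤ p i j ∧ p i j ≤ 1)
    {f g : SimpleGraph (Fin N) → ℝ} (h : ∀ G, f G ≤ g G) : gEx p f ≤ gEx p g :=
  Finset.sum_le_sum fun G _ => mul_le_mul_of_nonneg_left (h G) (gW_nonneg hp G)

lemma gEx_sum {N : ℕ} {ι : Type*} (p : Fin N → Fin N → ℝ) (s : Finset ι)
    (f : ι → SimpleGraph (Fin N) → ℝ) :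
    gEx p (fun G => ∑ a ∈ s, f a G) = ∑ a ∈ s, gEx p (f a) := by
  unfold gEx
  simp_rw [Finset.mul_sum]
  exact Finset.sum_comm

lemma gEx_mul_const {N : ℕ} (p : Fin N → Fin N → ℝ) (c : ℝ)
    (f : SimpleGraph (Fin N) → ℝ) :
    gEx p (fun G => f G * c) = gEx p f * c := by
  unfold gEx
  simp_rw [Finset.sum_mul, mul_assoc]

lemma gEx_add {N : ℕ} (p : Fin N → Fin N → ℝ) 
    (f g : SimpleGraph (Fin N) → ℝ) :
    gEx p (fun G => f G + g G) = gEx p f + gEx p g := by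
  unfold gEx
  simp_rw [mul_add, Finset.sum_add_distrib]

lemma gEx_const {N : ℕ} (p : Fin N → Fin N → ℝ) (c : ℝ) :
    gEx p (fun _ => c) = c := by
  have := gEx_mul_const p c (fun _ => 1)
  rw [gEx_one] at this
  simpa using this

/-- Probability of an event. -/
def gPr {N : ℕ} (p : Fin N → Fin N → ℝ) (A : SimpleGraph (Fin N) → Prop) : ℝ :=
  gEx p (fun G => if A G then 1 else 0)

lemma gPr_nonneg {N : ℕ} {p : Fin N → Fin N → ℝ} (hp : ∀ i j, i ≠ j → 0 ≤ p i j ∧ p i j ≤ 1)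
    (A : SimpleGraph (Fin N) → Prop) : 0 ≤ gPr p A := by
  rw [← gEx_const p 0]
  exact gEx_mono hp fun G => by split_ifs <;> norm_num

lemma gPr_mono {N : ℕ} {p : Fin N → Fin N → ℝ} (hp : ∀ i j, i ≠ j → 0 ≤ p i j ∧ p i j ≤ 1)
    {A A' : SimpleGraph (Fin N) → Prop} (h : ∀ G, A G → A' G) : gPr p A ≤ gPr p A' :=
  gEx_mono hp fun G => by
    by_cases h1 : A G
    · simp [h1, h G h1]
    · simp only [h1, if_false]; split_ifs <;> norm_num

lemma gPr_le_one {N : ℕ} {p : Fin N → Fin N → ℝ} (hp : ∀ i j, i ≠ j → 0 ≤ p i j ∧ p i j ≤ 1)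
    (A : SimpleGraph (Fin N) → Prop) : gPr p A ≤ 1 := by
  rw [← gEx_one p]
  exact gEx_mono hp fun G => by split_ifs <;> norm_num

lemma gPr_not {N : ℕ} (p : Fin N → Fin N → ℝ) 
    (A : SimpleGraph (Fin N) → Prop) : gPr p A = 1 - gPr p (fun G => ¬ A G) := by
  have : gPr p A + gPr p (fun G => ¬ A G) = 1 := by
    unfold gPr
    rw [← gEx_add]
    refine Eq.trans ?_ (gEx_one p)
    congr 1; funext G
    by_cases h : A G <;> simp [h]
  linarith

lemma gPr_or {N : ℕ} {p : Fin N → Fin N → ℝ} (hp : ∀ i j, i ≠ j → 0 ≤ p i j ∧ p i j ≤ 1)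
    (A A' : SimpleGraph (Fin N) → Prop) : gPr p (fun G => A G ∨ A' G) ≤ gPr p A + gPr p A' := by
  unfold gPr
  rw [← gEx_add]
  apply gEx_mono hp
  intro G
  by_cases h : A G <;> by_cases h' : A' G <;> simp [h, h']

lemma gPr_exists {N : ℕ} {ι : Type*} [Fintype ι] {p : Fin N → Fin N → ℝ}
    (hp : ∀ i j, i ≠ j → 0 ≤ p i j ∧ p i j ≤ 1)
    (A : ι → SimpleGraph (Fin N) → Prop) : gPr p (fun G => ∃ a, A a G) ≤ ∑ a, gPr p (A a) := by
  unfold gPr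
  rw [← gEx_sum]
  apply gEx_mono hp
  intro G
  have h0 : ∀ a ∈ (Finset.univ : Finset ι), (0:ℝ) ≤ (if A a G then 1 else 0) := by
    intro a _; split_ifs <;> norm_num
  split_ifs with h
  · obtain ⟨a, ha⟩ := h
    calc (1:ℝ) = if A a G then 1 else 0 := by simp [ha]
      _ ≤ _ := Finset.single_le_sum h0 (Finset.mem_univ a)
  · exact Finset.sum_nonneg h0

lemma gPr_markov {N : ℕ} {p : Fin N → Fin N → ℝ} (hp : ∀ i j, i ≠ j → 0 ≤ p i j ∧ p i j ≤ 1)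
    (A : SimpleGraph (Fin N) → Prop) (f : SimpleGraph (Fin N) → ℝ) (hf : ∀ G, 0 ≤ f G)
    (h : ∀ G, A G → 1 ≤ f G) : gPr p A ≤ gEx p f :=
  gEx_mono hp fun G => by
    split_ifs with h1
    · exact h G h1
    · exact hf G

/-- Neighbours of `F` inside `U`. -/
def nbr {N : ℕ} (G : SimpleGraph (Fin N)) (F U : Finset (Fin N)) : Finset (Fin N) :=
  U.filter (fun j => ∃ i ∈ F, G.Adj i j)

lemma nbr_subset {N : ℕ} (G : SimpleGraph (Fin N)) (F U : Finset (Fin N)) : nbr G F U ⊆ U :=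
  Finset.filter_subset _ _

/-- probability that no vertex of `F` is adjacent to `j` -/
lemma gPr_noadj {N : ℕ} (p : Fin N → Fin N → ℝ) (hp : ∀ i j, p i j = p j i) (F : Finset (Fin N))
    (j : Fin N) (hj : j ∉ F) :
    gEx p (fun G => if ∃ i ∈ F, G.Adj i j then 0 else 1) = ∏ i ∈ F, (1 - p i j) := by
  have h1 : (fun G : SimpleGraph (Fin N) => if ∃ i ∈ F, G.Adj i j then (0:ℝ) else 1)
      = fun G => ∏ i ∈ F, if G.Adj i j then (0:ℝ) else 1 := by
    funext G
    split_ifs with h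
    · obtain ⟨i, hi, h⟩ := h
      rw [Finset.prod_eq_zero hi]; simp [h]
    · push Not at h
      rw [Finset.prod_eq_one]
      intro i hi; simp [h i hi]
  rw [h1, gEx_prod p F (fun a x y => (x = a ∧ y = j) ∨ (x = j ∧ y = a))]
  · refine Finset.prod_congr rfl fun i hi => ?_
    rw [gEx_edge p hp (by rintro rfl; exact hj hi)]
    ring
  · rintro a x y (h | h) <;> simp [h]
  · rintro a ha b hb hab x y (⟨rfl, rfl⟩ | ⟨rfl, rfl⟩) (⟨h1, h2⟩ | ⟨h1, h2⟩)
    · exact hab h1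
    · subst h1; exact hj ha
    · subst h1; exact hj hb
    · exact hab h2
  · intro a ha G G' hG
    have := hG a j (Or.inl ⟨rfl, rfl⟩)
    simp only [this]

lemma gEx_nbr {N : ℕ} (p : Fin N → Fin N → ℝ) (hp : ∀ i j, p i j = p j i)
    (F U : Finset (Fin N)) (hFU : Disjoint F U) (a : Fin N → ℝ) :
    gEx p (fun G => ∏ j ∈ nbr G F U, a j) =
      ∏ j ∈ U, (∏ i ∈ F, (1 - p i j) + (1 - ∏ i ∈ F, (1 - p i j)) * a j) := by
  have h1 : (fun G : SimpleGraph (Fin N) => ∏ j ∈ nbr G F U, a j)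
      = fun G => ∏ j ∈ U, if ∃ i ∈ F, G.Adj i j then a j else 1 := by
    funext G
    rw [nbr, Finset.prod_filter]
  have hU : ∀ j ∈ U, j ∉ F := fun j hj hF => (Finset.disjoint_left.1 hFU hF hj)
  rw [h1, gEx_prod p U (fun j x y => (x ∈ F ∧ y = j) ∨ (x = j ∧ y ∈ F))]
  · refine Finset.prod_congr rfl fun j hj => ?_
    have h2 : (fun G : SimpleGraph (Fin N) => if ∃ i ∈ F, G.Adj i j then a j else 1)
        = fun G => a j + (if ∃ i ∈ F, G.Adj i j then (0:ℝ) else 1) * (1 - a j) := by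
      funext G
      split_ifs <;> ring
    rw [h2, gEx_add, gEx_mul_const, gEx_const, gPr_noadj p hp F j (hU j hj)]
    ring
  · rintro a x y (⟨h, rfl⟩ | ⟨rfl, h⟩) <;> simp [h]
  · rintro a ha b hb hab x y (⟨h1, rfl⟩ | ⟨rfl, h1⟩) (⟨h3, h4⟩ | ⟨h3, h4⟩)
    · exact hab h4
    · exact hU _ ha h4
    · exact hU _ ha h3
    · exact hab h3
  · intro j hj G G' hG
    have : (∃ i ∈ F, G.Adj i j) ↔ ∃ i ∈ F, G'.Adj i j := by
      constructor
      · rintro ⟨i, hi, h⟩; exact ⟨i, hi, (hG i j (Or.inl ⟨hi, rfl⟩)).1 h⟩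
      · rintro ⟨i, hi, h⟩; exact ⟨i, hi, (hG i j (Or.inl ⟨hi, rfl⟩)).2 h⟩
    simp only [this]

/-- conditioning on the next frontier -/
lemma gPr_step {N : ℕ} {p : Fin N → Fin N → ℝ} (hp : ∀ i j, i ≠ j → 0 ≤ p i j ∧ p i j ≤ 1)
    (F U X : Finset (Fin N)) (hFU : Disjoint F U) (hFX : Disjoint F X)
    (A : Finset (Fin N) → SimpleGraph (Fin N) → Prop)
    (hA : ∀ S ⊆ U, DepOn (fun i j => i ∈ X ∪ U ∧ j ∈ X ∪ U) (A S))
    (v : Finset (Fin N) → ℝ) (hv : ∀ S ⊆ U, gPr p (A S) ≤ v S) :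
    gPr p (fun G => A (nbr G F U) G) ≤ gEx p (fun G => v (nbr G F U)) := by
  have e1 : (fun G : SimpleGraph (Fin N) => if A (nbr G F U) G then (1:ℝ) else 0)
      = fun G => ∑ S ∈ U.powerset, (if nbr G F U = S then (1:ℝ) else 0) * (if A S G then 1 else 0) := by
    funext G
    rw [Finset.sum_eq_single (nbr G F U)]
    · simp
    · intro b _ hb; simp [hb.symm]
    · intro h; exact absurd (Finset.mem_powerset.2 (nbr_subset G F U)) h
  have e2 : (fun G : SimpleGraph (Fin N) => v (nbr G F U))
      = fun G => ∑ S ∈ U.powerset, (if nbr G F U = S then (1:ℝ) else 0) * v S := by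
    funext G
    rw [Finset.sum_eq_single (nbr G F U)]
    · simp
    · intro b _ hb; simp [hb.symm]
    · intro h; exact absurd (Finset.mem_powerset.2 (nbr_subset G F U)) h
  unfold gPr
  rw [e1, e2, gEx_sum, gEx_sum]
  refine Finset.sum_le_sum fun S hS => ?_
  have hS := Finset.mem_powerset.1 hS
  rw [gEx_mul_const, gEx_indep p (fun i j => i ∈ F ∨ j ∈ F) (fun i j => Or.symm)]
  · exact mul_le_mul_of_nonneg_left (hv S hS) (le_trans (gEx_const p 0).ge
      (gEx_mono hp fun G => by split_ifs <;> norm_num))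
  · intro G G' hG
    have : nbr G F U = nbr G' F U := by
      ext j
      simp only [nbr, Finset.mem_filter]
      refine and_congr_right fun hj => exists_congr fun i => and_congr_right fun hi => ?_
      exact hG i j (Or.inl hi)
    simp only [this]
  · refine ((hA S hS).mono ?_).comp (fun P : Prop => if P then (1:ℝ) else 0)
    rintro i j ⟨hi, hj⟩ h
    have key : ∀ x ∈ X ∪ U, x ∉ F := by
      intro x hx hF
      rcases Finset.mem_union.1 hx with h | h
      · exact Finset.disjoint_left.1 hFX hF h
      · exact Finset.disjoint_left.1 hFU hF h
    rcases h with h | h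
    · exact key _ hi h
    · exact key _ hj h

end DV

namespace DV

/-! ### Part 2: breadth first exploration -/

structure Par (N : ℕ) where
  p : Fin N → Fin N → ℝ
  om : Fin N → ℝ
  M : Finset (Fin N)
  B : ℝ
  s0 : ℝ
  δ : ℝ
  kmax : ℝ
  hp : ∀ i j, i ≠ j → 0 ≤ p i j ∧ p i j ≤ 1
  hsymm : ∀ i j, p i j = p j i
  hom : ∀ i, 1 ≤ om i
  hB : 0 < B
  hs0 : 0 < s0
  hδ : 0 < δ
  hstep : ∀ (F U : Finset (Fin N)) (s : ℝ), F.Nonempty → Disjoint F U → U ⊆ M →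
    (∑ i ∈ F, om i) < B → ((M \ U).card : ℝ) ≤ kmax → 0 ≤ s → s ≤ s0 →
    ∏ j ∈ U, (∏ i ∈ F, (1 - p i j) + (1 - ∏ i ∈ F, (1 - p i j)) * Real.exp (-(s * om j)))
      ≤ Real.exp (-(s * (1 + δ) * ∑ i ∈ F, om i))

namespace Par
variable {N : ℕ} (P : Par N)

def W (F : Finset (Fin N)) : ℝ := ∑ i ∈ F, P.om i

lemma card_le_W (F : Finset (Fin N)) : (F.card : ℝ) ≤ P.W F := by
  unfold W
  calc (F.card : ℝ) = ∑ i ∈ F, (1:ℝ) := by simp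
    _ ≤ _ := Finset.sum_le_sum fun i _ => P.hom i

lemma W_empty : P.W ∅ = 0 := by simp [W]

lemma one_le_W {F : Finset (Fin N)} (hF : F.Nonempty) : 1 ≤ P.W F := by
  refine le_trans ?_ (P.card_le_W F)
  exact_mod_cast hF.card_pos

end Par

/-- The bad event for the exploration. -/
def bfsBad {N : ℕ} (P : Par N) (flag : Prop)
    (T : Finset (Fin N) → Finset (Fin N) → SimpleGraph (Fin N) → Prop) :
    ℕ → Finset (Fin N) → Finset (Fin N) → SimpleGraph (Fin N) → Prop
  | 0, F, U, G => (P.B ≤ P.W F ∧ T F U G) ∨ (P.W F < P.B ∧ (F.Nonempty ∨ flag))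
  | r + 1, F, U, G => (P.B ≤ P.W F ∧ T F U G) ∨
      (P.W F < P.B ∧ bfsBad P flag T r (nbr G F U) (U \ nbr G F U) G)

lemma nbr_congr {N : ℕ} {G G' : SimpleGraph (Fin N)} {F U : Finset (Fin N)}
    (h : ∀ i ∈ F, ∀ j ∈ U, (G.Adj i j ↔ G'.Adj i j)) : nbr G F U = nbr G' F U := by
  ext j
  simp only [nbr, Finset.mem_filter]
  exact and_congr_right fun hj => exists_congr fun i => and_congr_right fun hi => h i hi j hj

lemma bfsBad_dep {N : ℕ} (P : Par N) (flag : Prop)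
    (T : Finset (Fin N) → Finset (Fin N) → SimpleGraph (Fin N) → Prop) (X : Finset (Fin N))
    (hT : ∀ F U, DepOn (fun i j => i ∈ X ∪ (F ∪ U) ∧ j ∈ X ∪ (F ∪ U)) (T F U)) (r : ℕ) :
    ∀ F U, DepOn (fun i j => i ∈ X ∪ (F ∪ U) ∧ j ∈ X ∪ (F ∪ U)) (bfsBad P flag T r F U) := by
  induction r with
  | zero =>
    intro F U G G' hG
    simp only [bfsBad, hT F U G G' hG]
  | succ r ih =>
    intro F U G G' hG
    have e : nbr G F U = nbr G' F U := nbr_congr fun i hi j hj =>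
      hG i j ⟨by simp [hi], by simp [hj]⟩
    simp only [bfsBad, hT F U G G' hG, e]
    rw [ih (nbr G' F U) (U \ nbr G' F U) G G']
    intro i j ⟨hi, hj⟩
    have hs := nbr_subset G' F U
    rw [Finset.union_sdiff_of_subset hs] at hi hj
    exact hG i j ⟨Finset.union_subset_union_right Finset.subset_union_right hi,
      Finset.union_subset_union_right Finset.subset_union_right hj⟩

lemma gPr_const_iff {N : ℕ} (p : Fin N → Fin N → ℝ) (Q : Prop) :
    gPr p (fun _ => Q) = if Q then 1 else 0 := by
  unfold gPr; exact gEx_const _ _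

lemma exp_W_nbr {N : ℕ} (P : Par N) (s : ℝ) {F U : Finset (Fin N)} (hF : F.Nonempty)
    (hFU : Disjoint F U) (hU : U ⊆ P.M)
    (hW : P.W F < P.B) (hk : ((P.M \ U).card : ℝ) ≤ P.kmax) (hs : 0 ≤ s) (hs' : s ≤ P.s0) :
    gEx P.p (fun G => Real.exp (-(s * P.W (nbr G F U)))) ≤ Real.exp (-(s * (1 + P.δ) * P.W F)) := by
  have : (fun G : SimpleGraph (Fin N) => Real.exp (-(s * P.W (nbr G F U))))
      = fun G => ∏ j ∈ nbr G F U, Real.exp (-(s * P.om j)) := by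
    funext G
    rw [← Real.exp_sum, Par.W, Finset.mul_sum, Finset.sum_neg_distrib]
  rw [this, gEx_nbr P.p P.hsymm F U hFU]
  exact P.hstep F U s hF hFU hU hW hk hs hs'

/-- one step of the recursion -/
lemma bfs_step {N : ℕ} (P : Par N) (flag : Prop)
    (T : Finset (Fin N) → Finset (Fin N) → SimpleGraph (Fin N) → Prop) (X : Finset (Fin N))
    (hT : ∀ F U, DepOn (fun i j => i ∈ X ∪ (F ∪ U) ∧ j ∈ X ∪ (F ∪ U)) (T F U))
    (K ε : ℝ) (hK : K ≤ P.kmax) (hε : 0 ≤ ε)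
    (hTp : ∀ F U, Disjoint F U → Disjoint (F ∪ U) X → U ⊆ P.M → P.B ≤ P.W F →
      ((P.M \ (F ∪ U)).card : ℝ) ≤ K → gPr P.p (T F U) ≤ ε)
    (a s : ℝ) (ha : 0 ≤ a) (hs : 0 ≤ s) (hs' : s ≤ P.s0) (r : ℕ)
    (ih : ∀ F U, Disjoint F U → Disjoint (F ∪ U) X → U ⊆ P.M →
      ((P.M \ (F ∪ U)).card : ℝ) + r * P.B ≤ K →
      gPr P.p (bfsBad P flag T r F U) ≤
        ε + (if F = ∅ then 0 else a * Real.exp (-(s * P.W F)))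
          + (if flag then 1 else 0) * Real.exp (-(P.s0 * P.W F))) :
    ∀ F U, Disjoint F U → Disjoint (F ∪ U) X → U ⊆ P.M →
      ((P.M \ (F ∪ U)).card : ℝ) + (r + 1 : ℕ) * P.B ≤ K →
      gPr P.p (bfsBad P flag T (r + 1) F U) ≤
        ε + (if F = ∅ then 0 else a * Real.exp (-(s * (1 + P.δ) * P.W F)))
          + (if flag then 1 else 0) * Real.exp (-(P.s0 * P.W F)) := by
  intro F U hFU hX hU hcard
  have hB := P.hB
  have hc0 : (0:ℝ) ≤ if flag then 1 else 0 := by split_ifs <;> norm_num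
  push_cast at hcard
  have hrB : 0 ≤ (r:ℝ) * P.B := by positivity
  by_cases hW : P.B ≤ P.W F
  · have e : bfsBad P flag T (r + 1) F U = T F U := by
      funext G; simp [bfsBad, hW, not_lt.2 hW]
    rw [e]
    have h1 := hTp F U hFU hX hU hW (by linarith)
    have h2 : (0:ℝ) ≤ (if F = ∅ then 0 else a * Real.exp (-(s * (1 + P.δ) * P.W F))) := by
      split_ifs <;> positivity
    have h3 := mul_nonneg hc0 (Real.exp_pos (-(P.s0 * P.W F))).le
    linarith
  have hW' := not_le.1 hW
  have e : bfsBad P flag T (r + 1) F U =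
      fun G => bfsBad P flag T r (nbr G F U) (U \ nbr G F U) G := by
    funext G; simp [bfsBad, hW, hW']
  rw [e]
  -- cardinality
  have hcU : ((P.M \ U).card : ℝ) ≤ ((P.M \ (F ∪ U)).card : ℝ) + P.B := by
    have h1 : (P.M \ U) ⊆ (P.M \ (F ∪ U)) ∪ F := by
      intro x; simp only [Finset.mem_sdiff, Finset.mem_union]; tauto
    have h2 : (P.M \ U).card ≤ (P.M \ (F ∪ U)).card + F.card :=
      (Finset.card_le_card h1).trans (Finset.card_union_le _ _)
    have h3 : ((P.M \ U).card : ℝ) ≤ (P.M \ (F ∪ U)).card + F.card := by exact_mod_cast h2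
    linarith [P.card_le_W F]
  have hstep := gPr_step P.hp F U X hFU (Finset.disjoint_of_subset_left Finset.subset_union_left hX)
    (fun S => bfsBad P flag T r S (U \ S)) (by
      intro S hS
      have := bfsBad_dep P flag T X hT r S (U \ S)
      rwa [Finset.union_sdiff_of_subset hS] at this)
    (fun S => ε + (if S = ∅ then 0 else a * Real.exp (-(s * P.W S)))
          + (if flag then 1 else 0) * Real.exp (-(P.s0 * P.W S))) (by
      intro S hS
      apply ih S (U \ S) Finset.disjoint_sdiff
      · rw [Finset.union_sdiff_of_subset hS]
        exact Finset.disjoint_of_subset_left Finset.subset_union_right hX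
      · exact Finset.sdiff_subset.trans hU
      · rw [Finset.union_sdiff_of_subset hS]
        linarith)
  refine hstep.trans ?_
  rcases F.eq_empty_or_nonempty with rfl | hF
  · have : ∀ G : SimpleGraph (Fin N), nbr G ∅ U = ∅ := by
      intro G; simp [nbr]
    simp only [this, gEx_const]
    simp [Par.W_empty]
  · have hkm : ((P.M \ U).card : ℝ) ≤ P.kmax := by linarith
    calc _ ≤ gEx P.p (fun G => ε + (Real.exp (-(s * P.W (nbr G F U))) * a
          + Real.exp (-(P.s0 * P.W (nbr G F U))) * (if flag then 1 else 0))) := by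
            apply gEx_mono P.hp
            intro G
            have : (if nbr G F U = ∅ then 0 else a * Real.exp (-(s * P.W (nbr G F U))))
                ≤ Real.exp (-(s * P.W (nbr G F U))) * a := by
              split_ifs
              · positivity
              · rw [mul_comm]
            linarith
      _ ≤ _ := by
        rw [gEx_add, gEx_const, gEx_add, gEx_mul_const, gEx_mul_const, if_neg hF.ne_empty]
        have h1 := exp_W_nbr P s hF hFU hU hW' hkm hs hs'
        have h2 := exp_W_nbr P P.s0 hF hFU hU hW' hkm P.hs0.le le_rfl
        have h3 : Real.exp (-(P.s0 * (1 + P.δ) * P.W F)) ≤ Real.exp (-(P.s0 * P.W F)) := by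
          apply Real.exp_le_exp.2
          have := P.one_le_W hF
          have : 0 ≤ P.s0 * P.δ * P.W F := by
            have := P.hs0; have := P.hδ; positivity
          nlinarith
        have h4 := mul_le_mul_of_nonneg_right h1 ha
        have h5 := mul_le_mul_of_nonneg_right (h2.trans h3) hc0
        linarith

/-- main exploration estimate -/
theorem bfs_prob {N : ℕ} (P : Par N) (flag : Prop)
    (T : Finset (Fin N) → Finset (Fin N) → SimpleGraph (Fin N) → Prop) (X : Finset (Fin N))
    (hT : ∀ F U, DepOn (fun i j => i ∈ X ∪ (F ∪ U) ∧ j ∈ X ∪ (F ∪ U)) (T F U))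
    (K ε : ℝ) (hK : K ≤ P.kmax) (hε : 0 ≤ ε)
    (hTp : ∀ F U, Disjoint F U → Disjoint (F ∪ U) X → U ⊆ P.M → P.B ≤ P.W F →
      ((P.M \ (F ∪ U)).card : ℝ) ≤ K → gPr P.p (T F U) ≤ ε)
    (m k : ℕ) (hm : P.s0 * P.B ≤ (1 + P.δ) ^ m) (F U : Finset (Fin N))
    (hFU : Disjoint F U) (hX : Disjoint (F ∪ U) X) (hU : U ⊆ P.M)
    (hcard : ((P.M \ (F ∪ U)).card : ℝ) + (m + k : ℕ) * P.B ≤ K) :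
    gPr P.p (bfsBad P flag T (m + k) F U) ≤
        ε + Real.exp (1 - P.s0 * P.δ * k)
          + (if flag then 1 else 0) * Real.exp (-(P.s0 * P.W F)) := by
  have hδ := P.hδ
  have hs0 := P.hs0
  have hB := P.hB
  have hc0 : (0:ℝ) ≤ if flag then 1 else 0 := by split_ifs <;> norm_num
  -- stage 1
  have st1 : ∀ r ≤ m, ∀ F U, Disjoint F U → Disjoint (F ∪ U) X → U ⊆ P.M →
      ((P.M \ (F ∪ U)).card : ℝ) + r * P.B ≤ K →
      gPr P.p (bfsBad P flag T r F U) ≤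
        ε + (if F = ∅ then 0 else Real.exp 1 *
          Real.exp (-(P.s0 / (1 + P.δ) ^ m * (1 + P.δ) ^ r * P.W F)))
          + (if flag then 1 else 0) * Real.exp (-(P.s0 * P.W F)) := by
    intro r
    induction r with
    | zero =>
      intro _ F U hFU hX hU hcard
      have h2 : (0:ℝ) ≤ (if F = ∅ then 0 else Real.exp 1 *
          Real.exp (-(P.s0 / (1 + P.δ) ^ m * (1 + P.δ) ^ 0 * P.W F))) := by
        split_ifs <;> positivity
      have h3 := mul_nonneg hc0 (Real.exp_pos (-(P.s0 * P.W F))).le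
      by_cases hW : P.B ≤ P.W F
      · have e : bfsBad P flag T 0 F U = T F U := by
          funext G; simp [bfsBad, hW, not_lt.2 hW]
        rw [e]
        have h1 := hTp F U hFU hX hU hW (by simpa using hcard)
        linarith
      · have hW' := not_le.1 hW
        have e : bfsBad P flag T 0 F U = fun _ => (F.Nonempty ∨ flag) := by
          funext G; simp [bfsBad, hW, hW']
        rw [e, gPr_const_iff]
        rcases F.eq_empty_or_nonempty with rfl | hF
        · simp [Par.W_empty, hε]
        · rw [if_neg hF.ne_empty, if_pos (Or.inl hF)] at *
          have : 1 ≤ Real.exp 1 * Real.exp (-(P.s0 / (1 + P.δ) ^ m * (1 + P.δ) ^ 0 * P.W F)) := by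
            rw [← Real.exp_add]
            apply Real.one_le_exp
            have h5 : P.s0 / (1 + P.δ) ^ m * P.W F ≤ 1 := by
              rw [div_mul_eq_mul_div, div_le_one (by positivity)]
              refine le_trans ?_ hm
              exact mul_le_mul_of_nonneg_left hW'.le hs0.le
            simp only [pow_zero, mul_one]
            linarith
          linarith
    | succ r ih =>
      intro hr
      have hle : P.s0 / (1 + P.δ) ^ m * (1 + P.δ) ^ r ≤ P.s0 := by
        rw [div_mul_eq_mul_div, div_le_iff₀ (by positivity)]
        apply mul_le_mul_of_nonneg_left _ hs0.le
        exact pow_le_pow_right₀ (by linarith) (by omega)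
      have := bfs_step P flag T X hT K ε hK hε hTp (Real.exp 1)
        (P.s0 / (1 + P.δ) ^ m * (1 + P.δ) ^ r) (Real.exp_pos _).le (by positivity) hle r
        (ih (by omega))
      intro F U h1 h2 h3 h4
      have := this F U h1 h2 h3 h4
      rw [pow_succ, ← mul_assoc]
      exact this
  have st2 : ∀ k : ℕ, ∀ F U, Disjoint F U → Disjoint (F ∪ U) X → U ⊆ P.M →
      ((P.M \ (F ∪ U)).card : ℝ) + (m + k : ℕ) * P.B ≤ K →
      gPr P.p (bfsBad P flag T (m + k) F U) ≤
        ε + (if F = ∅ then 0 else Real.exp (1 - P.s0 * P.δ * k) *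
          Real.exp (-(P.s0 * P.W F)))
          + (if flag then 1 else 0) * Real.exp (-(P.s0 * P.W F)) := by
    intro k
    induction k with
    | zero =>
      intro F U h1 h2 h3 h4
      have := st1 m le_rfl F U h1 h2 h3 h4
      rw [div_mul_cancel₀ _ (by positivity)] at this
      simpa using this
    | succ k ih =>
      intro F U h1 h2 h3 h4
      have := bfs_step P flag T X hT K ε hK hε hTp (Real.exp (1 - P.s0 * P.δ * k))
        P.s0 (Real.exp_pos _).le hs0.le le_rfl (m + k) ih F U h1 h2 h3 h4
      refine this.trans ?_
      gcongr ε + ?_ + _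
      split_ifs with hF
      · exact le_rfl
      · rw [← Real.exp_add, ← Real.exp_add]
        apply Real.exp_le_exp.2
        have h1 := P.one_le_W (Finset.nonempty_iff_ne_empty.2 hF)
        have : P.s0 * P.δ * 1 ≤ P.s0 * P.δ * P.W F := by gcongr
        push_cast
        nlinarith
  refine (st2 k F U hFU hX hU hcard).trans ?_
  gcongr ε + ?_ + _
  split_ifs with hF
  · positivity
  · have h1 := P.one_le_W (Finset.nonempty_iff_ne_empty.2 hF)
    have : Real.exp (-(P.s0 * P.W F)) ≤ 1 := by
      apply Real.exp_le_one_iff.2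
      have : 0 ≤ P.s0 * P.W F := by positivity
      linarith
    exact mul_le_of_le_one_right (Real.exp_pos _).le this

/-- No edge between `E` and `F`. -/
def noLink {N : ℕ} (E F : Finset (Fin N)) (_U : Finset (Fin N)) (G : SimpleGraph (Fin N)) : Prop :=
  ¬ ∃ a ∈ E, ∃ b ∈ F, G.Adj a b

/-- terminal event of the first exploration -/
def pairT {N : ℕ} (P : Par N) (flag : Prop) (r : ℕ) (k2 : ℝ) (s' : Fin N)
    (F U : Finset (Fin N)) (G : SimpleGraph (Fin N)) : Prop :=
  (F.card : ℝ) ≤ k2 ∧ bfsBad P flag (noLink F) r {s'} U G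

def pairBad {N : ℕ} (P : Par N) (flag : Prop) (r : ℕ) (k2 : ℝ) (s s' : Fin N)
    (G : SimpleGraph (Fin N)) : Prop :=
  bfsBad P flag (pairT P flag r k2 s') r {s} (P.M \ {s, s'}) G

theorem pairBad_prob {N : ℕ} (P : Par N) (flag : Prop) (k1 k2 εL : ℝ) (m k : ℕ)
    (hm : P.s0 * P.B ≤ (1 + P.δ) ^ m)
    (hlink : ∀ E F, Disjoint E F → P.B ≤ P.W E → P.B ≤ P.W F →
      gPr P.p (noLink E F ∅) ≤ εL) (hεL : 0 ≤ εL)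
    (hk1 : 1 + (m + k : ℕ) * P.B ≤ k1)
    (hk : k1 + k2 + (m + k : ℕ) * P.B ≤ P.kmax) (hk2 : 0 ≤ k2) (s s' : Fin N) (hss : s ≠ s') :
    gPr P.p (pairBad P flag (m + k) k2 s s') ≤ εL + 2 * Real.exp (1 - P.s0 * P.δ * k)
      + (if flag then 1 else 0) *
        (Real.exp (-(P.s0 * P.om s)) + Real.exp (-(P.s0 * P.om s'))) := by
  have hB := P.hB
  have hc0 : (0:ℝ) ≤ if flag then 1 else 0 := by split_ifs <;> norm_num
  have hW1 : ∀ x, P.W {x} = P.om x := fun x => by simp [Par.W]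
  have hrB : 0 ≤ ((m + k : ℕ) : ℝ) * P.B := by positivity
  have hdep : ∀ E F U : Finset (Fin N),
      DepOn (fun i j => i ∈ E ∪ (F ∪ U) ∧ j ∈ E ∪ (F ∪ U)) (noLink E F U) := by
    intro E F U G G' hG
    unfold noLink
    rw [eq_iff_iff, not_iff_not]
    refine exists_congr fun a => and_congr_right fun ha => exists_congr fun b =>
      and_congr_right fun hb => hG a b ⟨by simp [ha], by simp [hb]⟩
  have main := bfs_prob P flag (pairT P flag (m + k) k2 s') {s'} (by
      intro F U G G' hG
      unfold pairT
      have := bfsBad_dep P flag (noLink F) F (hdep F) (m + k) {s'} U G G' (by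
        rintro i j ⟨hi, hj⟩
        refine hG i j ⟨?_, ?_⟩
        · simp only [Finset.mem_union, Finset.mem_singleton] at hi ⊢; tauto
        · simp only [Finset.mem_union, Finset.mem_singleton] at hj ⊢; tauto)
      rw [this]) k1
      (εL + Real.exp (1 - P.s0 * P.δ * k)
          + (if flag then 1 else 0) * Real.exp (-(P.s0 * P.W {s'}))) (by linarith)
      (by positivity) (by
        intro F U hFU hX hU hW hc
        by_cases hF : (F.card : ℝ) ≤ k2
        · have e : pairT P flag (m + k) k2 s' F U = bfsBad P flag (noLink F) (m + k) {s'} U := by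
            funext G; simp [pairT, hF]
          rw [e]
          have hs'F : s' ∉ F ∧ s' ∉ U := by
            have := Finset.disjoint_right.1 hX (Finset.mem_singleton_self s')
            simpa using this
          apply bfs_prob P flag (noLink F) F (hdep F) P.kmax εL le_rfl hεL _ m k hm {s'} U
          · simpa using hs'F.2
          · rw [Finset.disjoint_union_left]
            exact ⟨by simpa using hs'F.1, hFU.symm⟩
          · exact hU
          · have h1 : P.M \ ({s'} ∪ U) ⊆ (P.M \ (F ∪ U)) ∪ F := by
              intro x; simp only [Finset.mem_sdiff, Finset.mem_union]; tauto
            have h2 : (P.M \ ({s'} ∪ U)).card ≤ (P.M \ (F ∪ U)).card + F.card :=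
              (Finset.card_le_card h1).trans (Finset.card_union_le _ _)
            have h3 : ((P.M \ ({s'} ∪ U)).card : ℝ) ≤ (P.M \ (F ∪ U)).card + F.card := by
              exact_mod_cast h2
            linarith
          · intro F' U' _ h2 _ h4 _
            exact hlink F F' (Finset.disjoint_of_subset_left Finset.subset_union_left h2).symm hW h4
        · have e : pairT P flag (m + k) k2 s' F U = fun _ => False := by
            funext G; simp [pairT, hF]
          rw [e, gPr_const_iff]
          simp only [if_false]
          positivity) m k hm {s} (P.M \ {s, s'}) (by simp) (by
        rw [Finset.disjoint_union_left]
        constructor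
        · simpa using hss
        · simp) Finset.sdiff_subset (by
        have h1 : P.M \ ({s} ∪ (P.M \ {s, s'})) ⊆ {s'} := by
          intro x
          simp only [Finset.mem_sdiff, Finset.mem_union, Finset.mem_singleton, Finset.mem_insert]
          tauto
        have h2 := Finset.card_le_card h1
        rw [Finset.card_singleton] at h2
        have h3 : ((P.M \ ({s} ∪ (P.M \ {s, s'}))).card : ℝ) ≤ 1 := by exact_mod_cast h2
        linarith)
  refine main.trans (le_of_eq ?_)
  rw [hW1, hW1]
  ring

end DV

namespace DV

/-! ### Part 3: deterministic consequences -/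

/-- Edges having at least one endpoint in `M`. -/
def hub {N : ℕ} (G : SimpleGraph (Fin N)) (M : Finset (Fin N)) : SimpleGraph (Fin N) where
  Adj x y := G.Adj x y ∧ (x ∈ M ∨ y ∈ M)
  symm := ⟨fun _ _ h => ⟨h.1.symm, h.2.symm⟩⟩
  loopless := ⟨fun x h => G.loopless.irrefl x h.1⟩

def Near {N : ℕ} (G : SimpleGraph (Fin N)) (l : ℕ) (x y : Fin N) : Prop :=
  ∃ q : G.Walk x y, q.length ≤ l

lemma Near.refl {N : ℕ} (G : SimpleGraph (Fin N)) (l : ℕ) (x : Fin N) : Near G l x x :=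
  ⟨SimpleGraph.Walk.nil, by simp⟩

lemma Near.symm {N : ℕ} {G : SimpleGraph (Fin N)} {l : ℕ} {x y : Fin N} (h : Near G l x y) :
    Near G l y x := by
  obtain ⟨q, hq⟩ := h
  exact ⟨q.reverse, by simpa using hq⟩

lemma Near.trans {N : ℕ} {G : SimpleGraph (Fin N)} {l l' : ℕ} {x y z : Fin N} (h : Near G l x y)
    (h' : Near G l' y z) : Near G (l + l') x z := by
  obtain ⟨q, hq⟩ := h
  obtain ⟨q', hq'⟩ := h'
  exact ⟨q.append q', by rw [SimpleGraph.Walk.length_append]; omega⟩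

lemma Near.adj {N : ℕ} {G : SimpleGraph (Fin N)} {x y : Fin N} (h : G.Adj x y) : Near G 1 x y :=
  ⟨SimpleGraph.Walk.cons h SimpleGraph.Walk.nil, by simp⟩

lemma Near.mono {N : ℕ} {G : SimpleGraph (Fin N)} {l l' : ℕ} {x y : Fin N} (h : Near G l x y)
    (hl : l ≤ l') : Near G l' x y := by
  obtain ⟨q, hq⟩ := h
  exact ⟨q, hq.trans hl⟩

theorem bfs_outcome {N : ℕ} (P : Par N) (flag : Prop)
    (T : Finset (Fin N) → Finset (Fin N) → SimpleGraph (Fin N) → Prop)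
    (G : SimpleGraph (Fin N)) (s : Fin N → Prop) (r : ℕ) : ∀ (F U : Finset (Fin N)) (l : ℕ),
    U ⊆ P.M → Disjoint F U → ¬ bfsBad P flag T r F U G →
    (∀ x ∈ F, ∃ a, s a ∧ Near (hub G P.M) l a x) →
    (∃ F' U', P.B ≤ P.W F' ∧ ¬ T F' U' G ∧ U' ⊆ U ∧ F' ⊆ (F ∪ U) \ U' ∧
      (∀ x ∈ (F ∪ U) \ U', ∃ a, s a ∧ Near (hub G P.M) (l + r) a x) ∧
      (F' = F ∨ (F' ⊆ U ∧ ∃ F'', (F'' = F ∨ F'' ⊆ U) ∧ P.W F'' < P.B ∧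
        ∀ y ∈ F', ∃ x ∈ F'', G.Adj x y))) ∨
    (¬ flag ∧ ∃ Z, F ⊆ Z ∧ Z ⊆ F ∪ U ∧ (∀ x ∈ Z, ∀ y ∈ U, G.Adj x y → y ∈ Z) ∧
      ∀ x ∈ Z, ∃ a, s a ∧ Near (hub G P.M) (l + r) a x) := by
  induction r with
  | zero =>
    intro F U l hU hFU h hF
    simp only [bfsBad, not_or, not_and] at h
    by_cases hW : P.B ≤ P.W F
    · left
      refine ⟨F, U, hW, h.1 hW, subset_rfl, ?_, ?_, Or.inl rfl⟩
      · intro x hx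
        simp only [Finset.mem_sdiff, Finset.mem_union]
        exact ⟨Or.inl hx, Finset.disjoint_left.1 hFU hx⟩
      · intro x hx
        simp only [Finset.mem_sdiff, Finset.mem_union] at hx
        exact hF x (by tauto)
    · right
      have h2 := h.2 (not_le.1 hW)
      have hFe := Finset.not_nonempty_iff_eq_empty.1 h2.1
      subst hFe
      exact ⟨h2.2, ∅, by simp⟩
  | succ r ih =>
    intro F U l hU hFU h hF
    simp only [bfsBad, not_or, not_and] at h
    by_cases hW : P.B ≤ P.W F
    · left
      refine ⟨F, U, hW, h.1 hW, subset_rfl, ?_, ?_, Or.inl rfl⟩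
      · intro x hx
        simp only [Finset.mem_sdiff, Finset.mem_union]
        exact ⟨Or.inl hx, Finset.disjoint_left.1 hFU hx⟩
      · intro x hx
        simp only [Finset.mem_sdiff, Finset.mem_union] at hx
        obtain ⟨a, ha, h⟩ := hF x (by tauto)
        exact ⟨a, ha, h.mono (by omega)⟩
    · have h2 := h.2 (not_le.1 hW)
      have hs := nbr_subset G F U
      have hA : ∀ x ∈ nbr G F U, ∃ y ∈ F, G.Adj y x := by
        intro x hx
        simp only [nbr, Finset.mem_filter] at hx
        exact hx.2
      have hF' : ∀ x ∈ F, ∃ a, s a ∧ Near (hub G P.M) (l + (r + 1)) a x := by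
        intro x hx
        obtain ⟨a, ha, h⟩ := hF x hx
        exact ⟨a, ha, h.mono (by omega)⟩
      rcases ih (nbr G F U) (U \ nbr G F U) (l + 1) (Finset.sdiff_subset.trans hU)
        Finset.disjoint_sdiff h2 (by
          intro x hx
          obtain ⟨y, hy, hxy⟩ := hA x hx
          obtain ⟨a, ha, h⟩ := hF y hy
          exact ⟨a, ha, h.trans (Near.adj ⟨hxy, Or.inr (hU (hs hx))⟩)⟩) with
        ⟨F', U', h3, h4, h5, h6, h7, h8⟩ | ⟨h3, Z, h4, h5, h6, h7⟩
      · left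
        rw [Finset.union_sdiff_of_subset hs] at h6 h7
        refine ⟨F', U', h3, h4, h5.trans Finset.sdiff_subset, ?_, ?_, ?_⟩
        · intro x hx
          have := h6 hx
          simp only [Finset.mem_sdiff, Finset.mem_union] at this ⊢
          tauto
        · intro x hx
          by_cases hxF : x ∈ F
          · exact hF' x hxF
          · simp only [Finset.mem_sdiff, Finset.mem_union] at hx
            obtain ⟨a, ha, h⟩ := h7 x (by simp only [Finset.mem_sdiff]; tauto)
            exact ⟨a, ha, h.mono (by omega)⟩
        · right
          rcases h8 with h8 | ⟨h8, F'', h9, h10, h11⟩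
          · exact ⟨h8 ▸ hs, F, Or.inl rfl, not_le.1 hW, h8 ▸ hA⟩
          · refine ⟨h8.trans Finset.sdiff_subset, F'', ?_, h10, h11⟩
            rcases h9 with h9 | h9
            · exact Or.inr (h9 ▸ hs)
            · exact Or.inr (h9.trans Finset.sdiff_subset)
      · right
        rw [Finset.union_sdiff_of_subset hs] at h5
        refine ⟨h3, F ∪ Z, Finset.subset_union_left,
          Finset.union_subset_union_right h5, ?_, ?_⟩
        · intro x hx y hy hxy
          by_cases hyn : y ∈ nbr G F U
          · exact Finset.mem_union_right _ (h4 hyn)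
          · have hxF : x ∉ F := fun hxF => hyn (by
              simp only [nbr, Finset.mem_filter]; exact ⟨hy, x, hxF, hxy⟩)
            have hxZ : x ∈ Z := by
              rcases Finset.mem_union.1 hx with h | h
              · exact absurd h hxF
              · exact h
            exact Finset.mem_union_right _ (h6 x hxZ y (by simp [hy, hyn]) hxy)
        · intro x hx
          rcases Finset.mem_union.1 hx with h | h
          · exact hF' x h
          · obtain ⟨a, ha, h⟩ := h7 x h
            exact ⟨a, ha, h.mono (by omega)⟩

/-- Paths in `hub G M` whose interior vertices are in `M`. -/
inductive MPath {N : ℕ} (G : SimpleGraph (Fin N)) (M : Finset (Fin N)) (s : Fin N) : Fin N → Prop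
  | refl : MPath G M s s
  | step {x y : Fin N} : MPath G M s x → (x = s ∨ x ∈ M) → (hub G M).Adj x y → MPath G M s y

theorem pair_det {N : ℕ} (P : Par N) (flag : Prop) (r : ℕ) (k2 : ℝ) (s s' : Fin N)
    (G : SimpleGraph (Fin N)) (hss : s ≠ s') (hb : ¬ pairBad P flag r k2 s s' G)
    (hWs : P.W {s} < P.B)
    (hcard : ∀ F'', (F'' = {s} ∨ F'' ⊆ P.M) → P.W F'' < P.B → ∀ F' : Finset (Fin N),
      (∀ y ∈ F', ∃ x ∈ F'', G.Adj x y) → (F'.card : ℝ) ≤ k2)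
    (hpath : flag ∨ MPath G P.M s s') : Near (hub G P.M) (2 * r + 1) s s' := by
  have hU : P.M \ {s, s'} ⊆ P.M := Finset.sdiff_subset
  rcases bfs_outcome P flag _ G (fun a => a = s) r {s} (P.M \ {s, s'}) 0 hU (by simp) hb
    (by intro x hx; rw [Finset.mem_singleton] at hx; subst hx; exact ⟨x, rfl, Near.refl _ _ _⟩) with
    ⟨F', U', h3, h4, h5, h6, h7, h8⟩ | ⟨hfl, Z, h4, h5, h6, h7⟩
  · have h8' : F' ⊆ P.M \ {s, s'} ∧ ∃ F'', (F'' = {s} ∨ F'' ⊆ P.M \ {s, s'}) ∧ P.W F'' < P.B ∧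
        ∀ y ∈ F', ∃ x ∈ F'', G.Adj x y := by
      rcases h8 with h8 | h8
      · subst h8; exact absurd h3 (not_le.2 hWs)
      · exact h8
    obtain ⟨hF'U, F'', h9, h10, h11⟩ := h8'
    have hc := hcard F'' (h9.imp id fun h => h.trans hU) h10 F' h11
    have hnb : ¬ bfsBad P flag (noLink F') r {s'} U' G := fun h => h4 ⟨hc, h⟩
    have hs'U : s' ∉ U' := fun h => by simpa using h5 h
    rcases bfs_outcome P flag _ G (fun a => a = s') r {s'} U' 0 (h5.trans hU) (by simpa using hs'U)
      hnb (by
        intro x hx; rw [Finset.mem_singleton] at hx; subst hx; exact ⟨x, rfl, Near.refl _ _ _⟩) with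
      ⟨F2, U2, k3, k4, k5, k6, k7, k8⟩ | ⟨hfl, Z, k4, k5, k6, k7⟩
    · unfold noLink at k4
      rw [not_not] at k4
      obtain ⟨a, ha, b, hb2, hab⟩ := k4
      obtain ⟨a0, ha0, n1⟩ := h7 a (h6 ha)
      obtain ⟨b0, hb0, n2⟩ := k7 b (k6 hb2)
      rw [ha0] at n1
      rw [hb0] at n2
      have := (n1.trans (Near.adj (G := hub G P.M) ⟨hab, Or.inl (hU (hF'U ha))⟩)).trans n2.symm
      exact this.mono (by omega)
    · have hp := hpath.resolve_left hfl
      have key : ∀ y, MPath G P.M s y → Near (hub G P.M) (2 * r + 1) s s' ∨ y ∉ Z := by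
        intro y hy
        induction hy with
        | refl =>
          right
          intro h
          have := k5 h
          rcases Finset.mem_union.1 this with h | h
          · exact hss (Finset.mem_singleton.1 h)
          · simpa using h5 h
        | @step x y hx hxM hxy ih =>
          rcases ih with ih | ih
          · exact Or.inl ih
          by_cases hyZ : y ∈ Z
          · left
            have hxU : x ∉ U' := fun h => ih (k6 y hyZ x h hxy.1.symm)
            have hxs' : x ≠ s' := fun h => ih (h ▸ k4 (Finset.mem_singleton_self s'))
            obtain ⟨a0, ha0, n1⟩ := h7 x (by
              simp only [Finset.mem_sdiff, Finset.mem_union, Finset.mem_singleton,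
                Finset.mem_insert]
              tauto)
            obtain ⟨b0, hb0, n2⟩ := k7 y hyZ
            rw [ha0] at n1
            rw [hb0] at n2
            exact ((n1.trans (Near.adj hxy)).trans n2.symm).mono (by omega)
          · exact Or.inr hyZ
      rcases key s' hp with h | h
      · exact h
      · exact absurd (k4 (Finset.mem_singleton_self s')) h
  · have hp := hpath.resolve_left hfl
    have key : ∀ y, MPath G P.M s y → Near (hub G P.M) (2 * r + 1) s s' ∨ y ∈ Z ∨
        (y ∉ P.M ∧ y ≠ s ∧ y ≠ s') := by
      intro y hy
      induction hy with
      | refl => exact Or.inr (Or.inl (h4 (Finset.mem_singleton_self s)))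
      | @step x y hx hxM hxy ih =>
        rcases ih with ih | ih | ih
        · exact Or.inl ih
        · obtain ⟨a0, ha0, n1⟩ := h7 x ih
          rw [ha0] at n1
          by_cases hy : y = s'
          · subst hy
            left
            exact (n1.trans (Near.adj hxy)).mono (by omega)
          · by_cases hys : y = s
            · right; left; rw [hys]; exact h4 (Finset.mem_singleton_self s)
            · by_cases hyM : y ∈ P.M
              · right; left
                apply h6 x ih y _ hxy.1
                simp [hyM, hy, hys]
              · exact Or.inr (Or.inr ⟨hyM, hys, hy⟩)
        · tauto
    rcases key s' hp with h | h | h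
    · exact h
    · have := h5 h
      simp only [Finset.mem_union, Finset.mem_singleton, Finset.mem_sdiff, Finset.mem_insert] at this
      rcases this with h | h
      · exact absurd h.symm hss
      · tauto
    · exact absurd rfl h.2.2

/-- all reachable pairs are near each other -/
theorem all_near {N : ℕ} (G : SimpleGraph (Fin N)) (M : Finset (Fin N)) (l : ℕ)
    (h1 : ∀ s s', s ≠ s' → MPath G M s s' → Near (hub G M) l s s')
    (h2 : ∀ s s', s ≠ s' → s ∉ M → s' ∉ M → Near (hub G M) l s s')
    (s t : Fin N) (h : G.Reachable s t) : Near (hub G M) (3 * l) s t := by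
  obtain ⟨q⟩ := h
  have h1' : ∀ s s', MPath G M s s' → Near (hub G M) l s s' := by
    intro s s' h
    by_cases hs : s = s'
    · subst hs; exact Near.refl _ _ _
    · exact h1 s s' hs h
  have h2' : ∀ s s', s ∉ M → s' ∉ M → Near (hub G M) l s s' := by
    intro s s' h h'
    by_cases hs : s = s'
    · subst hs; exact Near.refl _ _ _
    · exact h2 s s' hs h h'
  have key : ∀ {x t : Fin N} (q : G.Walk x t),
      (MPath G M s x ∨ ∃ a a', a ∉ M ∧ a' ∉ M ∧ MPath G M s a ∧ MPath G M a' x) →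
      (MPath G M s t ∨ ∃ a a', a ∉ M ∧ a' ∉ M ∧ MPath G M s a ∧ MPath G M a' t) := by
    intro x t q
    induction q with
    | nil => exact id
    | @cons x y t hxy q ih =>
      intro h
      apply ih
      by_cases hx : x ∈ M
      · rcases h with h | ⟨a, a', ha, ha', h3, h4⟩
        · exact Or.inl (h.step (Or.inr hx) ⟨hxy, Or.inl hx⟩)
        · exact Or.inr ⟨a, a', ha, ha', h3, h4.step (Or.inr hx) ⟨hxy, Or.inl hx⟩⟩
      · have : ∃ a, a ∉ M ∧ MPath G M s a := by
          rcases h with h | ⟨a, a', ha, ha', h3, h4⟩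
          · exact ⟨x, hx, h⟩
          · exact ⟨a, ha, h3⟩
        obtain ⟨a, ha, h3⟩ := this
        right
        by_cases hy : y ∈ M
        · exact ⟨a, x, ha, hx, h3, MPath.refl.step (Or.inl rfl) ⟨hxy, Or.inr hy⟩⟩
        · exact ⟨a, y, ha, hy, h3, MPath.refl⟩
  rcases key q (Or.inl MPath.refl) with h | ⟨a, a', ha, ha', h3, h4⟩
  · exact (h1' s t h).mono (by omega)
  · exact (((h1' s a h3).trans (h2' a a' ha ha')).trans (h1' a' t h4)).mono (by omega)

/-- existence of a large component -/
theorem big_comp {N : ℕ} (P : Par N) (r : ℕ) (F0 : Finset (Fin N)) (G : SimpleGraph (Fin N))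
    (hF0 : F0 ⊆ P.M) (R : ℝ) (hR : 0 < R) (homR : ∀ i ∈ P.M, P.om i ≤ R)
    (hb : ¬ bfsBad P True (fun _ _ _ => False) r F0 (P.M \ F0) G) :
    ∃ s, P.B / (R * F0.card) ≤ ((Finset.univ.filter fun x => G.Reachable s x).card : ℝ) := by
  rcases bfs_outcome P True _ G (fun a => a ∈ F0) r F0 (P.M \ F0) 0 Finset.sdiff_subset
    Finset.disjoint_sdiff hb (fun x hx => ⟨x, hx, Near.refl _ _ _⟩) with
    ⟨F', U', h3, h4, h5, h6, h7, h8⟩ | ⟨hfl, _⟩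
  · have hF'M : F' ⊆ P.M := by
      intro x hx
      have := h6 hx
      simp only [Finset.mem_sdiff, Finset.mem_union] at this
      rcases this.1 with h | h
      · exact hF0 h
      · exact h.1
    have hsub : F' ⊆ F0.biUnion (fun s => Finset.univ.filter fun x => G.Reachable s x) := by
      intro x hx
      obtain ⟨a, ha, ⟨q, _⟩⟩ := h7 x (h6 hx)
      simp only [Finset.mem_biUnion, Finset.mem_filter, Finset.mem_univ, true_and]
      refine ⟨a, ha, ?_⟩
      have hle : hub G P.M ≤ G := fun x y h => h.1
      exact (SimpleGraph.Reachable.mono hle ⟨q⟩)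
    have hBF : P.B ≤ R * F'.card := by
      refine h3.trans ?_
      unfold Par.W
      calc _ ≤ ∑ i ∈ F', R := Finset.sum_le_sum fun i hi => homR i (hF'M hi)
        _ = _ := by simp [mul_comm]
    have hF'ne : F'.Nonempty := by
      rw [Finset.nonempty_iff_ne_empty]
      rintro rfl
      have := P.hB
      simp at hBF
      linarith
    have hF0ne : F0.Nonempty := by
      obtain ⟨x, hx⟩ := hF'ne
      have := hsub hx
      simp only [Finset.mem_biUnion] at this
      obtain ⟨a, ha, _⟩ := this
      exact ⟨a, ha⟩
    by_contra hcon
    push Not at hcon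
    have hc0 : (0:ℝ) < F0.card := by exact_mod_cast hF0ne.card_pos
    have h1 : (F'.card : ℝ) ≤ ∑ s ∈ F0, ((Finset.univ.filter fun x => G.Reachable s x).card : ℝ) := by
      exact_mod_cast (Finset.card_le_card hsub).trans Finset.card_biUnion_le
    have h2 : ∑ s ∈ F0, ((Finset.univ.filter fun x => G.Reachable s x).card : ℝ)
        < ∑ s ∈ F0, P.B / (R * F0.card) := Finset.sum_lt_sum_of_nonempty hF0ne fun s _ => hcon s
    have h3 : ∑ s ∈ F0, P.B / (R * F0.card) = P.B / R := by
      rw [Finset.sum_const, nsmul_eq_mul]; field_simp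
    have h4 : P.B / R ≤ F'.card := by rw [div_le_iff₀ hR]; linarith
    linarith
  · exact absurd trivial hfl

end DV

namespace DV

/-! ### Part 4: the semigroup and the voter model -/

section semigroup

attribute [local instance] Matrix.linftyOpNormedRing Matrix.linftyOpNormedAlgebra

variable {S : Type*} [Fintype S] [DecidableEq S]

theorem exp_entry_nonneg_of_nonneg (A : Matrix S S ℝ) (hA : ∀ a b, 0 ≤ A a b) (a b : S) :
    0 ≤ NormedSpace.exp A a b := by
  have h := NormedSpace.exp_series_hasSum_exp' (𝕂 := ℝ) A
  have hc : Continuous (fun M : Matrix S S ℝ => M a b) :=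
    (continuous_apply b).comp (continuous_apply a)
  have h2 := h.map (⟨⟨fun M : Matrix S S ℝ => M a b, rfl⟩, fun _ _ => rfl⟩ : Matrix S S ℝ →+ ℝ) hc
  refine h2.nonneg ?_
  intro n
  have hp : ∀ n : ℕ, ∀ a b, 0 ≤ (A ^ n) a b := by
    intro n
    induction n with
    | zero => intro a b; rw [pow_zero, Matrix.one_apply]; split_ifs <;> norm_num
    | succ n ih =>
      intro a b
      rw [pow_succ, Matrix.mul_apply]
      exact Finset.sum_nonneg fun k _ => mul_nonneg (ih a k) (hA k b)
  have := hp n a b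
  show 0 ≤ ((n.factorial : ℝ)⁻¹ • A ^ n) a b
  rw [Matrix.smul_apply, smul_eq_mul]
  positivity

theorem exp_entry_nonneg (Q : Matrix S S ℝ) (hQ : ∀ a b, a ≠ b → 0 ≤ Q a b) (t : ℝ) (ht : 0 ≤ t)
    (a b : S) : 0 ≤ NormedSpace.exp (t • Q) a b := by
  set c : ℝ := ∑ x, |Q x x| with hc
  have h1 : t • Q = t • (Q + c • (1 : Matrix S S ℝ)) + (-(t * c)) • (1 : Matrix S S ℝ) := by
    rw [smul_add, smul_smul, add_assoc, ← add_smul]; simp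
  have hcomm : Commute (t • (Q + c • (1 : Matrix S S ℝ))) ((-(t * c)) • (1 : Matrix S S ℝ)) :=
    (Commute.one_right _).smul_right _
  have h2 : NormedSpace.exp ((-(t * c)) • (1 : Matrix S S ℝ))
      = (Real.exp (-(t * c))) • (1 : Matrix S S ℝ) := by
    have : (-(t * c)) • (1 : Matrix S S ℝ) = Matrix.diagonal (fun _ => -(t * c)) := by
      rw [Matrix.smul_one_eq_diagonal]
    rw [this, Matrix.exp_diagonal, Matrix.smul_one_eq_diagonal]
    congr 1
    funext x
    rw [Real.exp_eq_exp_ℝ, Pi.coe_exp]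
  rw [h1, Matrix.exp_add_of_commute _ _ hcomm, h2, Matrix.mul_smul, mul_one, Matrix.smul_apply,
    smul_eq_mul]
  refine mul_nonneg (Real.exp_pos _).le (exp_entry_nonneg_of_nonneg _ ?_ a b)
  intro x y
  rw [Matrix.smul_apply, smul_eq_mul]
  refine mul_nonneg ht ?_
  rw [Matrix.add_apply, Matrix.smul_apply, Matrix.one_apply, smul_eq_mul]
  by_cases hxy : x = y
  · subst hxy
    rw [if_pos rfl, mul_one]
    have : |Q x x| ≤ c := Finset.single_le_sum (f := fun x => |Q x x|) (fun _ _ => abs_nonneg _)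
      (Finset.mem_univ x)
    linarith [neg_abs_le (Q x x)]
  · rw [if_neg hxy, mul_zero, add_zero]; exact hQ x y hxy

/-- expectation at time `t` -/
def sg (Q : Matrix S S ℝ) (μ : S → ℝ) (t : ℝ) (f : S → ℝ) : ℝ :=
  ∑ a, ∑ b, μ a * (NormedSpace.exp (t • Q)) a b * f b

theorem sg_deriv (Q : Matrix S S ℝ) (μ : S → ℝ) (t : ℝ) (f : S → ℝ) :
    HasDerivAt (fun t => sg Q μ t f) (sg Q μ t (Q.mulVec f)) t := by
  have h := hasDerivAt_exp_smul_const (𝕂 := ℝ) Q t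
  have he : ∀ a b, HasDerivAt (fun t : ℝ => NormedSpace.exp (t • Q) a b)
      ((NormedSpace.exp (t • Q) * Q) a b) t := by
    intro a b
    let L : Matrix S S ℝ →L[ℝ] ℝ :=
      ⟨⟨⟨fun M => M a b, fun _ _ => rfl⟩, fun _ _ => rfl⟩,
        (continuous_apply b).comp (continuous_apply a)⟩
    exact L.hasFDerivAt.comp_hasDerivAt t h
  have h2 : HasDerivAt (fun t => sg Q μ t f)
      (∑ a, ∑ b, μ a * ((NormedSpace.exp (t • Q) * Q) a b) * f b) t := by
    unfold sg
    refine HasDerivAt.fun_sum fun a _ => HasDerivAt.fun_sum fun b _ => ?_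
    exact ((he a b).const_mul (μ a)).mul_const (f b)
  convert h2 using 1
  unfold sg
  refine Finset.sum_congr rfl fun a _ => ?_
  simp only [Matrix.mul_apply, Matrix.mulVec, dotProduct, Finset.mul_sum, Finset.sum_mul]
  rw [Finset.sum_comm]
  refine Finset.sum_congr rfl fun b _ => Finset.sum_congr rfl fun k _ => ?_
  ring

theorem sg_zero (Q : Matrix S S ℝ) (μ : S → ℝ) (f : S → ℝ) : sg Q μ 0 f = ∑ a, μ a * f a := by
  unfold sg
  rw [zero_smul, NormedSpace.exp_zero]
  refine Finset.sum_congr rfl fun a _ => ?_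
  simp [Matrix.one_apply]

theorem sg_mono (Q : Matrix S S ℝ) (hQ : ∀ a b, a ≠ b → 0 ≤ Q a b) (μ : S → ℝ) (hμ : ∀ a, 0 ≤ μ a)
    (t : ℝ) (ht : 0 ≤ t) (f g : S → ℝ) (h : ∀ a, f a ≤ g a) : sg Q μ t f ≤ sg Q μ t g :=
  Finset.sum_le_sum fun a _ => Finset.sum_le_sum fun b _ =>
    mul_le_mul_of_nonneg_left (h b) (mul_nonneg (hμ a) (exp_entry_nonneg Q hQ t ht a b))

theorem sg_sum (Q : Matrix S S ℝ) (μ : S → ℝ) (t : ℝ) {ι : Type*} (s : Finset ι) (f : ι → S → ℝ) :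
    sg Q μ t (fun x => ∑ i ∈ s, f i x) = ∑ i ∈ s, sg Q μ t (f i) := by
  unfold sg
  simp only [Finset.mul_sum]
  symm
  refine Finset.sum_comm.trans ?_
  exact Finset.sum_congr rfl fun a _ => Finset.sum_comm

theorem sg_cmul (Q : Matrix S S ℝ) (μ : S → ℝ) (t c : ℝ) (f : S → ℝ) :
    sg Q μ t (fun x => c * f x) = c * sg Q μ t f := by
  unfold sg
  simp only [Finset.mul_sum]
  refine Finset.sum_congr rfl fun a _ => Finset.sum_congr rfl fun b _ => ?_
  ring

theorem sg_add (Q : Matrix S S ℝ) (μ : S → ℝ) (t : ℝ) (f g : S → ℝ) :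
    sg Q μ t (fun x => f x + g x) = sg Q μ t f + sg Q μ t g := by
  unfold sg
  simp only [mul_add, Finset.sum_add_distrib]

theorem sg_sub (Q : Matrix S S ℝ) (μ : S → ℝ) (t : ℝ) (f g : S → ℝ) :
    sg Q μ t (fun x => f x - g x) = sg Q μ t f - sg Q μ t g := by
  unfold sg
  simp only [mul_sub, Finset.sum_sub_distrib]

theorem sg_nul (Q : Matrix S S ℝ) (μ : S → ℝ) (t : ℝ) : sg Q μ t (fun _ => 0) = 0 := by
  simp [sg]

theorem sg_one (Q : Matrix S S ℝ) (hQ : Q.mulVec (fun _ => 1) = fun _ => 0) (μ : S → ℝ)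
    (hμ : ∑ a, μ a = 1) (t : ℝ) : sg Q μ t (fun _ => 1) = 1 := by
  have hd : ∀ t, HasDerivAt (fun t => sg Q μ t (fun _ => 1)) 0 t := by
    intro t
    have := sg_deriv Q μ t (fun _ => 1)
    rwa [hQ, sg_nul] at this
  have := is_const_of_deriv_eq_zero (fun t => (hd t).differentiableAt) (fun t => (hd t).deriv) t 0
  rw [this, sg_zero]
  simpa using hμ

end semigroup

end DV

namespace DV

variable {N : ℕ}

def aw (G : SimpleGraph (Fin N)) (θ : ℝ) (i : Fin N) : ℝ :=
  (G.degree i : ℝ) ^ θ * ((G.degree i : ℝ))⁻¹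

/-- conductances -/
def cd (G : SimpleGraph (Fin N)) (θ : ℝ) (i k : Fin N) : ℝ :=
  if G.Adj i k then (aw G θ i + aw G θ k) / 2 else 0

theorem aw_nonneg (G : SimpleGraph (Fin N)) (θ : ℝ) (i : Fin N) : 0 ≤ aw G θ i := by
  unfold aw; positivity

theorem cd_nonneg (G : SimpleGraph (Fin N)) (θ : ℝ) (i k : Fin N) : 0 ≤ cd G θ i k := by
  unfold cd
  split_ifs
  · linarith [aw_nonneg G θ i, aw_nonneg G θ k]
  · exact le_rfl

theorem cd_symm (G : SimpleGraph (Fin N)) (θ : ℝ) (i k : Fin N) : cd G θ i k = cd G θ k i := by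
  unfold cd
  simp only [G.adj_comm i k, add_comm]

theorem gen_apply (G : SimpleGraph (Fin N)) (θ : ℝ) (f : (Fin N → Bool) → ℝ) (η : Fin N → Bool) :
    (voterQ G θ).mulVec f η
      = ∑ i, ∑ k, cd G θ i k * (f (Function.update η i (η k)) - f η) := by
  have h1 : (voterQ G θ).mulVec f η = ∑ i, ∑ j, (if G.Adj i j then aw G θ i else 0) *
      (1 / 2 * f (Function.update η j (η i)) + 1 / 2 * f (Function.update η i (η j)) - f η) := by
    unfold voterQ Matrix.mulVec dotProduct
    simp only [Matrix.of_apply, Finset.sum_mul, Finset.mul_sum]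
    rw [Finset.sum_comm]
    refine Finset.sum_congr rfl fun i _ => ?_
    rw [Finset.sum_comm, SimpleGraph.neighborFinset_eq_filter, Finset.sum_filter]
    refine Finset.sum_congr rfl fun j _ => ?_
    by_cases h : G.Adj i j
    · rw [if_pos h, if_pos h]
      unfold aw
      have e : ∀ η1 : Fin N → Bool, f η1 = ∑ x, (if η1 = x then (1:ℝ) else 0) * f x := by
        intro η1; simp
      rw [e (Function.update η j (η i)), e (Function.update η i (η j)), e η, Finset.mul_sum,
        Finset.mul_sum, ← Finset.sum_add_distrib, ← Finset.sum_sub_distrib, Finset.mul_sum]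
      refine Finset.sum_congr rfl fun x _ => ?_
      ring
    · simp [h]
  rw [h1]
  have h2 : ∑ i, ∑ j, (if G.Adj i j then aw G θ i else 0) *
      (1 / 2 * f (Function.update η j (η i)) + 1 / 2 * f (Function.update η i (η j)) - f η)
      = (∑ i, ∑ j, (if G.Adj i j then aw G θ i else 0) / 2 * (f (Function.update η j (η i)) - f η))
      + ∑ i, ∑ j, (if G.Adj i j then aw G θ i else 0) / 2 *
          (f (Function.update η i (η j)) - f η) := by
    rw [← Finset.sum_add_distrib]
    refine Finset.sum_congr rfl fun i _ => ?_
    rw [← Finset.sum_add_distrib]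
    refine Finset.sum_congr rfl fun j _ => ?_
    ring
  rw [h2, Finset.sum_comm, ← Finset.sum_add_distrib]
  refine Finset.sum_congr rfl fun i _ => ?_
  rw [← Finset.sum_add_distrib]
  refine Finset.sum_congr rfl fun j _ => ?_
  unfold cd
  by_cases h : G.Adj i j
  · rw [if_pos h, if_pos h, if_pos h.symm]; ring
  · have h' : ¬ G.Adj j i := fun h' => h h'.symm
    rw [if_neg h, if_neg h, if_neg h']; ring

theorem voterQ_off (G : SimpleGraph (Fin N)) (θ : ℝ) (η η' : Fin N → Bool) (h : η ≠ η') :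
    0 ≤ voterQ G θ η η' := by
  unfold voterQ
  simp only [Matrix.of_apply, if_neg h, sub_zero]
  positivity

theorem voterQ_one (G : SimpleGraph (Fin N)) (θ : ℝ) :
    (voterQ G θ).mulVec (fun _ => 1) = fun _ => 0 := by
  funext η
  rw [gen_apply]; simp

theorem muU_nonneg {u : ℝ} (hu : u ∈ Set.Ioo (0:ℝ) 1) (η : Fin N → Bool) : 0 ≤ muU u η := by
  unfold muU
  refine Finset.prod_nonneg fun i _ => ?_
  have := hu.1; have := hu.2
  split_ifs <;> linarith

theorem muU_sum (u : ℝ) : ∑ η : Fin N → Bool, muU u η = 1 := by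
  unfold muU
  rw [← Fintype.prod_sum (fun (_ : Fin N) (b : Bool) => if b then u else 1 - u)]
  simp

theorem muU_pair {u : ℝ} (hu : u ∈ Set.Ioo (0:ℝ) 1) (i j : Fin N) (hij : i ≠ j) :
    u * (1 - u) ≤ ∑ η : Fin N → Bool, muU u η * (if η i ≠ η j then 1 else 0) := by
  have h1 : ∑ η : Fin N → Bool, ∏ k : Fin N, (if (k = i → η k = true) ∧ (k = j → η k = false) then
      (if η k then u else 1 - u) else 0) = u * (1 - u) := by
    rw [← Fintype.prod_sum (fun (k : Fin N) (b : Bool) =>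
      if (k = i → b = true) ∧ (k = j → b = false) then (if b then u else 1 - u) else 0)]
    have : ∀ k : Fin N, (∑ b : Bool, if (k = i → b = true) ∧ (k = j → b = false) then
        (if b then u else 1 - u) else 0) = (if k = i then u else 1) * (if k = j then (1 - u) else 1) := by
      intro k
      by_cases h : k = i
      · have : k ≠ j := fun h' => hij (h ▸ h')
        simp [h, hij]
      · by_cases h' : k = j
        · simp [h', hij.symm]
        · simp [h, h']
    rw [Finset.prod_congr rfl fun k _ => this k, Finset.prod_mul_distrib]
    simp
  rw [← h1]
  refine Finset.sum_le_sum fun η _ => ?_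
  by_cases hη : η i = true ∧ η j = false
  · rw [if_pos (by rw [hη.1, hη.2]; simp), mul_one]
    unfold muU
    refine le_of_eq (Finset.prod_congr rfl fun k _ => ?_)
    rw [if_pos]
    exact ⟨fun h => h ▸ hη.1, fun h => h ▸ hη.2⟩
  · have : ∏ k : Fin N, (if (k = i → η k = true) ∧ (k = j → η k = false) then
      (if η k then u else 1 - u) else 0) = 0 := by
      by_cases h : η i = true
      · refine Finset.prod_eq_zero (Finset.mem_univ j) (if_neg ?_)
        rintro ⟨_, h2⟩
        exact hη ⟨h, h2 rfl⟩
      · refine Finset.prod_eq_zero (Finset.mem_univ i) (if_neg ?_)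
        rintro ⟨h2, _⟩
        exact h (h2 rfl)
    rw [this]
    refine mul_nonneg (muU_nonneg hu η) ?_
    split_ifs <;> norm_num

/-- disagreement observables -/
def Dis (G : SimpleGraph (Fin N)) (i j : Fin N) (η : Fin N → Bool) : ℝ :=
  if G.Reachable i j ∧ η i ≠ η j then 1 else 0

theorem Dis_symm (G : SimpleGraph (Fin N)) (i j : Fin N) : Dis G i j = Dis G j i := by
  funext η
  unfold Dis
  simp only [G.reachable_comm (u := i), ne_comm (a := η i)]

theorem Dis_self (G : SimpleGraph (Fin N)) (i : Fin N) : Dis G i i = fun _ => 0 := by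
  funext η; simp [Dis]

theorem Dis_nonneg (G : SimpleGraph (Fin N)) (i j : Fin N) (η) : 0 ≤ Dis G i j η := by
  unfold Dis; split_ifs <;> norm_num

theorem Dis_le_one (G : SimpleGraph (Fin N)) (i j : Fin N) (η) : Dis G i j η ≤ 1 := by
  unfold Dis; split_ifs <;> norm_num

theorem gen_Dis (G : SimpleGraph (Fin N)) (θ : ℝ) (i j : Fin N) (hij : i ≠ j) (η : Fin N → Bool) :
    (voterQ G θ).mulVec (Dis G i j) η
      = ∑ k, cd G θ i k * (Dis G k j η - Dis G i j η)
        + ∑ k, cd G θ j k * (Dis G i k η - Dis G i j η) := by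
  rw [gen_apply]
  have hz : ∀ x ∈ Finset.univ, x ∉ ({i, j} : Finset (Fin N)) →
      ∑ k, cd G θ x k * (Dis G i j (Function.update η x (η k)) - Dis G i j η) = 0 := by
    intro x _ hx
    simp only [Finset.mem_insert, Finset.mem_singleton, not_or] at hx
    refine Finset.sum_eq_zero fun k _ => ?_
    have : Dis G i j (Function.update η x (η k)) = Dis G i j η := by
      unfold Dis
      rw [Function.update_of_ne (Ne.symm hx.1), Function.update_of_ne (Ne.symm hx.2)]
    rw [this]; ring
  rw [← Finset.sum_subset (Finset.subset_univ {i, j}) hz, Finset.sum_pair hij]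
  congr 1
  · refine Finset.sum_congr rfl fun k _ => ?_
    by_cases h : G.Adj i k
    · congr 2
      unfold Dis
      rw [Function.update_self, Function.update_of_ne hij.symm]
      have : G.Reachable i j ↔ G.Reachable k j :=
        ⟨fun h' => h.symm.reachable.trans h', fun h' => h.reachable.trans h'⟩
      simp only [this]
    · simp [cd, h]
  · refine Finset.sum_congr rfl fun k _ => ?_
    by_cases h : G.Adj j k
    · congr 2
      unfold Dis
      rw [Function.update_self, Function.update_of_ne hij]
      have : G.Reachable i j ↔ G.Reachable i k :=
        ⟨fun h' => h'.trans h.reachable, fun h' => h'.trans h.symm.reachable⟩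
      simp only [this]
    · simp [cd, h]

/-- disagreement probabilities -/
def Wt (G : SimpleGraph (Fin N)) (θ u t : ℝ) (i j : Fin N) : ℝ :=
  sg (voterQ G θ) (muU u) t (Dis G i j)

theorem Wt_symm (G : SimpleGraph (Fin N)) (θ u t : ℝ) (i j : Fin N) :
    Wt G θ u t i j = Wt G θ u t j i := by unfold Wt; rw [Dis_symm]

theorem Wt_self (G : SimpleGraph (Fin N)) (θ u t : ℝ) (i : Fin N) :
    Wt G θ u t i i = 0 := by unfold Wt; rw [Dis_self, sg_nul]

theorem Wt_unreach (G : SimpleGraph (Fin N)) (θ u t : ℝ) (i j : Fin N) (h : ¬ G.Reachable i j) :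
    Wt G θ u t i j = 0 := by
  unfold Wt
  have : Dis G i j = fun _ => 0 := by funext η; simp [Dis, h]
  rw [this, sg_nul]

theorem Wt_nonneg (G : SimpleGraph (Fin N)) (θ : ℝ) {u : ℝ} (hu : u ∈ Set.Ioo (0:ℝ) 1) {t : ℝ}
    (ht : 0 ≤ t) (i j : Fin N) : 0 ≤ Wt G θ u t i j := by
  have := sg_mono (voterQ G θ) (voterQ_off G θ) (muU u) (muU_nonneg hu) t ht (fun _ => 0)
    (Dis G i j) (Dis_nonneg G i j)
  rwa [sg_nul] at this

theorem Wt_le_one (G : SimpleGraph (Fin N)) (θ : ℝ) {u : ℝ} (hu : u ∈ Set.Ioo (0:ℝ) 1) {t : ℝ}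
    (ht : 0 ≤ t) (i j : Fin N) : Wt G θ u t i j ≤ 1 := by
  have := sg_mono (voterQ G θ) (voterQ_off G θ) (muU u) (muU_nonneg hu) t ht
    (Dis G i j) (fun _ => 1) (Dis_le_one G i j)
  rwa [sg_one _ (voterQ_one G θ) _ (muU_sum u)] at this

/-- the drift -/
def dr (G : SimpleGraph (Fin N)) (θ : ℝ) (W : Fin N → Fin N → ℝ) (i j : Fin N) : ℝ :=
  ∑ k, cd G θ i k * (W k j - W i j) + ∑ k, cd G θ j k * (W i k - W i j)

theorem Wt_deriv (G : SimpleGraph (Fin N)) (θ u t : ℝ) (i j : Fin N) :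
    HasDerivAt (fun t => Wt G θ u t i j) (if i = j then 0 else dr G θ (Wt G θ u t) i j) t := by
  split_ifs with h
  · subst h
    have : (fun t => Wt G θ u t i i) = fun _ => 0 := by funext t; exact Wt_self G θ u t i
    rw [this]; exact hasDerivAt_const t 0
  · have h1 := sg_deriv (voterQ G θ) (muU u) t (Dis G i j)
    have : (voterQ G θ).mulVec (Dis G i j) = fun η => ∑ k, cd G θ i k * (Dis G k j η - Dis G i j η)
        + ∑ k, cd G θ j k * (Dis G i k η - Dis G i j η) := by
      funext η; exact gen_Dis G θ i j h η
    rw [this, sg_add, sg_sum, sg_sum] at h1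
    simp only [sg_cmul, sg_sub] at h1
    exact h1

end DV

namespace DV

variable {N : ℕ}

theorem walk_cs {H : SimpleGraph (Fin N)} (f : Fin N → ℝ) {i j : Fin N} (q : H.Walk i j) :
    (f i - f j) ^ 2 ≤ q.length * (q.darts.map fun d => (f d.snd - f d.fst) ^ 2).sum := by
  induction q with
  | nil => simp
  | @cons a b c h q ih =>
    simp only [SimpleGraph.Walk.length_cons, SimpleGraph.Walk.darts_cons, List.map_cons,
      List.sum_cons]
    have hB : 0 ≤ (q.darts.map fun d => (f d.snd - f d.fst) ^ 2).sum :=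
      List.sum_nonneg (by simp only [List.mem_map]; rintro _ ⟨d, _, rfl⟩; positivity)
    set B := (q.darts.map fun d => (f d.snd - f d.fst) ^ 2).sum
    push_cast
    have e : f a - f c = (f a - f b) + (f b - f c) := by ring
    have e2 : (f b - f a) ^ 2 = (f a - f b) ^ 2 := by ring
    rw [e, e2]
    generalize f a - f b = x at *
    generalize f b - f c = y at *
    rcases Nat.eq_zero_or_pos q.length with h0 | h0
    · rw [h0] at ih ⊢
      have : y = 0 := by
        have : y ^ 2 ≤ 0 := by simpa using ih
        nlinarith
      subst this
      simp; exact hB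
    · have hn : (0:ℝ) < q.length := by exact_mod_cast h0
      generalize (q.length : ℝ) = n at *
      have h1 : 0 ≤ n * (n * x ^ 2 + B - 2 * x * y) := by nlinarith [sq_nonneg (n * x - y)]
      have h2 : 0 ≤ n * x ^ 2 + B - 2 * x * y := nonneg_of_mul_nonneg_right h1 hn
      nlinarith

/-- path Poincaré -/
theorem near_poincare (H : SimpleGraph (Fin N)) (c : Fin N → Fin N → ℝ) (hc : ∀ x y, 0 ≤ c x y)
    (l : ℕ) (ρ : ℝ) (hρ : 0 ≤ ρ) (hH : ∀ x y, H.Adj x y → 1 ≤ ρ * c x y) (f : Fin N → ℝ)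
    (i j : Fin N) (h : Near H l i j) :
    (f i - f j) ^ 2 ≤ l * ρ * ∑ x, ∑ y, c x y * (f y - f x) ^ 2 := by
  obtain ⟨q, hq⟩ := h
  have hp := q.bypass_isPath
  have hl : q.bypass.length ≤ l := (SimpleGraph.Walk.length_bypass_le_length q).trans hq
  generalize q.bypass = q' at *
  have h1 := walk_cs f q'
  have hnd := SimpleGraph.Walk.darts_nodup_of_support_nodup hp.support_nodup
  have h2 : (q'.darts.map fun d => (f d.snd - f d.fst) ^ 2).sum
      ≤ ρ * ∑ x, ∑ y, c x y * (f y - f x) ^ 2 := by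
    rw [← List.sum_toFinset _ hnd]
    calc ∑ d ∈ q'.darts.toFinset, (f d.snd - f d.fst) ^ 2
        ≤ ∑ d ∈ q'.darts.toFinset, ρ * (c d.fst d.snd * (f d.snd - f d.fst) ^ 2) := by
          refine Finset.sum_le_sum fun d _ => ?_
          have := hH _ _ d.adj
          nlinarith [sq_nonneg (f d.snd - f d.fst)]
      _ = ∑ z ∈ q'.darts.toFinset.image (fun d => d.toProd),
            ρ * (c z.1 z.2 * (f z.2 - f z.1) ^ 2) := by
          rw [Finset.sum_image]
          intro d _ d' _ h
          exact SimpleGraph.Dart.ext _ _ h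
      _ ≤ ∑ z : Fin N × Fin N, ρ * (c z.1 z.2 * (f z.2 - f z.1) ^ 2) := by
          refine Finset.sum_le_sum_of_subset_of_nonneg (Finset.subset_univ _) fun z _ _ => ?_
          have := hc z.1 z.2
          positivity
      _ = _ := by
          rw [← Finset.mul_sum, Fintype.sum_prod_type]
  have hS : 0 ≤ ∑ x, ∑ y, c x y * (f y - f x) ^ 2 :=
    Finset.sum_nonneg fun x _ => Finset.sum_nonneg fun y _ => mul_nonneg (hc x y) (sq_nonneg _)
  calc _ ≤ _ := h1
    _ ≤ (q'.length : ℝ) * (ρ * ∑ x, ∑ y, c x y * (f y - f x) ^ 2) :=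
        mul_le_mul_of_nonneg_left h2 (by positivity)
    _ ≤ (l : ℝ) * (ρ * ∑ x, ∑ y, c x y * (f y - f x) ^ 2) :=
        mul_le_mul_of_nonneg_right (by exact_mod_cast hl) (by positivity)
    _ = _ := by ring

theorem dr_energy (G : SimpleGraph (Fin N)) (θ : ℝ) (W : Fin N → Fin N → ℝ)
    (hs : ∀ i j, W i j = W j i) :
    ∑ i, ∑ j, W i j * dr G θ W i j
      = - ∑ j, ∑ i, ∑ k, cd G θ i k * (W k j - W i j) ^ 2 := by
  have key : ∀ j, ∑ i, ∑ k, W i j * (cd G θ i k * (W k j - W i j))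
      = - (1 / 2) * ∑ i, ∑ k, cd G θ i k * (W k j - W i j) ^ 2 := by
    intro j
    have h1 : ∑ i, ∑ k, W i j * (cd G θ i k * (W k j - W i j))
        = ∑ i, ∑ k, W k j * (cd G θ i k * (W i j - W k j)) := by
      rw [Finset.sum_comm]
      refine Finset.sum_congr rfl fun i _ => Finset.sum_congr rfl fun k _ => ?_
      rw [cd_symm]
    have h2 : ∑ i, ∑ k, W i j * (cd G θ i k * (W k j - W i j))
        + ∑ i, ∑ k, W k j * (cd G θ i k * (W i j - W k j))
        = - ∑ i, ∑ k, cd G θ i k * (W k j - W i j) ^ 2 := by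
      rw [← Finset.sum_add_distrib, ← Finset.sum_neg_distrib]
      refine Finset.sum_congr rfl fun i _ => ?_
      rw [← Finset.sum_add_distrib, ← Finset.sum_neg_distrib]
      refine Finset.sum_congr rfl fun k _ => ?_
      ring
    linarith
  have h3 : ∑ i, ∑ j, W i j * dr G θ W i j
      = ∑ j, ∑ i, ∑ k, W i j * (cd G θ i k * (W k j - W i j))
        + ∑ j, ∑ i, ∑ k, W i j * (cd G θ i k * (W k j - W i j)) := by
    unfold dr
    simp only [mul_add, Finset.mul_sum, Finset.sum_add_distrib]
    congr 1
    · rw [Finset.sum_comm]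
    · refine Finset.sum_congr rfl fun i _ => Finset.sum_congr rfl fun j _ =>
        Finset.sum_congr rfl fun k _ => ?_
      rw [hs i j, hs i k]
  rw [h3, Finset.sum_congr rfl fun j _ => key j, ← Finset.mul_sum]
  ring

theorem dr_sum (G : SimpleGraph (Fin N)) (θ : ℝ) (W : Fin N → Fin N → ℝ) :
    ∑ i, ∑ j, dr G θ W i j = 0 := by
  have key : ∀ g : Fin N → ℝ, ∑ i, ∑ k, cd G θ i k * (g k - g i) = 0 := by
    intro g
    have h1 : ∑ i, ∑ k, cd G θ i k * (g k - g i) = ∑ i, ∑ k, cd G θ i k * (g i - g k) := by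
      rw [Finset.sum_comm]
      refine Finset.sum_congr rfl fun i _ => Finset.sum_congr rfl fun k _ => ?_
      rw [cd_symm]
    have h2 : ∑ i, ∑ k, cd G θ i k * (g k - g i) = - ∑ i, ∑ k, cd G θ i k * (g i - g k) := by
      rw [← Finset.sum_neg_distrib]
      refine Finset.sum_congr rfl fun i _ => ?_
      rw [← Finset.sum_neg_distrib]
      refine Finset.sum_congr rfl fun k _ => ?_
      ring
    linarith
  unfold dr
  simp only [Finset.sum_add_distrib]
  rw [Finset.sum_comm, Finset.sum_eq_zero fun j _ => key (fun i => W i j), zero_add]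
  exact Finset.sum_eq_zero fun i _ => key (W i)

theorem S_deriv (G : SimpleGraph (Fin N)) (θ u t : ℝ) :
    HasDerivAt (fun t => ∑ i, ∑ j, Wt G θ u t i j ^ 2)
      (-2 * ∑ j, ∑ i, ∑ k, cd G θ i k * (Wt G θ u t k j - Wt G θ u t i j) ^ 2) t := by
  have h : HasDerivAt (fun t => ∑ i, ∑ j, Wt G θ u t i j ^ 2)
      (∑ i, ∑ j, 2 * Wt G θ u t i j * (if i = j then 0 else dr G θ (Wt G θ u t) i j)) t := by
    refine HasDerivAt.fun_sum fun i _ => HasDerivAt.fun_sum fun j _ => ?_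
    have := (Wt_deriv G θ u t i j).fun_pow 2
    simpa using this
  convert h using 1
  have h2 := dr_energy G θ (Wt G θ u t) (Wt_symm G θ u t)
  have h3 : ∑ i, ∑ j, 2 * Wt G θ u t i j * (if i = j then 0 else dr G θ (Wt G θ u t) i j)
      = 2 * ∑ i, ∑ j, Wt G θ u t i j * dr G θ (Wt G θ u t) i j := by
    rw [Finset.mul_sum]
    refine Finset.sum_congr rfl fun i _ => ?_
    rw [Finset.mul_sum]
    refine Finset.sum_congr rfl fun j _ => ?_
    split_ifs with hij
    · subst hij; rw [Wt_self]; ring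
    · ring
  rw [h3, h2]; ring

theorem S_decay (G : SimpleGraph (Fin N)) (θ : ℝ) {u : ℝ} (hu : u ∈ Set.Ioo (0:ℝ) 1)
    (H : SimpleGraph (Fin N)) (l : ℕ) (hl : 0 < l) (ρ : ℝ) (hρ : 0 < ρ)
    (hH : ∀ x y, H.Adj x y → 1 ≤ ρ * cd G θ x y) (hnear : ∀ i j, G.Reachable i j → Near H l i j)
    (hN : 0 < N) (t : ℝ) (ht : 0 ≤ t) :
    ∑ i, ∑ j, Wt G θ u t i j ^ 2 ≤ (N:ℝ) ^ 2 * Real.exp (-(2 / (N * l * ρ) * t)) := by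
  have hN' : (0:ℝ) < N := by exact_mod_cast hN
  have hl' : (0:ℝ) < l := by exact_mod_cast hl
  set lam := 2 / (N * l * ρ) with hlam
  have hlam0 : 0 < lam := by positivity
  set S := fun t => ∑ i, ∑ j, Wt G θ u t i j ^ 2 with hS
  have hP : ∀ t, lam * S t ≤
      2 * ∑ j, ∑ i, ∑ k, cd G θ i k * (Wt G θ u t k j - Wt G θ u t i j) ^ 2 := by
    intro t
    have h1 : S t ≤ ∑ j, ∑ _i : Fin N,
        (l * ρ * ∑ x, ∑ y, cd G θ x y * (Wt G θ u t y j - Wt G θ u t x j) ^ 2) := by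
      rw [hS]
      beta_reduce
      rw [Finset.sum_comm]
      refine Finset.sum_le_sum fun j _ => Finset.sum_le_sum fun i _ => ?_
      by_cases hr : G.Reachable i j
      · have := near_poincare H (cd G θ) (cd_nonneg G θ) l ρ hρ.le hH (fun x => Wt G θ u t x j) i j
          (hnear i j hr)
        simpa only [Wt_self, sub_zero] using this
      · rw [Wt_unreach G θ u t i j hr, zero_pow two_ne_zero]
        have : 0 ≤ ∑ x, ∑ y, cd G θ x y * (Wt G θ u t y j - Wt G θ u t x j) ^ 2 :=
          Finset.sum_nonneg fun x _ => Finset.sum_nonneg fun y _ =>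
            mul_nonneg (cd_nonneg G θ x y) (sq_nonneg _)
        positivity
    simp only [Finset.sum_const, Finset.card_univ, Fintype.card_fin, nsmul_eq_mul] at h1
    rw [← Finset.mul_sum, ← Finset.mul_sum, ← mul_assoc, ← mul_assoc] at h1
    rw [hlam, div_mul_eq_mul_div, div_le_iff₀ (by positivity)]
    linarith
  have hd : ∀ t, HasDerivAt (fun t => S t * Real.exp (lam * t))
      ((-2 * ∑ j, ∑ i, ∑ k, cd G θ i k * (Wt G θ u t k j - Wt G θ u t i j) ^ 2) * Real.exp (lam * t)
        + S t * (Real.exp (lam * t) * lam)) t := by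
    intro t
    exact (S_deriv G θ u t).fun_mul (by simpa using ((hasDerivAt_id t).const_mul lam).exp)
  have hanti : Antitone (fun t => S t * Real.exp (lam * t)) := by
    refine antitone_of_deriv_nonpos (fun t => (hd t).differentiableAt) fun t => ?_
    rw [(hd t).deriv]
    have := hP t
    have := Real.exp_pos (lam * t)
    nlinarith
  have h0 := hanti ht
  simp only [mul_zero, Real.exp_zero, mul_one] at h0
  have hS0 : S 0 ≤ (N:ℝ) ^ 2 := by
    calc S 0 ≤ ∑ i : Fin N, ∑ j : Fin N, (1:ℝ) := by
          refine Finset.sum_le_sum fun i _ => Finset.sum_le_sum fun j _ => ?_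
          have h1 := Wt_nonneg G θ hu (le_refl (0:ℝ)) i j
          have h2 := Wt_le_one G θ hu (le_refl (0:ℝ)) i j
          nlinarith
      _ = _ := by simp [sq]
  show S t ≤ _
  rw [Real.exp_neg, ← div_eq_mul_inv, le_div_iff₀ (Real.exp_pos _)]
  linarith

/-- non-consensus probability -/
theorem noncons_eq (G : SimpleGraph (Fin N)) (θ u t : ℝ) :
    1 - probConsensusAt G θ u t =
      sg (voterQ G θ) (muU u) t (fun η => if η ∈ consensusStates G then 0 else 1) := by
  have h : probConsensusAt G θ u t
      = sg (voterQ G θ) (muU u) t (fun η => if η ∈ consensusStates G then 1 else 0) := rfl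
  have h1 := sg_one _ (voterQ_one G θ) _ (muU_sum (N := N) u) t
  rw [h]
  refine (congrArg (fun z => z - _) h1.symm).trans ?_
  rw [← sg_sub]
  congr 1
  funext η
  split_ifs <;> norm_num

theorem noncons_cont (G : SimpleGraph (Fin N)) (θ u : ℝ) :
    Continuous (fun t => 1 - probConsensusAt G θ u t) := by
  have : (fun t => 1 - probConsensusAt G θ u t) = fun t =>
      sg (voterQ G θ) (muU u) t (fun η => if η ∈ consensusStates G then 0 else 1) := by
    funext t; exact noncons_eq G θ u t
  rw [this]
  exact continuous_iff_continuousAt.2 fun t => (sg_deriv _ _ t _).continuousAt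

theorem noncons_nonneg (G : SimpleGraph (Fin N)) (θ : ℝ) {u : ℝ} (hu : u ∈ Set.Ioo (0:ℝ) 1) {t : ℝ}
    (ht : 0 ≤ t) : 0 ≤ 1 - probConsensusAt G θ u t := by
  rw [noncons_eq]
  have := sg_mono (voterQ G θ) (voterQ_off G θ) (muU u) (muU_nonneg hu) t ht (fun _ => 0)
    (fun η => if η ∈ consensusStates G then 0 else 1) (by intro a; split_ifs <;> norm_num)
  rwa [sg_nul] at this

theorem noncons_le_one (G : SimpleGraph (Fin N)) (θ : ℝ) {u : ℝ} (hu : u ∈ Set.Ioo (0:ℝ) 1) {t : ℝ}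
    (ht : 0 ≤ t) : 1 - probConsensusAt G θ u t ≤ 1 := by
  rw [noncons_eq]
  have := sg_mono (voterQ G θ) (voterQ_off G θ) (muU u) (muU_nonneg hu) t ht
    (fun η => if η ∈ consensusStates G then 0 else 1) (fun _ => 1)
    (by intro a; split_ifs <;> norm_num)
  rwa [sg_one _ (voterQ_one G θ) _ (muU_sum u)] at this

theorem noncons_le_sum (G : SimpleGraph (Fin N)) (θ : ℝ) {u : ℝ} (hu : u ∈ Set.Ioo (0:ℝ) 1) {t : ℝ}
    (ht : 0 ≤ t) : 1 - probConsensusAt G θ u t ≤ ∑ i, ∑ j, Wt G θ u t i j := by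
  rw [noncons_eq]
  unfold Wt
  simp only [← sg_sum]
  refine sg_mono (voterQ G θ) (voterQ_off G θ) (muU u) (muU_nonneg hu) t ht _ _ ?_
  intro η
  have hnn : ∀ i, 0 ≤ ∑ j, Dis G i j η := fun i => Finset.sum_nonneg fun j _ => Dis_nonneg G i j η
  split_ifs with h
  · exact Finset.sum_nonneg fun i _ => hnn i
  · simp only [consensusStates, Set.mem_ofPred_eq, not_forall] at h
    obtain ⟨i, j, hr, hne⟩ := h
    have h1 : Dis G i j η = 1 := by unfold Dis; exact if_pos ⟨hr, hne⟩
    calc (1:ℝ) = Dis G i j η := h1.symm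
      _ ≤ ∑ j, Dis G i j η := Finset.single_le_sum (f := fun j => Dis G i j η)
          (fun j _ => Dis_nonneg G i j η) (Finset.mem_univ j)
      _ ≤ _ := Finset.single_le_sum (f := fun i => ∑ j, Dis G i j η)
          (fun i _ => hnn i) (Finset.mem_univ i)

theorem sum_le_noncons (G : SimpleGraph (Fin N)) (θ : ℝ) {u : ℝ} (hu : u ∈ Set.Ioo (0:ℝ) 1) {t : ℝ}
    (ht : 0 ≤ t) : ∑ i, ∑ j, Wt G θ u t i j ≤ (N:ℝ) ^ 2 * (1 - probConsensusAt G θ u t) := by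
  rw [noncons_eq, ← sg_cmul]
  unfold Wt
  simp only [← sg_sum]
  refine sg_mono (voterQ G θ) (voterQ_off G θ) (muU u) (muU_nonneg hu) t ht _ _ ?_
  intro η
  split_ifs with h
  · rw [mul_zero]
    refine le_of_eq (Finset.sum_eq_zero fun i _ => Finset.sum_eq_zero fun j _ => ?_)
    unfold Dis
    rw [if_neg]
    rintro ⟨hr, hne⟩
    exact hne (h i j hr)
  · calc _ ≤ ∑ i : Fin N, ∑ j : Fin N, (1:ℝ) :=
        Finset.sum_le_sum fun i _ => Finset.sum_le_sum fun j _ => Dis_le_one G i j η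
      _ = _ := by simp [sq]

theorem cons_upper (G : SimpleGraph (Fin N)) (θ : ℝ) {u : ℝ} (hu : u ∈ Set.Ioo (0:ℝ) 1)
    (H : SimpleGraph (Fin N)) (l : ℕ) (hl : 0 < l) (ρ : ℝ) (hρ : 0 < ρ)
    (hH : ∀ x y, H.Adj x y → 1 ≤ ρ * cd G θ x y) (hnear : ∀ i j, G.Reachable i j → Near H l i j)
    (hN : 0 < N) (hlg : 1 ≤ Real.log N) :
    MeasureTheory.IntegrableOn (fun t => 1 - probConsensusAt G θ u t) (Set.Ioi 0) ∧
    expectedConsensusTime G θ u ≤ Real.exp 2 * (N * l * ρ * Real.log N) := by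
  have hN' : (0:ℝ) < N := by exact_mod_cast hN
  have hl' : (0:ℝ) < l := by exact_mod_cast hl
  set lg := Real.log N with hlgd
  have hlg0 : 0 < lg := by linarith
  set a := 1 / (N * l * ρ * lg) with ha
  have ha0 : 0 < a := by positivity
  have hb : ∀ t, 0 ≤ t → 1 - probConsensusAt G θ u t ≤ Real.exp 2 * Real.exp (-a * t) := by
    intro t ht
    have h0 := noncons_nonneg G θ hu ht
    have h1 := noncons_le_one G θ hu ht
    have h2 := noncons_le_sum G θ hu ht
    have h3 := S_decay G θ hu H l hl ρ hρ hH hnear hN t ht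
    set y := 1 - probConsensusAt G θ u t
    have h4 : y ^ 2 ≤ (N:ℝ) ^ 2 * ((N:ℝ) ^ 2 * Real.exp (-(2 / (N * l * ρ) * t))) := by
      calc y ^ 2 ≤ (∑ i, ∑ j, Wt G θ u t i j) ^ 2 := pow_le_pow_left₀ h0 h2 2
        _ ≤ (N:ℝ) * ∑ i, (∑ j, Wt G θ u t i j) ^ 2 := by
            have := sq_sum_le_card_mul_sum_sq (s := (Finset.univ : Finset (Fin N)))
              (f := fun i => ∑ j, Wt G θ u t i j)
            simpa using this
        _ ≤ (N:ℝ) * ∑ i, ((N:ℝ) * ∑ j, Wt G θ u t i j ^ 2) := by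
            refine mul_le_mul_of_nonneg_left (Finset.sum_le_sum fun i _ => ?_) hN'.le
            have := sq_sum_le_card_mul_sum_sq (s := (Finset.univ : Finset (Fin N)))
              (f := fun j => Wt G θ u t i j)
            simpa using this
        _ = (N:ℝ) ^ 2 * ∑ i, ∑ j, Wt G θ u t i j ^ 2 := by rw [← Finset.mul_sum]; ring
        _ ≤ _ := mul_le_mul_of_nonneg_left h3 (by positivity)
    have h5 : (N:ℝ) ^ 2 * ((N:ℝ) ^ 2 * Real.exp (-(2 / (N * l * ρ) * t)))
        = Real.exp (4 * lg - 2 * a * lg * t) := by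
      have e1 : (N:ℝ) = Real.exp lg := (Real.exp_log hN').symm
      have e2 : 2 / (N * l * ρ) * t = 2 * a * lg * t := by
        rw [ha]; field_simp
      rw [e2]
      have e3 : (N:ℝ) ^ 2 = Real.exp (2 * lg) := by
        rw [e1, ← Real.exp_nat_mul]; norm_num
      rw [e3, ← Real.exp_add, ← Real.exp_add]
      congr 1; ring
    rw [h5] at h4
    have h6 : y ^ 2 ≤ Real.exp (4 - 2 * a * t) := by
      rcases le_total 0 (4 - 2 * a * t) with h | h
      · calc y ^ 2 ≤ 1 := by nlinarith
          _ ≤ _ := Real.one_le_exp h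
      · refine h4.trans (Real.exp_le_exp.2 ?_)
        nlinarith
    have h7 : Real.exp (4 - 2 * a * t) = (Real.exp 2 * Real.exp (-a * t)) ^ 2 := by
      rw [← Real.exp_add, ← Real.exp_nat_mul]; congr 1; push_cast; ring
    rw [h7] at h6
    exact le_of_sq_le_sq h6 (by positivity)
  have hIntg : MeasureTheory.IntegrableOn (fun t => Real.exp 2 * Real.exp (-a * t)) (Set.Ioi 0) :=
    (integrableOn_exp_mul_Ioi (by linarith) 0).const_mul _
  constructor
  · refine MeasureTheory.Integrable.mono' hIntg
      (noncons_cont G θ u).aestronglyMeasurable ?_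
    refine (MeasureTheory.ae_restrict_mem measurableSet_Ioi).mono fun t ht => ?_
    rw [Real.norm_of_nonneg (noncons_nonneg G θ hu (le_of_lt ht))]
    exact hb t (le_of_lt ht)
  · unfold expectedConsensusTime
    refine (MeasureTheory.integral_mono_of_nonneg
      ((MeasureTheory.ae_restrict_mem measurableSet_Ioi).mono fun t ht =>
        noncons_nonneg G θ hu (le_of_lt ht)) hIntg
      ((MeasureTheory.ae_restrict_mem measurableSet_Ioi).mono fun t ht => hb t (le_of_lt ht))).trans ?_
    rw [MeasureTheory.integral_const_mul, integral_exp_mul_Ioi (by linarith)]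
    rw [mul_zero, Real.exp_zero, ha]
    refine le_of_eq ?_
    field_simp

theorem cd_sum (G : SimpleGraph (Fin N)) (θ : ℝ) :
    ∑ i, ∑ k, cd G θ i k = ∑ i, aw G θ i * G.degree i := by
  have h1 : ∀ i, ∑ k, (if G.Adj i k then aw G θ i else 0) = aw G θ i * G.degree i := by
    intro i
    rw [← Finset.sum_filter, Finset.sum_const, nsmul_eq_mul, ← SimpleGraph.neighborFinset_eq_filter,
      SimpleGraph.card_neighborFinset_eq_degree, mul_comm]
  have h2 : ∑ i, ∑ k, cd G θ i k = (1 / 2) * ∑ i, ∑ k, (if G.Adj i k then aw G θ i else 0)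
      + (1 / 2) * ∑ i, ∑ k, (if G.Adj i k then aw G θ k else 0) := by
    rw [Finset.mul_sum, Finset.mul_sum, ← Finset.sum_add_distrib]
    refine Finset.sum_congr rfl fun i _ => ?_
    rw [Finset.mul_sum, Finset.mul_sum, ← Finset.sum_add_distrib]
    refine Finset.sum_congr rfl fun k _ => ?_
    unfold cd
    split_ifs <;> ring
  have h3 : ∑ i, ∑ k, (if G.Adj i k then aw G θ k else 0)
      = ∑ i, ∑ k, (if G.Adj i k then aw G θ i else 0) := by
    rw [Finset.sum_comm]
    simp only [G.adj_comm]
  rw [h2, h3, Finset.sum_congr rfl fun i _ => h1 i]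
  ring

theorem aw_deg_le (G : SimpleGraph (Fin N)) {θ : ℝ} (hθ : θ ≤ 2) (i : Fin N) :
    aw G θ i * G.degree i ≤ (G.degree i : ℝ) ^ 2 := by
  unfold aw
  rcases Nat.eq_zero_or_pos (G.degree i) with h | h
  · rw [h]; simp
  · have h1 : (1:ℝ) ≤ G.degree i := by exact_mod_cast h
    rw [mul_assoc, inv_mul_cancel₀ (by positivity), mul_one]
    calc (G.degree i : ℝ) ^ θ ≤ (G.degree i : ℝ) ^ (2:ℝ) := Real.rpow_le_rpow_of_exponent_le h1 hθ
      _ = _ := by norm_cast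

theorem V_lower (G : SimpleGraph (Fin N)) {θ : ℝ} (hθ : θ ≤ 2) {u : ℝ} (hu : u ∈ Set.Ioo (0:ℝ) 1)
    (t : ℝ) (ht : 0 ≤ t) : ∑ i, ∑ j, Wt G θ u 0 i j - 2 * (∑ i, (G.degree i : ℝ) ^ 2) * t
      ≤ ∑ i, ∑ j, Wt G θ u t i j := by
  set Sg := ∑ i, (G.degree i : ℝ) ^ 2
  have hd : ∀ t, HasDerivAt (fun t => ∑ i, ∑ j, Wt G θ u t i j + 2 * Sg * t)
      (∑ i, ∑ j, (if i = j then 0 else dr G θ (Wt G θ u t) i j) + 2 * Sg) t := by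
    intro t
    refine HasDerivAt.add ?_ (by simpa using (hasDerivAt_id t).const_mul (2 * Sg))
    exact HasDerivAt.fun_sum fun i _ => HasDerivAt.fun_sum fun j _ => Wt_deriv G θ u t i j
  have hm : MonotoneOn (fun t => ∑ i, ∑ j, Wt G θ u t i j + 2 * Sg * t) (Set.Ici 0) := by
    refine monotoneOn_of_deriv_nonneg (convex_Ici 0)
      (fun t _ => (hd t).continuousAt.continuousWithinAt)
      (fun t _ => (hd t).differentiableAt.differentiableWithinAt) ?_
    intro t ht
    rw [interior_Ici] at ht
    have ht' : 0 ≤ t := le_of_lt ht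
    rw [(hd t).deriv]
    have e1 : ∑ i, ∑ j, (if i = j then 0 else dr G θ (Wt G θ u t) i j)
        = ∑ i, ∑ j, dr G θ (Wt G θ u t) i j - ∑ i, dr G θ (Wt G θ u t) i i := by
      rw [← Finset.sum_sub_distrib]
      refine Finset.sum_congr rfl fun i _ => ?_
      have : dr G θ (Wt G θ u t) i i = ∑ j, if i = j then dr G θ (Wt G θ u t) i j else 0 := by simp
      rw [this, ← Finset.sum_sub_distrib]
      refine Finset.sum_congr rfl fun j _ => ?_
      split_ifs <;> ring
    have e2 : ∑ i, dr G θ (Wt G θ u t) i i ≤ 2 * Sg := by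
      calc ∑ i, dr G θ (Wt G θ u t) i i ≤ ∑ i, (2 * ∑ k, cd G θ i k) := by
            refine Finset.sum_le_sum fun i _ => ?_
            unfold dr
            rw [← Finset.sum_add_distrib, Finset.mul_sum]
            refine Finset.sum_le_sum fun k _ => ?_
            rw [Wt_self, sub_zero, sub_zero, Wt_symm G θ u t k i]
            have h1 := Wt_le_one G θ hu ht' i k
            have h2 := cd_nonneg G θ i k
            nlinarith
        _ = 2 * ∑ i, ∑ k, cd G θ i k := by rw [Finset.mul_sum]
        _ ≤ 2 * Sg := by
            rw [cd_sum]
            exact mul_le_mul_of_nonneg_left (Finset.sum_le_sum fun i _ => aw_deg_le G hθ i)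
              (by norm_num)
    rw [e1, dr_sum]
    linarith
  have := hm (Set.mem_Ici.2 le_rfl) (Set.mem_Ici.2 ht) ht
  simp only [mul_zero, add_zero] at this
  linarith

theorem V_zero (G : SimpleGraph (Fin N)) (θ : ℝ) {u : ℝ} (hu : u ∈ Set.Ioo (0:ℝ) 1) (s : Fin N)
    (n : ℕ) (hn : n = (Finset.univ.filter fun x => G.Reachable s x).card) :
    u * (1 - u) * (n * (n - 1)) ≤ ∑ i, ∑ j, Wt G θ u 0 i j := by
  set K := Finset.univ.filter fun x => G.Reachable s x with hK
  have h1 : ∀ i ∈ K, ∀ j ∈ K, i ≠ j → u * (1 - u) ≤ Wt G θ u 0 i j := by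
    intro i hi j hj hij
    unfold Wt
    rw [sg_zero]
    refine (muU_pair hu i j hij).trans (le_of_eq (Finset.sum_congr rfl fun η _ => ?_))
    have hr : G.Reachable i j := by
      simp only [hK, Finset.mem_filter, Finset.mem_univ, true_and] at hi hj
      exact hi.symm.trans hj
    unfold Dis
    simp only [hr, true_and]
  have h0 : ∀ i j, 0 ≤ Wt G θ u 0 i j := Wt_nonneg G θ hu le_rfl
  calc u * (1 - u) * (n * (n - 1)) = ∑ i ∈ K, ∑ j ∈ K.erase i, u * (1 - u) := by
        have : ∀ i ∈ K, ∑ j ∈ K.erase i, u * (1 - u) = ((n:ℝ) - 1) * (u * (1 - u)) := by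
          intro i hi
          rw [Finset.sum_const, nsmul_eq_mul, Finset.card_erase_of_mem hi, ← hn,
            Nat.cast_pred (by rw [hn]; exact Finset.card_pos.2 ⟨i, hi⟩)]
        rw [Finset.sum_congr rfl this, Finset.sum_const, nsmul_eq_mul, ← hn]
        ring
    _ ≤ ∑ i ∈ K, ∑ j ∈ K.erase i, Wt G θ u 0 i j := by
        refine Finset.sum_le_sum fun i hi => Finset.sum_le_sum fun j hj => ?_
        exact h1 i hi j (Finset.mem_of_mem_erase hj) (Finset.ne_of_mem_erase hj).symm
    _ ≤ ∑ i ∈ K, ∑ j, Wt G θ u 0 i j :=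
        Finset.sum_le_sum fun i _ => Finset.sum_le_sum_of_subset_of_nonneg (Finset.subset_univ _)
          fun j _ _ => h0 i j
    _ ≤ _ := Finset.sum_le_sum_of_subset_of_nonneg (Finset.subset_univ _)
          fun i _ _ => Finset.sum_nonneg fun j _ => h0 i j

theorem cons_lower (G : SimpleGraph (Fin N)) {θ : ℝ} (hθ : θ ≤ 2) {u : ℝ} (hu : u ∈ Set.Ioo (0:ℝ) 1)
    (hIntg : MeasureTheory.IntegrableOn (fun t => 1 - probConsensusAt G θ u t) (Set.Ioi 0))
    (hN : 0 < N) (Sg : ℝ) (hSg : 0 < Sg) (hS : ∑ i, (G.degree i : ℝ) ^ 2 ≤ Sg)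
    (V : ℝ) (hV0 : 0 ≤ V) (hV : V ≤ ∑ i, ∑ j, Wt G θ u 0 i j) :
    V ^ 2 / (8 * Sg * (N:ℝ) ^ 2) ≤ expectedConsensusTime G θ u := by
  have hN' : (0:ℝ) < N := by exact_mod_cast hN
  set t0 := V / (4 * Sg) with ht0
  have ht00 : 0 ≤ t0 := by positivity
  have h1 : ∀ t ∈ Set.Ioc 0 t0, V / (2 * (N:ℝ) ^ 2) ≤ 1 - probConsensusAt G θ u t := by
    intro t ht
    have h2 := V_lower G hθ hu t ht.1.le
    have h3 := sum_le_noncons G θ hu ht.1.le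
    have h4 : 2 * (∑ i, (G.degree i : ℝ) ^ 2) * t ≤ V / 2 := by
      calc 2 * (∑ i, (G.degree i : ℝ) ^ 2) * t ≤ 2 * Sg * t0 := by
            have := ht.1; have := ht.2; gcongr
        _ = V / 2 := by rw [ht0]; field_simp; ring
    rw [div_le_iff₀ (by positivity)]
    nlinarith
  unfold expectedConsensusTime
  calc V ^ 2 / (8 * Sg * (N:ℝ) ^ 2) = ∫ t in Set.Ioc 0 t0, V / (2 * (N:ℝ) ^ 2) := by
        rw [MeasureTheory.setIntegral_const, smul_eq_mul, MeasureTheory.measureReal_def,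
          Real.volume_Ioc, sub_zero, ENNReal.toReal_ofReal ht00, ht0]
        field_simp; ring
    _ ≤ ∫ t in Set.Ioc 0 t0, (1 - probConsensusAt G θ u t) := by
        refine MeasureTheory.setIntegral_mono_on ?_ (hIntg.mono_set Set.Ioc_subset_Ioi_self)
          measurableSet_Ioc h1
        exact MeasureTheory.integrableOn_const (by simp)
    _ ≤ _ := by
        refine MeasureTheory.setIntegral_mono_set hIntg ?_ ?_
        · exact (MeasureTheory.ae_restrict_mem measurableSet_Ioi).mono fun t ht =>
            noncons_nonneg G θ hu (le_of_lt ht)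
        · exact Set.Ioc_subset_Ioi_self.eventuallyLE

end DV

namespace DV

theorem exp_neg_le_quad {x : ℝ} (hx : 0 ≤ x) : Real.exp (-x) ≤ 1 - x + x ^ 2 / 2 := by
  have h := Real.quadratic_le_exp_of_nonneg hx
  have h2 : 0 < 1 - x + x ^ 2 / 2 := by nlinarith [sq_nonneg (x - 1)]
  rw [Real.exp_neg, inv_eq_one_div, div_le_iff₀ (Real.exp_pos x)]
  have h3 : (1 - x + x ^ 2 / 2) * (1 + x + x ^ 2 / 2) ≤ (1 - x + x ^ 2 / 2) * Real.exp x :=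
    mul_le_mul_of_nonneg_left h h2.le
  nlinarith [sq_nonneg (x ^ 2)]

theorem one_sub_exp_ge {x η : ℝ} (hx : 0 ≤ x) (h : x ≤ 2 * η) : x * (1 - η) ≤ 1 - Real.exp (-x) := by
  have := exp_neg_le_quad hx
  nlinarith

theorem hstep_gen {N : ℕ} (b R B s0 δ η kmax : ℝ) (w om : Fin N → ℝ) (M : Finset (Fin N))
    (hb : 0 < b) (hη0 : 0 ≤ η) (hη : η ≤ 1) (hR : 0 ≤ R) (hom : ∀ i, 1 ≤ om i) (homw : ∀ i, om i ≤ w i)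
    (homR : ∀ i ∈ M, om i ≤ R) (hBR : b * B * R ≤ 2 * η) (hsR : s0 * R ≤ 2 * η)
    (hsup : 1 + δ ≤ (1 - η) ^ 2 * (b * ∑ i ∈ M, om i ^ 2 - b * R ^ 2 * kmax))
    (F U : Finset (Fin N)) (s : ℝ) (hUM : U ⊆ M) (hW : ∑ i ∈ F, om i < B)
    (hk : ((M \ U).card : ℝ) ≤ kmax) (hs : 0 ≤ s) (hs0 : s ≤ s0) :
    ∏ j ∈ U, (∏ i ∈ F, (1 - (1 - Real.exp (-(b * w i * w j))))
        + (1 - ∏ i ∈ F, (1 - (1 - Real.exp (-(b * w i * w j))))) * Real.exp (-(s * om j)))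
      ≤ Real.exp (-(s * (1 + δ) * ∑ i ∈ F, om i)) := by
  set W := ∑ i ∈ F, om i with hWd
  have hW0 : 0 ≤ W := Finset.sum_nonneg fun i _ => by linarith [hom i]
  have hfac : ∀ j ∈ U, (∏ i ∈ F, (1 - (1 - Real.exp (-(b * w i * w j))))
        + (1 - ∏ i ∈ F, (1 - (1 - Real.exp (-(b * w i * w j))))) * Real.exp (-(s * om j)))
      ≤ Real.exp (-((1 - η) ^ 2 * b * W * s * om j ^ 2)) := by
    intro j hj
    have hoj := hom j
    have hjR := homR j (hUM hj)
    have hq : ∏ i ∈ F, (1 - (1 - Real.exp (-(b * w i * w j)))) ≤ Real.exp (-(b * W * om j)) := by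
      simp only [sub_sub_cancel]
      rw [← Real.exp_sum, Real.exp_le_exp, Finset.sum_neg_distrib, neg_le_neg_iff, hWd,
        Finset.mul_sum, Finset.sum_mul]
      refine Finset.sum_le_sum fun i _ => ?_
      have := hom i; have := homw i; have := homw j
      have h0 : 0 ≤ om i := by linarith
      have h1 : 0 ≤ om j := by linarith
      have h2 : 0 ≤ w i := by linarith
      gcongr
    set q := ∏ i ∈ F, (1 - (1 - Real.exp (-(b * w i * w j))))
    have hx0 : 0 ≤ b * W * om j := by positivity
    have hB0 : 0 ≤ B := hW0.trans hW.le
    have hx : b * W * om j ≤ 2 * η := by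
      calc b * W * om j ≤ b * B * R := by gcongr
        _ ≤ _ := hBR
    have hy0 : 0 ≤ s * om j := by positivity
    have hy : s * om j ≤ 2 * η := by
      calc s * om j ≤ s0 * R := by
            have : 0 ≤ s0 := hs.trans hs0
            gcongr
        _ ≤ _ := hsR
    have h1 := one_sub_exp_ge hx0 hx
    have h2 := one_sub_exp_ge hy0 hy
    have h3 : (b * W * om j * (1 - η)) * (s * om j * (1 - η))
        ≤ (1 - q) * (1 - Real.exp (-(s * om j))) := by
      have : 0 ≤ 1 - η := by linarith
      refine mul_le_mul (by linarith) h2 (by positivity) ?_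
      have : 0 ≤ b * W * om j * (1 - η) := by positivity
      linarith
    have h4 := Real.add_one_le_exp (-((1 - η) ^ 2 * b * W * s * om j ^ 2))
    nlinarith
  have hnn : ∀ j ∈ U, 0 ≤ (∏ i ∈ F, (1 - (1 - Real.exp (-(b * w i * w j))))
        + (1 - ∏ i ∈ F, (1 - (1 - Real.exp (-(b * w i * w j))))) * Real.exp (-(s * om j))) := by
    intro j _
    have h0 : 0 ≤ ∏ i ∈ F, (1 - (1 - Real.exp (-(b * w i * w j)))) :=
      Finset.prod_nonneg fun i _ => by rw [sub_sub_cancel]; positivity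
    have h1 : ∏ i ∈ F, (1 - (1 - Real.exp (-(b * w i * w j)))) ≤ 1 := by
      refine Finset.prod_le_one (fun i _ => by rw [sub_sub_cancel]; positivity) fun i _ => ?_
      rw [sub_sub_cancel, Real.exp_le_one_iff]
      have := hom i; have := homw i; have := homw j; have := hom j
      have h1 : 0 ≤ w j := by linarith
      have h2 : 0 ≤ w i := by linarith
      have : 0 ≤ b * w i * w j := by positivity
      linarith
    have := Real.exp_pos (-(s * om j))
    nlinarith
  refine (Finset.prod_le_prod hnn hfac).trans ?_
  rw [← Real.exp_sum, Real.exp_le_exp, Finset.sum_neg_distrib, neg_le_neg_iff, ← Finset.mul_sum]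
  have hsplit : ∑ i ∈ M, om i ^ 2 ≤ ∑ i ∈ U, om i ^ 2 + R ^ 2 * kmax := by
    rw [← Finset.sum_sdiff hUM]
    have : ∑ i ∈ M \ U, om i ^ 2 ≤ R ^ 2 * kmax := by
      calc ∑ i ∈ M \ U, om i ^ 2 ≤ ∑ i ∈ M \ U, R ^ 2 := by
            refine Finset.sum_le_sum fun i hi => ?_
            have := hom i
            exact pow_le_pow_left₀ (by linarith) (homR i (Finset.sdiff_subset hi)) 2
        _ = R ^ 2 * ((M \ U).card : ℝ) := by rw [Finset.sum_const, nsmul_eq_mul]; ring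
        _ ≤ _ := by gcongr
    linarith
  have h5 : 1 + δ ≤ (1 - η) ^ 2 * (b * ∑ i ∈ U, om i ^ 2) := by
    refine hsup.trans (mul_le_mul_of_nonneg_left ?_ (sq_nonneg _))
    nlinarith
  have h6 : 0 ≤ s * W := by positivity
  nlinarith

/-- weights -/
def wt (γ : ℝ) (N : ℕ) (i : Fin N) : ℝ := ((N:ℝ) / ((i:ℕ) + 1)) ^ γ

def pp (β γ : ℝ) (N : ℕ) (i j : Fin N) : ℝ := 1 - Real.exp (-(β / N * wt γ N i * wt γ N j))

theorem base_ge {N : ℕ} (i : Fin N) : (1:ℝ) ≤ (N:ℝ) / ((i:ℕ) + 1) := by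
  rw [le_div_iff₀ (by positivity), one_mul]
  exact_mod_cast i.2

theorem wt_ge_one {γ : ℝ} (hγ : 0 ≤ γ) {N : ℕ} (i : Fin N) : 1 ≤ wt γ N i :=
  Real.one_le_rpow (base_ge i) hγ

theorem wt_le {γ : ℝ} (hγ : γ ≤ 1 / 2) {N : ℕ} (i : Fin N) : wt γ N i ≤ (N:ℝ) / ((i:ℕ) + 1) := by
  unfold wt
  calc _ ≤ ((N:ℝ) / ((i:ℕ) + 1)) ^ (1:ℝ) :=
        Real.rpow_le_rpow_of_exponent_le (base_ge i) (by linarith)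
    _ = _ := Real.rpow_one _

theorem wt_sq_le {γ : ℝ} (hγ : γ ≤ 1 / 2) {N : ℕ} (i : Fin N) :
    wt γ N i ^ 2 ≤ (N:ℝ) / ((i:ℕ) + 1) := by
  unfold wt
  have h0 : (0:ℝ) ≤ (N:ℝ) / ((i:ℕ) + 1) := by positivity
  rw [← Real.rpow_natCast, ← Real.rpow_mul h0]
  calc _ ≤ ((N:ℝ) / ((i:ℕ) + 1)) ^ (1:ℝ) :=
        Real.rpow_le_rpow_of_exponent_le (base_ge i) (by push_cast; linarith)
    _ = _ := Real.rpow_one _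

theorem wt_sq_le_N {γ : ℝ} (hγ : γ ≤ 1 / 2) {N : ℕ} (i : Fin N) : wt γ N i ^ 2 ≤ N := by
  refine (wt_sq_le hγ i).trans (div_le_self (by positivity) ?_)
  have : (0:ℝ) ≤ (i:ℕ) := by positivity
  linarith

theorem sum_base (N : ℕ) : ∑ i : Fin N, (N:ℝ) / ((i:ℕ) + 1) ≤ N * (1 + Real.log N) := by
  have h := harmonic_le_one_add_log N
  have e : ((harmonic N : ℚ) : ℝ) = ∑ i : Fin N, (1:ℝ) / ((i:ℕ) + 1) := by
    rw [Fin.sum_univ_eq_sum_range (fun i => (1:ℝ) / ((i:ℝ) + 1)) N]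
    simp [harmonic]
  rw [e] at h
  calc _ = N * ∑ i : Fin N, (1:ℝ) / ((i:ℕ) + 1) := by
        rw [Finset.mul_sum]
        refine Finset.sum_congr rfl fun i _ => ?_
        ring
    _ ≤ _ := mul_le_mul_of_nonneg_left h (by positivity)

theorem snrEdge_eq (β γ : ℝ) {N : ℕ} (i j : Fin N) :
    snrEdgeProb β γ N ((i:ℕ) + 1) ((j:ℕ) + 1) = pp β γ N i j := by
  unfold snrEdgeProb pp wt
  have hN : (0:ℝ) < N := by exact_mod_cast i.pos
  have hi : (0:ℝ) < (i:ℕ) + 1 := by positivity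
  have hj : (0:ℝ) < (j:ℕ) + 1 := by positivity
  rw [Real.div_rpow hN.le hi.le, Real.div_rpow hN.le hj.le]
  push_cast
  rw [Real.rpow_neg hi.le, Real.rpow_neg hj.le, Real.rpow_sub hN, Real.rpow_one, two_mul,
    Real.rpow_add hN]
  congr 3
  field_simp

theorem snrProb_eq (β γ : ℝ) (N : ℕ) (A : SimpleGraph (Fin N) → Prop) :
    snrProb β γ N A = gPr (pp β γ N) A := by
  unfold snrProb graphProb gPr gEx
  refine Finset.sum_congr rfl fun G _ => ?_
  have : graphWeight (snrEdgeProb β γ N) N G = gW (pp β γ N) G := by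
    unfold graphWeight gW
    simp only [snrEdge_eq]
  rw [this]
  by_cases h : A G <;> simp [h]

theorem pp_bounds {β γ : ℝ} (hβ : 0 < β) (hγ : 0 ≤ γ) {N : ℕ} (i j : Fin N) :
    0 ≤ pp β γ N i j ∧ pp β γ N i j ≤ 1 := by
  unfold pp
  have h1 := wt_ge_one hγ i
  have h2 := wt_ge_one hγ j
  have : 0 ≤ β / N * wt γ N i * wt γ N j := by positivity
  constructor
  · have := Real.exp_le_one_iff.2 (neg_nonpos.2 this); linarith
  · linarith [Real.exp_pos (-(β / N * wt γ N i * wt γ N j))]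

theorem pp_symm (β γ : ℝ) {N : ℕ} (i j : Fin N) : pp β γ N i j = pp β γ N j i := by
  unfold pp
  congr 3
  ring

theorem pp_le (β γ : ℝ) {N : ℕ} (i j : Fin N) : pp β γ N i j ≤ β / N * wt γ N i * wt γ N j := by
  unfold pp
  linarith [Real.add_one_le_exp (-(β / N * wt γ N i * wt γ N j))]

theorem exists_a {γ β : ℝ} (hγ : γ ∈ Set.Icc (0 : ℝ) (1 / 2)) (hβ : 1 - 2 * γ < β) :
    ∃ a, 0 ≤ a ∧ a < 1 ∧ a ≤ 2 * γ ∧ 1 - a < β := by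
  rcases lt_or_ge (2 * γ) 1 with h | h
  · exact ⟨2 * γ, by linarith [hγ.1], h, le_rfl, hβ⟩
  · have h2 := hγ.2
    have hb : 0 < β := by linarith
    refine ⟨max 0 (1 - β / 2), le_max_left _ _, max_lt one_pos (by linarith),
      max_le (by linarith) (by linarith), ?_⟩
    have := le_max_right 0 (1 - β / 2)
    linarith

theorem sum_rpow_ge {a : ℝ} (ha0 : 0 ≤ a) (ha : a < 1) (K n : ℕ) (hK : 0 < K) :
    ((K + n : ℝ) ^ (1 - a) - (K : ℝ) ^ (1 - a)) ≤
      (1 - a) * ∑ j ∈ Finset.range n, ((K + j : ℝ)) ^ (-a) := by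
  induction n with
  | zero => simp
  | succ n ih =>
    rw [Finset.sum_range_succ, mul_add]
    have hx : (0:ℝ) < K + n := by positivity
    have key : (K + (n + 1 : ℕ) : ℝ) ^ (1 - a) - (K + n : ℝ) ^ (1 - a)
        ≤ (1 - a) * (K + n : ℝ) ^ (-a) := by
      push_cast
      rw [← add_assoc]
      generalize (K + n : ℝ) = x at *
      have h1 : x + 1 = x * (1 + 1 / x) := by field_simp
      have h2 := rpow_one_add_le_one_add_mul_self (s := 1 / x) (p := 1 - a)
        (by have : 0 < 1 / x := by positivity
            linarith) (by linarith) (by linarith)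
      have h3 : x ^ (-a) = x ^ (1 - a) * (1 / x) := by
        have : -a = (1 - a) - 1 := by ring
        rw [this, Real.rpow_sub hx, Real.rpow_one]
        ring
      rw [h1, Real.mul_rpow hx.le (by positivity), h3]
      have h4 : 0 < x ^ (1 - a) := by positivity
      nlinarith
    linarith

theorem reindex_sum (N K : ℕ) (hK : 0 < K) (hKN : K ≤ N) (y : ℝ) (hy : y ≤ K) (g : ℕ → ℝ)
    (hg : ∀ n, 0 ≤ g n) :
    ∑ j ∈ Finset.range (N + 1 - K), g (K + j) ≤
      ∑ i ∈ Finset.univ.filter (fun i : Fin N => y ≤ (i:ℕ) + 1), g ((i:ℕ) + 1) := by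
  rw [Finset.sum_filter,
    Fin.sum_univ_eq_sum_range (fun i : ℕ => if y ≤ (i:ℝ) + 1 then g (i + 1) else 0) N]
  calc _ = ∑ i ∈ Finset.Ico (K - 1) N, (if y ≤ (i:ℝ) + 1 then g (i + 1) else 0) := by
        rw [Finset.sum_Ico_eq_sum_range]
        have : N - (K - 1) = N + 1 - K := by omega
        rw [this]
        refine Finset.sum_congr rfl fun j _ => ?_
        have e : K - 1 + j + 1 = K + j := by omega
        have h : y ≤ ((K - 1 + j : ℕ) : ℝ) + 1 := by
          have : ((K - 1 + j : ℕ) : ℝ) + 1 = K + j := by exact_mod_cast e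
          rw [this]
          have : (0:ℝ) ≤ j := by positivity
          linarith
        rw [if_pos h, e]
    _ ≤ _ := by
        refine Finset.sum_le_sum_of_subset_of_nonneg ?_ fun i _ _ => ?_
        · intro i hi
          rw [Finset.mem_Ico] at hi
          exact Finset.mem_range.2 hi.2
        · split_ifs
          · exact hg _
          · exact le_rfl

theorem supercrit {γ β : ℝ} (hγ : γ ∈ Set.Icc (0 : ℝ) (1 / 2)) (hβ : 1 - 2 * γ < β) :
    ∃ ε ν : ℝ, 0 < ε ∧ ε < 1 ∧ 1 < ν ∧ ∀ N : ℕ, 1 ≤ ε * N →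
      ν ≤ β / N * ∑ i ∈ Finset.univ.filter (fun i : Fin N => ε * N ≤ (i:ℕ) + 1), wt γ N i ^ 2 := by
  obtain ⟨a, ha0, ha1, ha2, ha3⟩ := exists_a hγ hβ
  have hβ0 : 0 < β := by linarith
  have h1a : 0 < 1 - a := by linarith
  set ν := (β / (1 - a) + 1) / 2 with hν
  have hq : 1 < β / (1 - a) := by rw [lt_div_iff₀ h1a]; linarith
  have hν1 : 1 < ν := by linarith
  have hν2 : ν < β / (1 - a) := by linarith
  set c := 1 - ν * (1 - a) / β with hc
  have hc0 : 0 < c := by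
    rw [hc, sub_pos, div_lt_one hβ0]
    rwa [lt_div_iff₀ h1a] at hν2
  have hc1 : c < 1 := by
    have : 0 < ν * (1 - a) / β := by positivity
    linarith
  set x := c ^ (1 / (1 - a)) with hx
  have hx0 : 0 < x := by positivity
  have hx1 : x < 1 := Real.rpow_lt_one hc0.le hc1 (by positivity)
  have hxc : x ^ (1 - a) = c := by
    rw [hx, ← Real.rpow_mul hc0.le, one_div, inv_mul_cancel₀ h1a.ne', Real.rpow_one]
  refine ⟨x / 2, ν, by positivity, by linarith, hν1, ?_⟩
  intro N hN
  have hN0 : 0 < N := by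
    rcases Nat.eq_zero_or_pos N with h | h
    · subst h; norm_num at hN
    · exact h
  have hN' : (0:ℝ) < N := by exact_mod_cast hN0
  set K := ⌈x / 2 * N⌉₊ with hK
  have hKle : (x / 2 * N) ≤ K := Nat.le_ceil _
  have hK1 : (K:ℝ) < x / 2 * N + 1 := Nat.ceil_lt_add_one (by positivity)
  have hKx : (K:ℝ) ≤ x * N := by nlinarith
  have hK0 : 0 < K := Nat.ceil_pos.2 (by positivity)
  have hKN : K ≤ N := by
    have : (K:ℝ) ≤ N := hKx.trans (by nlinarith)
    exact_mod_cast this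
  -- lower bound of sum
  have hs := sum_rpow_ge ha0 ha1 K (N + 1 - K) hK0
  have hsum : (N:ℝ) ^ a * ∑ j ∈ Finset.range (N + 1 - K), ((K + j : ℝ)) ^ (-a) ≤
      ∑ i ∈ Finset.univ.filter (fun i : Fin N => x / 2 * N ≤ (i:ℕ) + 1), wt γ N i ^ 2 := by
    have h1 : ∑ i ∈ Finset.univ.filter (fun i : Fin N => x / 2 * N ≤ (i:ℕ) + 1), wt γ N i ^ 2
        ≥ ∑ i ∈ Finset.univ.filter (fun i : Fin N => x / 2 * N ≤ (i:ℕ) + 1),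
          (N:ℝ) ^ a * (((i:ℕ):ℝ) + 1) ^ (-a) := by
      refine Finset.sum_le_sum fun i _ => ?_
      unfold wt
      have hi : (0:ℝ) < (i:ℕ) + 1 := by positivity
      rw [Real.rpow_neg hi.le, ← div_eq_mul_inv, ← Real.div_rpow hN'.le hi.le,
        ← Real.rpow_natCast, ← Real.rpow_mul (by positivity)]
      exact Real.rpow_le_rpow_of_exponent_le (base_ge i) (by push_cast; linarith)
    refine le_trans ?_ h1
    rw [Finset.mul_sum]
    have h2 := reindex_sum N K hK0 hKN (x / 2 * N) hKle
      (fun n => (N:ℝ) ^ a * ((n:ℕ):ℝ) ^ (-a)) (fun n => by positivity)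
    push_cast at h2
    exact h2
  have hK' : (0:ℝ) < K := by exact_mod_cast hK0
  have e1 : (K:ℝ) + ((N + 1 - K : ℕ) : ℝ) = N + 1 := by
    rw [Nat.cast_sub (by omega)]; push_cast; ring
  rw [e1] at hs
  set S := ∑ j ∈ Finset.range (N + 1 - K), ((K + j : ℝ)) ^ (-a)
  have h3 : (N:ℝ) ^ (1 - a) ≤ (N + 1 : ℝ) ^ (1 - a) :=
    Real.rpow_le_rpow hN'.le (by linarith) h1a.le
  have h4 : (K:ℝ) ^ (1 - a) ≤ c * (N:ℝ) ^ (1 - a) := by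
    rw [← hxc, ← Real.mul_rpow hx0.le hN'.le]
    exact Real.rpow_le_rpow hK'.le hKx h1a.le
  have h5 : ν * (1 - a) / β * (N:ℝ) ^ (1 - a) ≤ (1 - a) * S := by
    have : ν * (1 - a) / β = 1 - c := by rw [hc]; ring
    rw [this]; linarith
  have h6 : ν / β * (N:ℝ) ^ (1 - a) ≤ S := by
    have : ν * (1 - a) / β * (N:ℝ) ^ (1 - a) = (1 - a) * (ν / β * (N:ℝ) ^ (1 - a)) := by ring
    rw [this] at h5
    exact le_of_mul_le_mul_left h5 h1a
  calc ν = β / N * ((N:ℝ) ^ a * (ν / β * (N:ℝ) ^ (1 - a))) := by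
        have : (N:ℝ) ^ a * (N:ℝ) ^ (1 - a) = N := by
          rw [← Real.rpow_add hN']; simp
        calc ν = β / N * (ν / β * N) := by field_simp
          _ = β / N * (ν / β * ((N:ℝ) ^ a * (N:ℝ) ^ (1 - a))) := by rw [this]
          _ = _ := by ring
    _ ≤ β / N * ((N:ℝ) ^ a * S) := by gcongr
    _ ≤ _ := by gcongr

end DV

namespace DV

theorem link_prob {β γ : ℝ} (hβ : 0 < β) (hγ : 0 ≤ γ) {N : ℕ} (om : Fin N → ℝ)
    (hom : ∀ i, 1 ≤ om i) (homw : ∀ i, om i ≤ wt γ N i) (E F : Finset (Fin N)) (hd : Disjoint E F) :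
    gPr (pp β γ N) (noLink E F ∅) ≤
      Real.exp (-(β / N * (∑ i ∈ E, om i) * (∑ i ∈ F, om i))) := by
  have h1 : gPr (pp β γ N) (noLink E F ∅) = gEx (pp β γ N) (fun G => ∏ j ∈ nbr G E F, (0:ℝ)) := by
    unfold gPr
    congr 1
    funext G
    by_cases h : nbr G E F = ∅
    · rw [h, Finset.prod_empty, if_pos]
      rintro ⟨a, ha, b, hb, hab⟩
      have : b ∈ nbr G E F := by
        simp only [nbr, Finset.mem_filter]; exact ⟨hb, a, ha, hab⟩
      rw [h] at this
      exact absurd this (Finset.notMem_empty _)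
    · obtain ⟨b, hb⟩ := Finset.nonempty_iff_ne_empty.2 h
      rw [Finset.prod_eq_zero hb rfl, if_neg]
      simp only [nbr, Finset.mem_filter] at hb
      obtain ⟨hb, a, ha, hab⟩ := hb
      exact fun hn => hn ⟨a, ha, b, hb, hab⟩
  rw [h1, gEx_nbr _ (fun i j => pp_symm β γ i j) E F hd]
  simp only [mul_zero, add_zero, pp, sub_sub_cancel, ← Real.exp_sum]
  rw [Real.exp_le_exp]
  simp only [Finset.sum_neg_distrib, neg_le_neg_iff]
  rw [Finset.mul_sum]
  refine Finset.sum_le_sum fun j _ => ?_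
  rw [Finset.mul_sum, Finset.sum_mul]
  refine Finset.sum_le_sum fun i _ => ?_
  have := hom i; have := homw i; have := homw j; have := hom j
  have h0 : 0 ≤ om i := by linarith
  have h1 : 0 ≤ om j := by linarith
  have h2 : 0 ≤ wt γ N i := by linarith
  gcongr

theorem sum_wt {γ : ℝ} (hγ : γ ≤ 1 / 2) (N : ℕ) : ∑ i : Fin N, wt γ N i ≤ N * (1 + Real.log N) :=
  (Finset.sum_le_sum fun i _ => wt_le hγ i).trans (sum_base N)

theorem deg_prob {β γ : ℝ} (hβ : 0 < β) (hγ : 0 ≤ γ) (hγ2 : γ ≤ 1 / 2) {N : ℕ} (hlg : 1 ≤ Real.log N)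
    (i : Fin N) :
    gPr (pp β γ N) (fun G => (4 * β + 3) * wt γ N i * Real.log N < (G.degree i : ℝ)) ≤
      Real.exp (-(3 * Real.log N)) := by
  have hN : (0:ℝ) < N := by exact_mod_cast i.pos
  have hw := wt_ge_one hγ i
  set T := (4 * β + 3) * wt γ N i * Real.log N with hT
  have hm := gPr_markov (fun a b _ => pp_bounds hβ hγ (N := N) a b)
    (fun G => T < (G.degree i : ℝ))
    (fun G => (∏ j ∈ nbr G {i} (Finset.univ.erase i), Real.exp 1) * Real.exp (-T))
    (fun G => by positivity) (by
      intro G hG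
      have hc : (nbr G {i} (Finset.univ.erase i)) = G.neighborFinset i := by
        ext j
        simp only [nbr, Finset.mem_filter, Finset.mem_erase, Finset.mem_univ, and_true,
          Finset.mem_singleton, exists_eq_left, SimpleGraph.mem_neighborFinset]
        exact ⟨fun h => h.2, fun h => ⟨h.ne', h⟩⟩
      rw [hc, Finset.prod_const, SimpleGraph.card_neighborFinset_eq_degree, ← Real.exp_nat_mul,
        ← Real.exp_add]
      refine Real.one_le_exp ?_
      linarith)
  refine hm.trans ?_
  rw [gEx_mul_const, gEx_nbr _ (fun i j => pp_symm β γ i j) _ _ (by simp)]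
  have h2 : ∏ j ∈ Finset.univ.erase i, (∏ i' ∈ {i}, (1 - pp β γ N i' j)
      + (1 - ∏ i' ∈ {i}, (1 - pp β γ N i' j)) * Real.exp 1)
      ≤ ∏ j ∈ Finset.univ.erase i, Real.exp (2 * (β / N * wt γ N i * wt γ N j)) := by
    refine Finset.prod_le_prod ?_ ?_
    · intro j _
      rw [Finset.prod_singleton]
      have := pp_bounds hβ hγ i j
      have h3 := Real.exp_pos 1
      nlinarith
    · intro j _
      rw [Finset.prod_singleton]
      have h3 := pp_bounds hβ hγ i j
      have h4 := pp_le β γ i j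
      have h5 := Real.exp_one_lt_d9
      have h6 := Real.add_one_le_exp (2 * (β / N * wt γ N i * wt γ N j))
      nlinarith
  have h3 : ∏ j ∈ Finset.univ.erase i, Real.exp (2 * (β / N * wt γ N i * wt γ N j))
      ≤ Real.exp (4 * β * wt γ N i * Real.log N) := by
    rw [← Real.exp_sum, Real.exp_le_exp]
    calc _ ≤ ∑ j, 2 * (β / N * wt γ N i * wt γ N j) := by
          refine Finset.sum_le_sum_of_subset_of_nonneg (Finset.subset_univ _) fun j _ _ => ?_
          have := wt_ge_one hγ j
          positivity
      _ = 2 * (β / N * wt γ N i) * ∑ j, wt γ N j := by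
          rw [Finset.mul_sum]
          exact Finset.sum_congr rfl fun j _ => by ring
      _ ≤ 2 * (β / N * wt γ N i) * (N * (1 + Real.log N)) := by
          have := sum_wt hγ2 N
          gcongr
      _ = 2 * β * wt γ N i * (1 + Real.log N) := by field_simp
      _ ≤ 2 * β * wt γ N i * (2 * Real.log N) := by gcongr; linarith
      _ = _ := by ring
  calc _ ≤ Real.exp (4 * β * wt γ N i * Real.log N) * Real.exp (-T) := by
        refine mul_le_mul_of_nonneg_right (h2.trans h3) (Real.exp_pos _).le
    _ = Real.exp (-(3 * wt γ N i * Real.log N)) := by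
        rw [← Real.exp_add]; congr 1; rw [hT]; ring
    _ ≤ _ := by
        rw [Real.exp_le_exp]
        nlinarith

theorem deg_prob_all {β γ : ℝ} (hβ : 0 < β) (hγ : 0 ≤ γ) (hγ2 : γ ≤ 1 / 2) {N : ℕ}
    (hlg : 1 ≤ Real.log N) :
    gPr (pp β γ N) (fun G => ∃ i, (4 * β + 3) * wt γ N i * Real.log N < (G.degree i : ℝ)) ≤
      N * Real.exp (-(3 * Real.log N)) := by
  refine (gPr_exists (fun a b _ => pp_bounds hβ hγ (N := N) a b) _).trans ?_
  refine (Finset.sum_le_sum fun i _ => deg_prob hβ hγ hγ2 hlg i).trans ?_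
  simp

/-- The numeric hypotheses. -/
structure Num (β γ ε ν R δ η s0 A : ℝ) (N : ℕ) : Prop where
  hβ : 0 < β
  hγ0 : 0 ≤ γ
  hγ : γ ≤ 1 / 2
  hε : 0 < ε
  hν : 1 < ν
  hR : R = (1 / ε) ^ γ
  hR1 : 1 ≤ R
  hδ : δ = (ν - 1) / 4
  hη : η = δ / ν
  hs0 : s0 = 2 * η / R
  hA : A = 1 / Real.log (1 + δ) + 4 / (s0 * δ) + 2
  hsup : ν ≤ β / N * ∑ i ∈ Finset.univ.filter (fun i : Fin N => ε * N ≤ (i:ℕ) + 1), wt γ N i ^ 2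
  l4 : 4 ≤ Real.log N
  lR : 2 * R ≤ Real.log N
  lδ : β * R ^ 2 ≤ δ * Real.log N
  lη : β * R ≤ 2 * η * Real.log N
  lA : 2 * A ≤ Real.log N
  lC : 4 * β + 3 ≤ Real.log N
  lβ : 1 ≤ β * Real.log N
  ls : 4 ≤ s0 * Real.log N
  lβR : β * R ^ 2 ≤ Real.log N
  lN : Real.log N ^ 30 ≤ N

namespace Num
variable {β γ ε ν R δ η s0 A : ℝ} {N : ℕ}

theorem Npos (h : Num β γ ε ν R δ η s0 A N) : (0:ℝ) < N := by
  have := h.l4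
  have h2 := h.lN
  have : 0 < Real.log N ^ 30 := by positivity
  linarith

theorem powN (h : Num β γ ε ν R δ η s0 A N) (n : ℕ) (hn : n ≤ 30) : Real.log N ^ n ≤ N :=
  (pow_le_pow_right₀ (by linarith [h.l4]) hn).trans h.lN

theorem δpos (h : Num β γ ε ν R δ η s0 A N) : 0 < δ := by rw [h.hδ]; linarith [h.hν]
theorem ηpos (h : Num β γ ε ν R δ η s0 A N) : 0 < η := by
  rw [h.hη]; have := h.δpos; have := h.hν; positivity
theorem ηle (h : Num β γ ε ν R δ η s0 A N) : η ≤ 1 / 4 := by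
  have := h.hν
  rw [h.hη, h.hδ, div_le_iff₀ (by linarith)]; linarith
theorem s0pos (h : Num β γ ε ν R δ η s0 A N) : 0 < s0 := by
  rw [h.hs0]; have := h.ηpos; have := h.hR1; positivity
theorem s0le (h : Num β γ ε ν R δ η s0 A N) : s0 ≤ 1 := by
  have := h.hR1
  rw [h.hs0, div_le_iff₀ (by linarith)]
  linarith [h.ηle]

theorem wtR (h : Num β γ ε ν R δ η s0 A N) (i : Fin N) (hi : ε * N ≤ (i:ℕ) + 1) : wt γ N i ≤ R := by
  rw [h.hR]
  unfold wt
  have := h.hε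
  refine Real.rpow_le_rpow (by positivity) ?_ h.hγ0
  rw [div_le_div_iff₀ (by positivity) h.hε]
  linarith

theorem exists_par (h : Num β γ ε ν R δ η s0 A N) : ∃ P : Par N, P.p = pp β γ N ∧ (∀ i, P.om i ≤ wt γ N i) ∧
    (∀ i ∈ P.M, P.om i ≤ R) ∧ (∀ i, i ∉ P.M → Real.log N ^ 2 ≤ P.om i) ∧
    (∀ i ∈ P.M, wt γ N i ≤ Real.log N ^ 2) ∧ P.B = N / Real.log N ^ 9 ∧ P.s0 = s0 ∧ P.δ = δ ∧
    P.kmax = N / Real.log N ^ 4 ∧ N ≤ β * R ^ 2 * (P.M.card : ℝ) := by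
  have hl := h.l4
  have hl0 : 0 < Real.log N := by linarith
  have hN := h.Npos
  have hβ := h.hβ
  have hR1 := h.hR1
  have hR0 : 0 < R := by linarith
  set lg := Real.log N with hlg
  set om : Fin N → ℝ := fun i => if wt γ N i ≤ lg ^ 2 then min (wt γ N i) R else wt γ N i with hom
  set M := Finset.univ.filter (fun i : Fin N => wt γ N i ≤ lg ^ 2) with hM
  set Q := Finset.univ.filter (fun i : Fin N => ε * N ≤ (i:ℕ) + 1) with hQ
  have hRl : R ≤ lg ^ 2 := by have := h.lR; nlinarith
  have hQM : Q ⊆ M := by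
    intro i hi
    simp only [hQ, hM, Finset.mem_filter, Finset.mem_univ, true_and] at hi ⊢
    exact (h.wtR i hi).trans hRl
  have om1 : ∀ i, 1 ≤ om i := by
    intro i
    have := wt_ge_one h.hγ0 i
    simp only [hom]
    split_ifs
    · exact le_min this hR1
    · exact this
  have omw : ∀ i, om i ≤ wt γ N i := by
    intro i
    simp only [hom]
    split_ifs
    · exact min_le_left _ _
    · exact le_rfl
  have omR : ∀ i ∈ M, om i ≤ R := by
    intro i hi
    simp only [hM, Finset.mem_filter, Finset.mem_univ, true_and] at hi
    simp only [hom, hi, if_true]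
    exact min_le_right _ _
  have omQ : ∀ i ∈ Q, om i = wt γ N i := by
    intro i hi
    have h1 := hQM hi
    simp only [hM, Finset.mem_filter, Finset.mem_univ, true_and] at h1
    simp only [hQ, Finset.mem_filter, Finset.mem_univ, true_and] at hi
    simp only [hom, h1, if_true]
    exact min_eq_left (h.wtR i hi)
  have hsum : ν ≤ β / N * ∑ i ∈ M, om i ^ 2 := by
    refine h.hsup.trans (mul_le_mul_of_nonneg_left ?_ (by positivity))
    calc ∑ i ∈ Q, wt γ N i ^ 2 = ∑ i ∈ Q, om i ^ 2 :=
          Finset.sum_congr rfl fun i hi => by rw [omQ i hi]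
      _ ≤ _ := Finset.sum_le_sum_of_subset_of_nonneg hQM fun i _ _ => sq_nonneg _
  have hcard : N ≤ β * R ^ 2 * (M.card : ℝ) := by
    have h1 : ∑ i ∈ M, om i ^ 2 ≤ M.card * R ^ 2 := by
      rw [← nsmul_eq_mul]
      refine Finset.sum_le_card_nsmul _ _ _ fun i hi => ?_
      exact pow_le_pow_left₀ (by linarith [om1 i]) (omR i hi) 2
    have h2 : 1 ≤ β / N * (M.card * R ^ 2) := by
      have h3 := mul_le_mul_of_nonneg_left h1 (by positivity : 0 ≤ β / N)
      linarith [h.hν]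
    have h3 : β / N * (M.card * R ^ 2) = (β * R ^ 2 * M.card) / N := by ring
    rw [h3, le_div_iff₀ hN] at h2
    linarith
  have hη := h.ηpos
  have hηle := h.ηle
  have hδ := h.δpos
  have hν := h.hν
  refine ⟨⟨pp β γ N, om, M, N / lg ^ 9, s0, δ, N / lg ^ 4, fun i j _ => pp_bounds hβ h.hγ0 i j,
    fun i j => pp_symm β γ i j, om1, by positivity, h.s0pos, hδ, ?_⟩, rfl, omw, omR, ?_, ?_, rfl,
    rfl, rfl, rfl, hcard⟩
  · intro F U s _ _ hU hW hk hs hs'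
    refine hstep_gen (β / N) R (N / lg ^ 9) s0 δ η (N / lg ^ 4) (wt γ N) om M (by positivity) hη.le
      (by linarith) hR0.le om1 omw omR ?_ ?_ ?_ F U s hU hW hk hs hs'
    · have e : β / N * (N / lg ^ 9) * R = β * R / lg ^ 9 := by field_simp
      rw [e, div_le_iff₀ (by positivity)]
      refine h.lη.trans ?_
      have : lg ≤ lg ^ 9 := le_self_pow₀ (by linarith) (by norm_num)
      gcongr
    · rw [h.hs0, div_mul_cancel₀ _ hR0.ne']
    · have h1 : β / N * R ^ 2 * (N / lg ^ 4) ≤ δ := by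
        have e : β / N * R ^ 2 * (N / lg ^ 4) = β * R ^ 2 / lg ^ 4 := by field_simp
        rw [e, div_le_iff₀ (by positivity)]
        refine h.lδ.trans ?_
        have : lg ≤ lg ^ 4 := le_self_pow₀ (by linarith) (by norm_num)
        gcongr
      have h2 : ν - δ ≤ β / N * ∑ i ∈ M, om i ^ 2 - β / N * R ^ 2 * (N / lg ^ 4) := by linarith
      refine le_trans ?_ (mul_le_mul_of_nonneg_left h2 (sq_nonneg _))
      have e1 : η * ν = δ := by rw [h.hη]; field_simp
      have e2 : ν = 1 + 4 * δ := by rw [h.hδ]; ring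
      have h3 : 0 ≤ ν - δ := by linarith
      have h4 : (1 - 2 * η) * (ν - δ) ≤ (1 - η) ^ 2 * (ν - δ) :=
        mul_le_mul_of_nonneg_right (by nlinarith) h3
      nlinarith
  · intro i hi
    simp only [hM, Finset.mem_filter, Finset.mem_univ, true_and] at hi
    simp only [hom, hi, if_false]
    exact (not_le.1 hi).le
  · intro i hi
    simpa [hM] using hi

end Num
end DV

namespace DV

def GoodG (β γ A : ℝ) {N : ℕ} (G : SimpleGraph (Fin N)) : Prop :=
  (∀ i, (G.degree i : ℝ) ≤ (4 * β + 3) * wt γ N i * Real.log N) ∧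
  (∃ (M : Finset (Fin N)) (l : ℕ), 0 < l ∧ (l:ℝ) ≤ 9 * A * Real.log N ∧
    (∀ i ∈ M, wt γ N i ≤ Real.log N ^ 2) ∧ ∀ s t, G.Reachable s t → Near (hub G M) l s t) ∧
  ∃ s, N / Real.log N ^ 12 ≤ ((Finset.univ.filter fun x => G.Reachable s x).card : ℝ)

theorem card_nb {N : ℕ} (G : SimpleGraph (Fin N)) (F F' : Finset (Fin N)) (D : ℝ)
    (hD : ∀ x ∈ F, (G.degree x : ℝ) ≤ D) (h : ∀ y ∈ F', ∃ x ∈ F, G.Adj x y) :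
    (F'.card : ℝ) ≤ F.card * D := by
  have hs : F' ⊆ F.biUnion fun x => G.neighborFinset x := by
    intro y hy
    obtain ⟨x, hx, hxy⟩ := h y hy
    exact Finset.mem_biUnion.2 ⟨x, hx, by simpa using hxy⟩
  calc (F'.card : ℝ) ≤ ((F.biUnion fun x => G.neighborFinset x).card : ℝ) := by
        exact_mod_cast Finset.card_le_card hs
    _ ≤ ((∑ x ∈ F, (G.neighborFinset x).card : ℕ) : ℝ) := by exact_mod_cast Finset.card_biUnion_le
    _ = ∑ x ∈ F, (G.degree x : ℝ) := by
        push_cast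
        exact Finset.sum_congr rfl fun x _ => by rw [SimpleGraph.card_neighborFinset_eq_degree]
    _ ≤ ∑ x ∈ F, D := Finset.sum_le_sum hD
    _ = _ := by rw [Finset.sum_const, nsmul_eq_mul]

theorem gPr_pairs {N : ℕ} {p : Fin N → Fin N → ℝ} (hp : ∀ i j, i ≠ j → 0 ≤ p i j ∧ p i j ≤ 1)
    (A : Fin N → Fin N → SimpleGraph (Fin N) → Prop) (e : ℝ) (he : ∀ a b, gPr p (A a b) ≤ e) :
    gPr p (fun G => ∃ a b, A a b G) ≤ N * (N * e) := by
  refine (gPr_exists hp (fun a G => ∃ b, A a b G)).trans ?_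
  calc _ ≤ ∑ a : Fin N, (N:ℝ) * e := by
        refine Finset.sum_le_sum fun a _ => ?_
        refine (gPr_exists hp (A a)).trans ?_
        refine (Finset.sum_le_sum fun b _ => he a b).trans ?_
        simp
    _ = _ := by simp

set_option maxHeartbeats 4000000 in
theorem whp {β γ ε ν R δ η s0 A : ℝ} {N : ℕ} (h : Num β γ ε ν R δ η s0 A N) :
    gPr (pp β γ N) (fun G => ¬ GoodG β γ A G) ≤ 30 / N := by
  obtain ⟨P, hPp, homw, homR, homM, hwM, hPB, hPs, hPδ, hPk, hcM⟩ := h.exists_par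
  have hN := h.Npos
  have hl := h.l4
  have hs0 := h.s0pos
  have hs0le := h.s0le
  have hδ := h.δpos
  have hβ := h.hβ
  have hR1 := h.hR1
  have lR := h.lR
  have lA := h.lA
  have lC := h.lC
  have lβ := h.lβ
  have ls := h.ls
  have hexp : Real.exp (Real.log N) = N := Real.exp_log hN
  have powN := h.powN
  have hp : ∀ i j, i ≠ j → 0 ≤ pp β γ N i j ∧ pp β γ N i j ≤ 1 :=
    fun a b _ => pp_bounds hβ h.hγ0 a b
  have hwN : ∀ i : Fin N, wt γ N i ^ 2 ≤ N := wt_sq_le_N h.hγ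
  have hdeg := deg_prob_all hβ h.hγ0 h.hγ (N := N) (by linarith)
  have hA := h.hA
  set lg := Real.log N with hlg
  have hl0 : 0 < lg := by linarith
  have hlog : 0 < Real.log (1 + δ) := Real.log_pos (by linarith)
  set m := ⌈lg / Real.log (1 + δ)⌉₊ with hm
  set k := ⌈4 / (s0 * δ) * lg⌉₊ with hk
  have hm1 : lg / Real.log (1 + δ) ≤ m := Nat.le_ceil _
  have hm2 : (m:ℝ) < lg / Real.log (1 + δ) + 1 := Nat.ceil_lt_add_one (by positivity)
  have hk1 : 4 / (s0 * δ) * lg ≤ k := Nat.le_ceil _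
  have hk2 : (k:ℝ) < 4 / (s0 * δ) * lg + 1 := Nat.ceil_lt_add_one (by positivity)
  have hr : ((m + k : ℕ) : ℝ) ≤ A * lg := by
    push_cast
    rw [hA]
    have : (1 / Real.log (1 + δ) + 4 / (s0 * δ) + 2) * lg
      = lg / Real.log (1 + δ) + 4 / (s0 * δ) * lg + 2 * lg := by ring
    rw [this]; linarith
  have hA2 : 2 ≤ A := by
    have h1 : 0 < 1 / Real.log (1 + δ) := by positivity
    have h2 : 0 < 4 / (s0 * δ) := by positivity
    linarith
  -- growth
  have hmB : P.s0 * P.B ≤ (1 + P.δ) ^ m := by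
    rw [hPs, hPB, hPδ]
    have h1 : s0 * (N / lg ^ 9) ≤ N := by
      have : (N:ℝ) / lg ^ 9 ≤ N := div_le_self hN.le (one_le_pow₀ (by linarith))
      have h0 : 0 ≤ (N:ℝ) / lg ^ 9 := by positivity
      nlinarith
    refine h1.trans ?_
    have h2 : (1 + δ) ^ m = Real.exp (m * Real.log (1 + δ)) := by
      rw [Real.exp_nat_mul, Real.exp_log (by linarith)]
    rw [h2, ← hexp, Real.exp_le_exp]
    rwa [div_le_iff₀ hlog] at hm1
  have hsk : Real.exp (1 - P.s0 * P.δ * k) ≤ 3 * Real.exp (-(4 * lg)) := by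
    rw [hPs, hPδ]
    have h1 : 4 * lg ≤ s0 * δ * k := by
      have h2 := mul_le_mul_of_nonneg_left hk1 (by positivity : 0 ≤ s0 * δ)
      have h3 : s0 * δ * (4 / (s0 * δ) * lg) = 4 * lg := by field_simp
      linarith
    calc Real.exp (1 - s0 * δ * k) ≤ Real.exp (1 + -(4 * lg)) := by
          rw [Real.exp_le_exp]; linarith
      _ = Real.exp 1 * Real.exp (-(4 * lg)) := Real.exp_add _ _
      _ ≤ _ := by
          have := Real.exp_one_lt_d9
          gcongr
          linarith
  -- numeric
  have hBr : ((m + k : ℕ) : ℝ) * P.B ≤ N / (2 * lg ^ 7) := by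
    rw [hPB]
    calc ((m + k : ℕ) : ℝ) * (N / lg ^ 9) ≤ (A * lg) * (N / lg ^ 9) := by gcongr
      _ = A * N / lg ^ 8 := by field_simp
      _ ≤ _ := by
        rw [div_le_div_iff₀ (by positivity) (by positivity)]
        have : 0 ≤ (N:ℝ) * lg ^ 7 := by positivity
        have e : N * lg ^ 8 = (N * lg ^ 7) * lg := by ring
        rw [e]
        nlinarith
  have hone : 1 ≤ N / (2 * lg ^ 7) := by
    rw [le_div_iff₀ (by positivity), one_mul]
    refine le_trans ?_ (powN 8 (by norm_num))
    have : 0 < lg ^ 7 := by positivity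
    have e : lg ^ 8 = lg ^ 7 * lg := by ring
    rw [e]; nlinarith
  have hhalf : N / (2 * lg ^ 7) + N / (2 * lg ^ 7) = N / lg ^ 7 := by field_simp; norm_num
  have h75 : N / lg ^ 7 ≤ N / lg ^ 5 := by
    gcongr
    · linarith
    · norm_num
  have h54 : 3 * (N / lg ^ 5) ≤ N / lg ^ 4 := by
    rw [← mul_div_assoc, div_le_div_iff₀ (by positivity) (by positivity)]
    have : 0 ≤ (N:ℝ) * lg ^ 4 := by positivity
    have e : N * lg ^ 5 = (N * lg ^ 4) * lg := by ring
    rw [e]; nlinarith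
  have hq0 : 0 ≤ N / (2 * lg ^ 7) := by positivity
  -- link probability
  have hlink : ∀ E F, Disjoint E F → P.B ≤ P.W E → P.B ≤ P.W F →
      gPr P.p (noLink E F ∅) ≤ Real.exp (-(4 * lg)) := by
    intro E F hd hE hF
    rw [hPp]
    refine (link_prob hβ h.hγ0 P.om P.hom homw E F hd).trans ?_
    rw [Real.exp_le_exp, neg_le_neg_iff]
    change P.B ≤ ∑ i ∈ E, P.om i at hE
    change P.B ≤ ∑ i ∈ F, P.om i at hF
    have hB := P.hB
    calc 4 * lg ≤ β / N * (N / lg ^ 9) * (N / lg ^ 9) := by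
          have e : β / N * (N / lg ^ 9) * (N / lg ^ 9) = β * N / lg ^ 18 := by field_simp
          rw [e, le_div_iff₀ (by positivity)]
          calc 4 * lg * lg ^ 18 ≤ lg * lg * lg ^ 18 * (β * lg) := by
                have h1 : 4 * lg * lg ^ 18 ≤ lg * lg * lg ^ 18 := by gcongr
                have h2 : 0 ≤ lg * lg * lg ^ 18 := by positivity
                nlinarith
            _ = β * lg ^ 21 := by ring
            _ ≤ β * N := by gcongr; exact powN 21 (by norm_num)
      _ = β / N * P.B * P.B := by rw [hPB]
      _ ≤ _ := by
          have : 0 ≤ ∑ i ∈ E, P.om i := by linarith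
          gcongr
  have he4 : 0 < Real.exp (-(4 * lg)) := Real.exp_pos _
  have hPhp := P.hp
  -- pair probabilities
  have hpair : ∀ flag : Prop, ∀ s s', s ≠ s' →
      gPr P.p (pairBad P flag (m + k) (N / lg ^ 5) s s') ≤ 7 * Real.exp (-(4 * lg)) +
        (if flag then 1 else 0) * (Real.exp (-(s0 * P.om s)) + Real.exp (-(s0 * P.om s'))) := by
    intro flag s s' hss
    have := pairBad_prob P flag (N / lg ^ 7) (N / lg ^ 5) (Real.exp (-(4 * lg))) m k hmB hlink he4.le
      (by linarith) (by rw [hPk]; linarith) (by positivity) s s' hss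
    rw [hPs] at this
    rw [hPs] at hsk
    linarith
  have hbig : ∀ s, s ∉ P.M → Real.exp (-(s0 * P.om s)) ≤ Real.exp (-(4 * lg)) := by
    intro s hs
    have := homM s hs
    rw [Real.exp_le_exp]
    nlinarith
  have ev1 := gPr_pairs hPhp
    (fun s s' G => s ≠ s' ∧ pairBad P False (m + k) (N / lg ^ 5) s s' G)
    (7 * Real.exp (-(4 * lg))) (by
      intro s s'
      by_cases hss : s = s'
      · subst hss
        refine le_trans (le_of_eq ?_) (by positivity : 0 ≤ 7 * Real.exp (-(4 * lg)))
        simp [gPr, gEx_const]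
      · refine (gPr_mono hPhp (fun G hG => hG.2)).trans ?_
        simpa using hpair False s s' hss)
  have ev2 := gPr_pairs hPhp
    (fun s s' G => s ≠ s' ∧ s ∉ P.M ∧ s' ∉ P.M ∧ pairBad P True (m + k) (N / lg ^ 5) s s' G)
    (9 * Real.exp (-(4 * lg))) (by
      intro s s'
      by_cases hss : s ≠ s' ∧ s ∉ P.M ∧ s' ∉ P.M
      · refine (gPr_mono hPhp (fun G hG => hG.2.2.2)).trans ?_
        have h1 := hpair True s s' hss.1
        have h2 := hbig s hss.2.1
        have h3 := hbig s' hss.2.2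
        simp only [if_true, one_mul] at h1
        linarith
      · have : (fun G => s ≠ s' ∧ s ∉ P.M ∧ s' ∉ P.M ∧ pairBad P True (m + k) (N / lg ^ 5) s s' G)
            = fun _ => False := by
          funext G; rw [eq_iff_iff, iff_false]
          exact fun hG => hss ⟨hG.1, hG.2.1, hG.2.2.1⟩
        rw [this]
        refine le_trans (le_of_eq ?_) (by positivity : 0 ≤ 9 * Real.exp (-(4 * lg)))
        simp [gPr, gEx_const])
  -- big component
  have hceil1 : lg ^ 2 ≤ ⌈lg ^ 2⌉₊ := Nat.le_ceil _
  have hceil2 : (⌈lg ^ 2⌉₊ : ℝ) ≤ 2 * lg ^ 2 := by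
    have := Nat.ceil_lt_add_one (by positivity : 0 ≤ lg ^ 2)
    nlinarith
  obtain ⟨F0, hF0M, hF0c⟩ : ∃ F0 ⊆ P.M, F0.card = ⌈lg ^ 2⌉₊ := by
    refine Finset.exists_subset_card_eq ?_
    have : (⌈lg ^ 2⌉₊ : ℝ) ≤ P.M.card := by
      refine hceil2.trans ?_
      have h1 : lg * (2 * lg ^ 2) ≤ N := by
        refine le_trans ?_ (powN 4 (by norm_num))
        have : 0 < lg ^ 3 := by positivity
        nlinarith
      have h2 : (N:ℝ) ≤ lg * P.M.card := hcM.trans (by gcongr; exact h.lβR)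
      exact le_of_mul_le_mul_left (h1.trans h2) hl0
    exact_mod_cast this
  have ev3 : gPr P.p (bfsBad P True (fun _ _ _ => False) (m + k) F0 (P.M \ F0))
      ≤ 4 * Real.exp (-(4 * lg)) := by
    have h1 := bfs_prob P True (fun _ _ _ => False) ∅ (fun _ _ _ _ _ => rfl) (N / lg ^ 4) 0
      (le_of_eq hPk.symm) le_rfl (fun F U _ _ _ _ _ => by simp [gPr, gEx_const]) m k hmB F0 (P.M \ F0)
      Finset.disjoint_sdiff (Finset.disjoint_empty_right _) Finset.sdiff_subset (by
        rw [Finset.union_sdiff_of_subset hF0M, Finset.sdiff_self]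
        simp only [Finset.card_empty, Nat.cast_zero, zero_add]
        linarith)
    have h2 : Real.exp (-(P.s0 * P.W F0)) ≤ Real.exp (-(4 * lg)) := by
      rw [Real.exp_le_exp, hPs]
      have h3 := P.card_le_W F0
      rw [hF0c] at h3
      nlinarith
    simp only [if_true, one_mul] at h1
    linarith
  -- combine
  have hcomb : gPr (pp β γ N) (fun G => ¬ GoodG β γ A G) ≤
      gPr (pp β γ N) (fun G => (∃ i, (4 * β + 3) * wt γ N i * lg < (G.degree i : ℝ)) ∨
        (∃ s s', s ≠ s' ∧ pairBad P False (m + k) (N / lg ^ 5) s s' G) ∨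
        (∃ s s', s ≠ s' ∧ s ∉ P.M ∧ s' ∉ P.M ∧ pairBad P True (m + k) (N / lg ^ 5) s s' G) ∨
        bfsBad P True (fun _ _ _ => False) (m + k) F0 (P.M \ F0) G) := by
    refine gPr_mono hp fun G hG => ?_
    by_contra hcon
    apply hG
    push Not at hcon
    obtain ⟨hd, hb1, hb2, hb3⟩ := hcon
    have hWs : ∀ s, P.W {s} < P.B := by
      intro s
      have h1 : P.W {s} = P.om s := by simp [Par.W]
      rw [h1, hPB]
      refine lt_of_le_of_lt (homw s) ?_
      rw [lt_div_iff₀ (by positivity)]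
      have h2 := hwN s
      have h3 : lg ^ 18 < N := by
        refine lt_of_lt_of_le ?_ (powN 19 (by norm_num))
        exact pow_lt_pow_right₀ (by linarith) (by norm_num)
      refine lt_of_pow_lt_pow_left₀ 2 hN.le ?_
      calc (wt γ N s * lg ^ 9) ^ 2 = wt γ N s ^ 2 * lg ^ 18 := by ring
        _ ≤ N * lg ^ 18 := by gcongr
        _ < N * N := by gcongr
        _ = N ^ 2 := by ring
    have hcard : ∀ s, ∀ F'', (F'' = {s} ∨ F'' ⊆ P.M) → P.W F'' < P.B → ∀ F' : Finset (Fin N),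
        (∀ y ∈ F', ∃ x ∈ F'', G.Adj x y) → (F'.card : ℝ) ≤ N / lg ^ 5 := by
      intro s F'' hF'' hW F' hF'
      rcases hF'' with rfl | hF''
      · refine (card_nb G {s} F' ((4 * β + 3) * wt γ N s * lg)
          (fun x hx => by rw [Finset.mem_singleton] at hx; subst hx; exact hd x) hF').trans ?_
        rw [Finset.card_singleton, Nat.cast_one, one_mul, le_div_iff₀ (by positivity)]
        have h1 := wt_ge_one h.hγ0 s
        have h2 := hwN s
        refine le_of_sq_le_sq ?_ hN.le
        calc ((4 * β + 3) * wt γ N s * lg * lg ^ 5) ^ 2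
            ≤ (lg * wt γ N s * lg * lg ^ 5) ^ 2 := by gcongr
          _ = lg ^ 14 * wt γ N s ^ 2 := by ring
          _ ≤ N * N := by gcongr; exact powN 14 (by norm_num)
          _ = N ^ 2 := by ring
      · refine (card_nb G F'' F' (lg * lg ^ 2 * lg)
          (fun x hx => (hd x).trans ?_) hF').trans ?_
        · have h1 := hwM x (hF'' hx)
          have h2 := wt_ge_one h.hγ0 x
          gcongr
        · have h1 := (P.card_le_W F'').trans hW.le
          calc (F''.card : ℝ) * (lg * lg ^ 2 * lg) ≤ P.B * (lg * lg ^ 2 * lg) := by gcongr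
            _ = N / lg ^ 5 := by rw [hPB]; field_simp
    refine ⟨hd, ⟨P.M, 3 * (2 * (m + k) + 1), by positivity, ?_, hwM, ?_⟩, ?_⟩
    · push_cast at hr ⊢
      nlinarith
    · intro s t hst
      refine all_near G P.M _ (fun s s' hss hM => ?_) (fun s s' hss h1 h2 => ?_) s t hst
      · exact pair_det P False (m + k) (N / lg ^ 5) s s' G hss (hb1 s s' hss) (hWs s) (hcard s) (Or.inr hM)
      · exact pair_det P True (m + k) (N / lg ^ 5) s s' G hss (hb2 s s' hss h1 h2) (hWs s) (hcard s)
          (Or.inl trivial)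
    · obtain ⟨s, hs⟩ := big_comp P (m + k) F0 G hF0M R (by linarith) homR hb3
      refine ⟨s, le_trans ?_ hs⟩
      rw [hPB, hF0c, div_div]
      refine div_le_div_of_nonneg_left hN.le ?_ ?_
      · have : 0 < (⌈lg ^ 2⌉₊ : ℝ) := lt_of_lt_of_le (by positivity) hceil1
        positivity
      · calc lg ^ 9 * (R * ⌈lg ^ 2⌉₊) ≤ lg ^ 9 * (R * (2 * lg ^ 2)) := by gcongr
          _ = lg ^ 11 * (2 * R) := by ring
          _ ≤ lg ^ 11 * lg := by gcongr
          _ = lg ^ 12 := by ring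
  refine hcomb.trans ?_
  rw [hPp] at ev1 ev2 ev3
  refine (gPr_or hp _ _).trans ((add_le_add_right ((gPr_or hp _ _).trans
    (add_le_add_right (gPr_or hp _ _) _)) _).trans ?_)
  have e4 : Real.exp (-(4 * lg)) = ((N:ℝ) ^ 4)⁻¹ := by
    rw [Real.exp_neg, ← hexp, ← Real.exp_nat_mul]; push_cast; rfl
  have e3 : Real.exp (-(3 * lg)) = ((N:ℝ) ^ 3)⁻¹ := by
    rw [Real.exp_neg, ← hexp, ← Real.exp_nat_mul]; push_cast; rfl
  rw [e4] at ev1 ev2 ev3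
  rw [e3] at hdeg
  have hN1 : (1:ℝ) ≤ N := by
    have := powN 0 (by norm_num)
    simpa using this
  have c1 : (N:ℝ) * ((N:ℝ) ^ 3)⁻¹ ≤ 1 / N := by
    have : (N:ℝ) * ((N:ℝ) ^ 3)⁻¹ = 1 / N / N := by field_simp
    rw [this]
    exact div_le_self (by positivity) hN1
  have c2 : (N:ℝ) * (N * ((N:ℝ) ^ 4)⁻¹) ≤ 1 / N := by
    have : (N:ℝ) * (N * ((N:ℝ) ^ 4)⁻¹) = 1 / N / N := by field_simp
    rw [this]
    exact div_le_self (by positivity) hN1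
  have c3 : ((N:ℝ) ^ 4)⁻¹ ≤ 1 / N := by
    rw [← one_div]
    refine one_div_le_one_div_of_le hN ?_
    exact le_self_pow₀ hN1 (by norm_num)
  have e30 : (30:ℝ) / N = 30 * (1 / N) := by ring
  rw [e30]
  have d1 : (N:ℝ) * (N * (7 * ((N:ℝ) ^ 4)⁻¹)) = 7 * (N * (N * ((N:ℝ) ^ 4)⁻¹)) := by ring
  have d2 : (N:ℝ) * (N * (9 * ((N:ℝ) ^ 4)⁻¹)) = 9 * (N * (N * ((N:ℝ) ^ 4)⁻¹)) := by ring
  rw [d1] at ev1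
  rw [d2] at ev2
  have hnn : 0 ≤ 1 / (N:ℝ) := by positivity
  linarith

end DV

namespace DV

theorem aw_ge {N : ℕ} (G : SimpleGraph (Fin N)) (θ D : ℝ) (x y : Fin N) (hxy : G.Adj x y)
    (hD : (G.degree x : ℝ) ≤ D) : 1 ≤ D ^ |θ - 1| * aw G θ x := by
  have hd1 : (1:ℝ) ≤ G.degree x := by
    have : 0 < G.degree x := (G.degree_pos_iff_exists_adj x).2 ⟨y, hxy⟩
    exact_mod_cast this
  have hd0 : (0:ℝ) < G.degree x := by linarith
  have hD1 : 1 ≤ D := hd1.trans hD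
  have e : aw G θ x = (G.degree x : ℝ) ^ (θ - 1) := by
    unfold aw
    rw [Real.rpow_sub hd0, Real.rpow_one, div_eq_mul_inv]
  rw [e]
  rcases le_total 0 (θ - 1) with h | h
  · have h1 := Real.one_le_rpow hd1 h
    have h2 := Real.one_le_rpow hD1 (abs_nonneg (θ - 1))
    nlinarith
  · rw [abs_of_nonpos h]
    have h1 : (G.degree x : ℝ) ^ (-(θ - 1)) ≤ D ^ (-(θ - 1)) :=
      Real.rpow_le_rpow hd0.le hD (by linarith)
    have h2 : (G.degree x : ℝ) ^ (-(θ - 1)) * (G.degree x : ℝ) ^ (θ - 1) = 1 := by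
      rw [← Real.rpow_add hd0]; simp
    have h3 : 0 < (G.degree x : ℝ) ^ (θ - 1) := by positivity
    nlinarith

theorem det {β γ ε ν R δ η s0 A : ℝ} {N : ℕ} (h : Num β γ ε ν R δ η s0 A N)
    {θ : ℝ} (hθ : θ ≤ 2) {u : ℝ} (hu : u ∈ Set.Ioo (0:ℝ) 1)
    (hA : 18 * Real.exp 2 * A ≤ Real.log N) (hc : 32 ≤ (u * (1 - u)) ^ 2 * Real.log N)
    (G : SimpleGraph (Fin N)) (hG : GoodG β γ A G) :
    (N : ℝ) * Real.log N ^ (-(60 + 4 * |θ - 1|)) ≤ expectedConsensusTime G θ u ∧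
      expectedConsensusTime G θ u ≤ (N : ℝ) * Real.log N ^ (60 + 4 * |θ - 1|) := by
  obtain ⟨hd, ⟨M, l, hl0, hlA, hM, hnear⟩, s, hs⟩ := hG
  have hN := h.Npos
  have hl := h.l4
  have hC := h.lC
  have powN := h.powN
  have hβ := h.hβ
  have sw := sum_base N
  set lg := Real.log N with hlg
  have hlg0 : 0 < lg := by linarith
  have hlg1 : 1 ≤ lg := by linarith
  have hN0 : 0 < N := by exact_mod_cast hN
  set τ := |θ - 1| with hτ
  have hτ0 : 0 ≤ τ := abs_nonneg _
  have hD : ∀ i ∈ M, (G.degree i : ℝ) ≤ lg ^ 4 := by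
    intro i hi
    refine (hd i).trans ?_
    have h1 := hM i hi
    have h2 := wt_ge_one h.hγ0 i
    calc (4 * β + 3) * wt γ N i * lg ≤ lg * lg ^ 2 * lg := by gcongr
      _ = _ := by ring
  have hρ : 0 < (lg ^ 4) ^ τ := by positivity
  obtain ⟨hIntg, hup⟩ := cons_upper G θ hu (hub G M) l hl0 (2 * (lg ^ 4) ^ τ) (by positivity) (by
    intro x y hxy
    have hadj : G.Adj x y := hxy.1
    have hcd : cd G θ x y = (aw G θ x + aw G θ y) / 2 := by simp [cd, hadj]
    rw [hcd]
    have hx0 := aw_nonneg G θ x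
    have hy0 := aw_nonneg G θ y
    rcases hxy.2 with hx | hy
    · have := aw_ge G θ (lg ^ 4) x y hadj (hD x hx)
      nlinarith [mul_nonneg hρ.le hy0]
    · have := aw_ge G θ (lg ^ 4) y x hadj.symm (hD y hy)
      nlinarith [mul_nonneg hρ.le hx0]) hnear hN0 hlg1
  constructor
  · -- lower bound
    have hSg : ∑ i, (G.degree i : ℝ) ^ 2 ≤ N * lg ^ 6 := by
      calc ∑ i, (G.degree i : ℝ) ^ 2 ≤ ∑ i : Fin N, lg ^ 4 * ((N:ℝ) / ((i:ℕ) + 1)) := by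
            refine Finset.sum_le_sum fun i _ => ?_
            have h1 := hd i
            have h2 := wt_ge_one h.hγ0 i
            have h3 := wt_sq_le h.hγ i
            calc (G.degree i : ℝ) ^ 2 ≤ (lg * wt γ N i * lg) ^ 2 := by
                  gcongr
                  refine h1.trans ?_
                  gcongr
              _ = lg ^ 4 * wt γ N i ^ 2 := by ring
              _ ≤ _ := by gcongr
        _ = lg ^ 4 * ∑ i : Fin N, ((N:ℝ) / ((i:ℕ) + 1)) := by rw [Finset.mul_sum]
        _ ≤ lg ^ 4 * (N * (1 + lg)) := by gcongr
        _ ≤ lg ^ 4 * (N * lg ^ 2) := by gcongr; nlinarith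
        _ = _ := by ring
    set n := (Finset.univ.filter fun x => G.Reachable s x).card with hn
    have hV := V_zero G θ hu s n hn
    have hu0 : 0 < u * (1 - u) := mul_pos hu.1 (by linarith [hu.2])
    have hq2 : 2 ≤ N / lg ^ 12 := by
      rw [le_div_iff₀ (by positivity)]
      refine le_trans ?_ (powN 13 (by norm_num))
      have : 0 < lg ^ 12 := by positivity
      have e : lg ^ 13 = lg ^ 12 * lg := by ring
      rw [e]; nlinarith
    have hq : 0 < N / lg ^ 12 := by positivity
    have hV2 : u * (1 - u) * ((N / lg ^ 12) ^ 2 / 2) ≤ ∑ i, ∑ j, Wt G θ u 0 i j := by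
      refine le_trans (mul_le_mul_of_nonneg_left ?_ hu0.le) hV
      generalize (N:ℝ) / lg ^ 12 = q at *
      nlinarith
    have hlow := cons_lower G hθ hu hIntg hN0 (N * lg ^ 6) (by positivity) hSg _ (by positivity) hV2
    refine le_trans ?_ hlow
    have e : (u * (1 - u) * ((N / lg ^ 12) ^ 2 / 2)) ^ 2 / (8 * (N * lg ^ 6) * (N:ℝ) ^ 2)
        = (u * (1 - u)) ^ 2 / 32 * (N / lg ^ 54) := by
      field_simp
      ring
    rw [e]
    have h1 : lg ^ (-(60 + 4 * τ)) ≤ (lg ^ 55)⁻¹ := by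
      rw [Real.rpow_neg hlg0.le]
      refine inv_anti₀ (by positivity) ?_
      rw [← Real.rpow_natCast]
      exact Real.rpow_le_rpow_of_exponent_le hlg1 (by push_cast; linarith)
    calc (N:ℝ) * lg ^ (-(60 + 4 * τ)) ≤ N * (lg ^ 55)⁻¹ := by gcongr
      _ = 32 * (N / (32 * lg ^ 55)) := by field_simp
      _ ≤ ((u * (1 - u)) ^ 2 * lg) * (N / (32 * lg ^ 55)) := by gcongr
      _ = _ := by field_simp
  · refine hup.trans ?_
    have e1 : (lg ^ 4) ^ τ = lg ^ (4 * τ) := by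
      rw [← Real.rpow_natCast, ← Real.rpow_mul hlg0.le]; norm_num
    rw [e1]
    have hp : 0 < lg ^ (4 * τ) := by positivity
    calc Real.exp 2 * (N * l * (2 * lg ^ (4 * τ)) * lg)
        ≤ Real.exp 2 * (N * (9 * A * lg) * (2 * lg ^ (4 * τ)) * lg) := by gcongr
      _ = (18 * Real.exp 2 * A) * (N * lg ^ 2 * lg ^ (4 * τ)) := by ring
      _ ≤ lg * (N * lg ^ 2 * lg ^ (4 * τ)) := by gcongr
      _ = N * (lg ^ 3 * lg ^ (4 * τ)) := by ring
      _ ≤ N * (lg ^ 60 * lg ^ (4 * τ)) := by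
          have : lg ^ 3 ≤ lg ^ 60 := pow_le_pow_right₀ hlg1 (by norm_num)
          gcongr
      _ = _ := by
          rw [Real.rpow_add hlg0]
          congr 2
          rw [← Real.rpow_natCast]; norm_num

theorem ev_ge (K : ℝ) : ∀ᶠ N : ℕ in atTop, K ≤ Real.log N :=
  (Real.tendsto_log_atTop.comp tendsto_natCast_atTop_atTop).eventually_ge_atTop K

theorem ev_mul {a : ℝ} (ha : 0 < a) (K : ℝ) : ∀ᶠ N : ℕ in atTop, K ≤ a * Real.log N := by
  filter_upwards [ev_ge (K / a)] with N h
  rw [div_le_iff₀ ha] at h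
  linarith

theorem ev_pow : ∀ᶠ N : ℕ in atTop, Real.log N ^ 30 ≤ N := by
  have h := (Real.isLittleO_pow_log_id_atTop (n := 30)).bound (c := 1) one_pos
  have h2 := tendsto_natCast_atTop_atTop (R := ℝ) |>.eventually h
  filter_upwards [h2] with N hN
  simp only [id, Real.norm_eq_abs, one_mul, Nat.abs_cast] at hN
  exact (le_abs_self _).trans hN

theorem final (γ u β θ : ℝ) (hγ : γ ∈ Set.Icc (0 : ℝ) (1 / 2)) (hu : u ∈ Set.Ioo (0 : ℝ) 1)
    (hβ : 1 - 2 * γ < β) (hθ : θ ≤ 2) :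
    ∃ C > (0 : ℝ),
      Tendsto
        (fun N : ℕ =>
          snrProb β γ N (fun G =>
            (N : ℝ) * Real.log N ^ (-C) ≤ expectedConsensusTime G θ u ∧
              expectedConsensusTime G θ u ≤ (N : ℝ) * Real.log N ^ C))
        atTop (nhds 1) := by
  obtain ⟨ε, ν, hε, hε1, hν, hsup⟩ := supercrit hγ hβ
  have hβ0 : 0 < β := by linarith [hγ.2]
  refine ⟨60 + 4 * |θ - 1|, by positivity, ?_⟩
  obtain ⟨R, hR⟩ : ∃ R, R = (1 / ε) ^ γ := ⟨_, rfl⟩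
  obtain ⟨δ, hδ⟩ : ∃ δ, δ = (ν - 1) / 4 := ⟨_, rfl⟩
  obtain ⟨η, hη⟩ : ∃ η, η = δ / ν := ⟨_, rfl⟩
  obtain ⟨s0, hs0⟩ : ∃ s0, s0 = 2 * η / R := ⟨_, rfl⟩
  obtain ⟨A, hA⟩ : ∃ A, A = 1 / Real.log (1 + δ) + 4 / (s0 * δ) + 2 := ⟨_, rfl⟩
  have hR1 : 1 ≤ R := by
    rw [hR]
    exact Real.one_le_rpow (by rw [le_div_iff₀ hε]; linarith) hγ.1
  have hδ0 : 0 < δ := by rw [hδ]; linarith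
  have hη0 : 0 < η := by rw [hη]; positivity
  have hs00 : 0 < s0 := by rw [hs0]; positivity
  have hu0 : 0 < (u * (1 - u)) ^ 2 := by
    have : 0 < u * (1 - u) := mul_pos hu.1 (by linarith [hu.2])
    positivity
  have hεN : ∀ᶠ N : ℕ in atTop, 1 ≤ ε * (N:ℝ) :=
    (tendsto_natCast_atTop_atTop.const_mul_atTop hε).eventually_ge_atTop 1
  have hev : ∀ᶠ N : ℕ in atTop, 1 - 30 / (N:ℝ) ≤ snrProb β γ N (fun G =>
            (N : ℝ) * Real.log N ^ (-(60 + 4 * |θ - 1|)) ≤ expectedConsensusTime G θ u ∧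
              expectedConsensusTime G θ u ≤ (N : ℝ) * Real.log N ^ (60 + 4 * |θ - 1|)) := by
    filter_upwards [hεN, ev_ge 4, ev_ge (2 * R), ev_mul hδ0 (β * R ^ 2),
      ev_mul (by positivity : 0 < 2 * η) (β * R), ev_ge (2 * A), ev_ge (4 * β + 3), ev_mul hβ0 1,
      ev_mul hs00 4, ev_ge (β * R ^ 2), ev_pow, ev_ge (18 * Real.exp 2 * A), ev_mul hu0 32] with
      N h0 h1 h2 h3 h4 h5 h6 h7 h8 h9 h10 h11 h12
    have hnum : Num β γ ε ν R δ η s0 A N :=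
      ⟨hβ0, hγ.1, hγ.2, hε, hν, hR, hR1, hδ, hη, hs0, hA, hsup N h0, h1, h2, h3, h4, h5, h6, h7, h8,
        h9, h10⟩
    have hp : ∀ i j : Fin N, i ≠ j → 0 ≤ pp β γ N i j ∧ pp β γ N i j ≤ 1 :=
      fun a b _ => pp_bounds hβ0 hγ.1 a b
    have hw := whp hnum
    rw [snrProb_eq]
    have h13 := gPr_not (pp β γ N) (GoodG β γ A (N := N))
    refine le_trans ?_ (gPr_mono hp (fun G hG => det hnum hθ hu h11 h12 G hG))
    linarith
  have hle : ∀ᶠ N : ℕ in atTop, snrProb β γ N (fun G =>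
            (N : ℝ) * Real.log N ^ (-(60 + 4 * |θ - 1|)) ≤ expectedConsensusTime G θ u ∧
              expectedConsensusTime G θ u ≤ (N : ℝ) * Real.log N ^ (60 + 4 * |θ - 1|)) ≤ 1 := by
    refine Eventually.of_forall fun N => ?_
    rw [snrProb_eq]
    exact gPr_le_one (fun a b _ => pp_bounds hβ0 hγ.1 a b) _
  have hlim : Tendsto (fun N : ℕ => 1 - 30 / (N:ℝ)) atTop (nhds 1) := by
    have := (tendsto_const_div_atTop_nhds_zero_nat (30:ℝ)).const_sub 1
    simpa using this
  exact tendsto_of_tendsto_of_tendsto_of_le_of_le' hlim tendsto_const_nhds hev hle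

end DV

/-- For `γ ∈ [0,1/2]`, `u ∈ (0,1)`, `β > 1 − 2γ` and `θ ∈ (−∞,2]`, the
discursive voter model with temperature `θ` on the Simplified Norros–Reittu graph `G_N`,
started from `μ_u`, has `E^θ_{μ_u}(τ_cons | G_N) = Θ_P^{log N}(N)`: there is `C > 0` such
that with probability tending to `1` as `N → ∞`,
`N · log^{−C} N ≤ E^θ_{μ_u}(τ_cons | G_N) ≤ N · log^C N`. -/
theorem discursive_consensus_small_world
    (γ u β θ : ℝ) (hγ : γ ∈ Set.Icc (0 : ℝ) (1 / 2)) (hu : u ∈ Set.Ioo (0 : ℝ) 1)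
    (hβ : 1 - 2 * γ < β) (hθ : θ ≤ 2) :
    ∃ C > (0 : ℝ),
      Tendsto
        (fun N : ℕ =>
          snrProb β γ N (fun G =>
            (N : ℝ) * Real.log N ^ (-C) ≤ expectedConsensusTime G θ u ∧
              expectedConsensusTime G θ u ≤ (N : ℝ) * Real.log N ^ C))
        atTop (nhds 1) := by
  exact DV.final γ u β θ hγ hu hβ hθ
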